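/- arXiv:1003.5496 — 7 statements merged into one kernel-verified Lean document; each statement's English description precedes it below -/
import Mathlib

section
/- Let G₁ and G₂ be groups with G₁ nontrivial and G₂ having at least three elements. Then the free product G = G₁ ∗ G₂ is an icc group: for every g ∈ G with g ≠ 1, the conjugacy class { x g x⁻¹ : x ∈ G } is infinite. -/
/-!
The length of the reduced word is unbounded on the conjugacy class of every `g ≠ 1`.

If the reduced word `w` of `g` begins and ends in the same factor, choose nontrivial `c` in the
other factor and `d` in this one: `(dc) w (dc)⁻¹` is again reduced, begins and ends in the same
factor as `w`, and is longer, so the step can be repeated (`exists_long_conj`). If `w` begins in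
`G₂` and ends in `G₁`, choose `b ∈ G₂` different from `1` and from the inverse of the first letter
of `w`, which is possible because `G₂` has at least three elements. Then `b w b⁻¹` is reduced after
multiplying `b` into the first letter, and begins and ends in `G₂`. The remaining case follows by
passing to the inverse (`exists_conj_neWord`).

Reduced words are those of `Monoid.CoprodI`, so `G₁ ∗ G₂` is identified with an indexed free
product over `Bool`.
-/

open Monoid Coprod

universe u v

/-- The two factors as a family indexed by `Bool`, with `true` for `G₁` and `false` for `G₂`,
lifted to a common universe. -/
def BoolFam (G₁ : Type u) (G₂ : Type v) : Bool → Type (max u v)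
  | true => ULift.{v} G₁
  | false => ULift.{u} G₂

instance BoolFam.group (G₁ : Type u) (G₂ : Type v) [Group G₁] [Group G₂] :
    ∀ b, Group (BoolFam G₁ G₂ b)
  | true => inferInstanceAs (Group (ULift.{v} G₁))
  | false => inferInstanceAs (Group (ULift.{u} G₂))

/-- The binary free product is the free product of the corresponding `Bool`-indexed family. -/
def coprodEquivCoprodI (G₁ : Type u) (G₂ : Type v) [Group G₁] [Group G₂] :
    G₁ ∗ G₂ ≃* CoprodI (BoolFam G₁ G₂) :=
  MonoidHom.toMulEquiv
    (Coprod.lift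
      ((CoprodI.of (M := BoolFam G₁ G₂) (i := true)).comp
        (MulEquiv.ulift (α := G₁)).symm.toMonoidHom)
      ((CoprodI.of (M := BoolFam G₁ G₂) (i := false)).comp
        (MulEquiv.ulift (α := G₂)).symm.toMonoidHom))
    (CoprodI.lift fun b => match b with
      | true => (Coprod.inl : G₁ →* G₁ ∗ G₂).comp (MulEquiv.ulift (α := G₁)).toMonoidHom
      | false => (Coprod.inr : G₂ →* G₁ ∗ G₂).comp (MulEquiv.ulift (α := G₂)).toMonoidHom)
    (by
      apply Coprod.hom_ext
      · ext x
        simp only [MonoidHom.comp_apply, Coprod.lift_apply_inl, MonoidHom.id_apply]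
        exact CoprodI.lift_of _ _
      · ext x
        simp only [MonoidHom.comp_apply, Coprod.lift_apply_inr, MonoidHom.id_apply]
        exact CoprodI.lift_of _ _)
    (by
      apply CoprodI.ext_hom
      rintro (_ | _)
      · ext x
        simp only [MonoidHom.comp_apply, CoprodI.lift_of, MonoidHom.id_apply]
        exact Coprod.lift_apply_inr _ _ _
      · ext x
        simp only [MonoidHom.comp_apply, CoprodI.lift_of, MonoidHom.id_apply]
        exact Coprod.lift_apply_inl _ _ _)

section

variable {ι : Type*} {H : ι → Type*} [∀ i, Group (H i)]

/-- A reduced word beginning and ending in the same factor has arbitrarily long reduced conjugates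
of the same kind. -/
theorem exists_long_conj {i j : ι} (hij : i ≠ j) [Nontrivial (H i)] [Nontrivial (H j)]
    (w : CoprodI.NeWord H i i) (n : ℕ) :
    ∃ w' : CoprodI.NeWord H i i, IsConj w.prod w'.prod ∧ n ≤ w'.toList.length := by
  induction n with
  | zero => exact ⟨w, IsConj.refl _, Nat.zero_le _⟩
  | succ n ih =>
    obtain ⟨w', hw, hn⟩ := ih
    obtain ⟨d, hd⟩ := exists_ne (1 : H i)
    obtain ⟨c, hc⟩ := exists_ne (1 : H j)
    let p : CoprodI.NeWord H i j :=
      .append (.singleton d hd) hij (.singleton c hc)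
    refine ⟨.append (.append p hij.symm w') hij p.inv, hw.trans ?_, ?_⟩
    · rw [isConj_iff]
      exact ⟨p.prod, by simp only [CoprodI.NeWord.append_prod, CoprodI.NeWord.inv_prod]⟩
    · simp only [CoprodI.NeWord.toList, List.length_append, p, List.length_singleton]
      omega

/-- A reduced word with first letter in a factor with at least three elements and last letter in
another factor is conjugate to one beginning and ending in the former factor. -/
theorem exists_conj_of_head {i j : ι} (hij : i ≠ j)
    (h3 : ∃ x y z : H i, x ≠ y ∧ x ≠ z ∧ y ≠ z) (w : CoprodI.NeWord H i j) :
    ∃ w' : CoprodI.NeWord H i i, IsConj w.prod w'.prod := by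
  have : ∃ b : H i, b ≠ 1 ∧ b ≠ w.head⁻¹ := by
    obtain ⟨x, y, z, hxy, hxz, hyz⟩ := h3
    by_contra! hcon
    have hor (b : H i) : b = 1 ∨ b = w.head⁻¹ := or_iff_not_imp_left.2 (hcon b)
    grind [hor x, hor y, hor z]
  obtain ⟨b, hb, hbw⟩ := this
  refine ⟨.append (w.mulHead b fun h => hbw (eq_inv_of_mul_eq_one_left h)) hij.symm
    (.singleton b⁻¹ (inv_ne_one.2 hb)), ?_⟩
  rw [isConj_iff]
  exact ⟨CoprodI.of b, by simp⟩

end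

section

variable {H : Bool → Type*} [∀ i, Group (H i)]

theorem exists_conj_neWord (h3 : ∃ x y z : H false, x ≠ y ∧ x ≠ z ∧ y ≠ z)
    (g : CoprodI H) (hg : g ≠ 1) :
    ∃ i, ∃ w : CoprodI.NeWord H i i, IsConj g w.prod := by
  classical
  obtain ⟨w, rfl⟩ := CoprodI.Word.equiv.symm.surjective g
  have hw : w ≠ CoprodI.Word.empty := by
    rintro rfl
    exact hg CoprodI.Word.prod_empty
  obtain ⟨i, j, w, rfl⟩ := CoprodI.NeWord.of_word w hw
  change ∃ i, ∃ w' : CoprodI.NeWord H i i, IsConj w.prod w'.prod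
  rcases i with _ | _ <;> rcases j with _ | _
  · exact ⟨_, w, IsConj.refl _⟩
  · exact ⟨_, exists_conj_of_head (by decide) h3 w⟩
  · obtain ⟨w', hw'⟩ := exists_conj_of_head (by decide) h3 w.inv
    refine ⟨_, w'.inv, ?_⟩
    rw [isConj_iff] at hw' ⊢
    obtain ⟨c, hc⟩ := hw'
    refine ⟨c, ?_⟩
    rw [CoprodI.NeWord.inv_prod, ← hc, CoprodI.NeWord.inv_prod]
    group
  · exact ⟨_, w, IsConj.refl _⟩

theorem coprodI_icc [Nontrivial (H true)] (h3 : ∃ x y z : H false, x ≠ y ∧ x ≠ z ∧ y ≠ z)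
    (g : CoprodI H) (hg : g ≠ 1) : {y | IsConj g y}.Infinite := by
  classical
  have hnt : ∀ b, Nontrivial (H b)
    | true => inferInstance
    | false => let ⟨x, y, _, hxy, _⟩ := h3; ⟨x, y, hxy⟩
  obtain ⟨i, w, hw⟩ := exists_conj_neWord h3 g hg
  apply Set.Infinite.of_image fun y => (CoprodI.Word.equiv y).toList.length
  refine Set.infinite_of_forall_exists_gt fun n => ?_
  obtain ⟨w', hw', hn⟩ := exists_long_conj (j := !i) (by simp) w (n + 1)
  refine ⟨_, ⟨w'.prod, hw.trans hw', rfl⟩, ?_⟩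
  have : CoprodI.Word.equiv w'.prod = w'.toWord :=
    CoprodI.Word.equiv.apply_symm_apply w'.toWord
  simp only [this]
  exact hn

end

/-- If `G₁` is nontrivial and `G₂` has at least three elements, then the free product
`G₁ ∗ G₂` is icc: the conjugacy class of every non-identity element is infinite. -/
theorem coprod_icc (G₁ G₂ : Type*) [Group G₁] [Group G₂]
    (h₁ : Nontrivial G₁) (h₂ : ∃ x y z : G₂, x ≠ y ∧ x ≠ z ∧ y ≠ z) :
    ∀ g : G₁ ∗ G₂, g ≠ 1 → {y : G₁ ∗ G₂ | ∃ x : G₁ ∗ G₂, x * g * x⁻¹ = y}.Infinite := by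
  intro g hg
  let e := coprodEquivCoprodI G₁ G₂
  have : Nontrivial (BoolFam G₁ G₂ true) := inferInstanceAs (Nontrivial (ULift G₁))
  have h3 : ∃ x y z : BoolFam G₁ G₂ false, x ≠ y ∧ x ≠ z ∧ y ≠ z := by
    obtain ⟨x, y, z, hxy, hxz, hyz⟩ := h₂
    exact ⟨ULift.up x, ULift.up y, ULift.up z, ULift.up_injective.ne hxy,
      ULift.up_injective.ne hxz, ULift.up_injective.ne hyz⟩
  have key := coprodI_icc h3 (e g) (by simpa using hg)
  refine (key.image (f := e.symm) e.symm.injective.injOn).mono ?_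
  rintro _ ⟨y, hy, rfl⟩
  obtain ⟨c, rfl⟩ := isConj_iff.1 hy
  exact ⟨e.symm c, by simp⟩
end

section
/- Let G₁ and G₂ be groups with |G₁| ≥ 2 and |G₂| ≥ 3. Then the free product G₁ ∗ G₂ contains a free subgroup of rank 2; that is, there exists an injective group homomorphism from the free group on two generators into G₁ ∗ G₂. -/
open Monoid Coprod

/-!
For `a ∈ G₁` and `b, c ∈ G₂` nontrivial with `b ≠ c`, the commutators `[a⁻¹, b⁻¹]` and
`[a⁻¹, c⁻¹]` are free generators. To see this, let `F` be the free group on two generators and let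
`t : G₁ → G₂ → F` be any function with `t p 1 = 1` and `t 1 q = 1`. The group `G₁ ∗ G₂` acts on
`G₁ × G₂ × F`: an element of `G₁` translates the first coordinate, and an element of `G₂` acts by
translation of the second coordinate conjugated by the bijection `(p, q, w) ↦ (p, q, t p q * w)`.
In this action `[a⁻¹, b⁻¹]` sends `(1, 1, v)` to `(1, 1, t a b * v)`. Choosing `t a b` and `t a c`
to be the two generators of `F`, the element of `G₁ ∗ G₂` associated with `w : F` sends `(1, 1, 1)`
to `(1, 1, w)`, so `w` can be recovered from it. (This is the action induced from the kernel of
`G₁ ∗ G₂ → G₁ × G₂`, composed with a map from that kernel to `F`.)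
-/

open scoped commutatorElement

section

variable {G₁ G₂ F : Type*} [Group G₁] [Group G₂] [Group F]

/-- `G₁` acting on `G₁ × G₂ × F` by left translation of the first coordinate. -/
def leftPermHom : G₁ →* Equiv.Perm (G₁ × G₂ × F) :=
  MonoidHom.toHomPerm
    { toFun := fun g x => (g * x.1, x.2.1, x.2.2)
      map_one' := by funext x; simp; rfl
      map_mul' := fun g h => by funext x; exact Prod.ext (mul_assoc g h x.1) rfl }

/-- `G₂` acting on `G₁ × G₂ × F` by left translation of the second coordinate, conjugated by
`(p, q, w) ↦ (p, q, t p q * w)`. -/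
def twistedPermHom (t : G₁ → G₂ → F) : G₂ →* Equiv.Perm (G₁ × G₂ × F) :=
  MonoidHom.toHomPerm
    { toFun := fun h x => (x.1, h * x.2.1, (t x.1 (h * x.2.1))⁻¹ * t x.1 x.2.1 * x.2.2)
      map_one' := by funext x; simp; rfl
      map_mul' := fun g h => by
        funext x
        refine Prod.ext rfl (Prod.ext (mul_assoc g h x.2.1) ?_)
        change _ = (t x.1 (g * (h * x.2.1)))⁻¹ * t x.1 (h * x.2.1) *
          ((t x.1 (h * x.2.1))⁻¹ * t x.1 x.2.1 * x.2.2)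
        simp [mul_assoc] }

lemma leftPermHom_apply (g : G₁) (p : G₁) (q : G₂) (w : F) :
    leftPermHom g (p, q, w) = (g * p, q, w) := rfl

lemma twistedPermHom_apply (t : G₁ → G₂ → F) (h : G₂) (p : G₁) (q : G₂) (w : F) :
    twistedPermHom t h (p, q, w) = (p, h * q, (t p (h * q))⁻¹ * t p q * w) := rfl

/-- The twist `t a b` is the holonomy of the commutator `[a⁻¹, b⁻¹]` at the base point `(1, 1)`:
along the path `(1, 1), (1, b), (a, b), (a, 1), (1, 1)` only the corner `(a, b)` contributes. -/
lemma lift_commutator_apply (t : G₁ → G₂ → F) (ht₁ : ∀ q, t 1 q = 1) (ht₂ : ∀ p, t p 1 = 1)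
    (a : G₁) (b : G₂) (v : F) :
    Coprod.lift leftPermHom (twistedPermHom t) ⁅(inl a⁻¹ : G₁ ∗ G₂), inr b⁻¹⁆ (1, 1, v) =
      (1, 1, t a b * v) := by
  simp only [commutatorElement_def, ← map_inv, inv_inv, map_mul, lift_apply_inl, lift_apply_inr,
    Equiv.Perm.mul_apply, leftPermHom_apply, twistedPermHom_apply]
  simp [ht₁, ht₂]

end

/-- If `|G₁| ≥ 2` and `|G₂| ≥ 3`, then the free product `G₁ ∗ G₂` contains a free
subgroup of rank 2: there is an injective homomorphism `FreeGroup (Fin 2) →* G₁ ∗ G₂`. -/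
theorem coprod_contains_free_subgroup (G₁ G₂ : Type*) [Group G₁] [Group G₂]
    (h₁ : Nontrivial G₁) (h₂ : ∃ x y z : G₂, x ≠ y ∧ x ≠ z ∧ y ≠ z) :
    ∃ f : FreeGroup (Fin 2) →* G₁ ∗ G₂, Function.Injective f := by
  classical
  obtain ⟨a, ha⟩ := exists_ne (1 : G₁)
  obtain ⟨b, c, hb, hc, hbc⟩ : ∃ b c : G₂, b ≠ 1 ∧ c ≠ 1 ∧ b ≠ c := by
    obtain ⟨x, y, z, hxy, hxz, hyz⟩ := h₂
    refine ⟨x⁻¹ * y, x⁻¹ * z, ?_, ?_, ?_⟩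
    · rwa [Ne, inv_mul_eq_one]
    · rwa [Ne, inv_mul_eq_one]
    · rwa [Ne, mul_right_inj]
  let t : G₁ → G₂ → FreeGroup (Fin 2) := fun p q =>
    if p = a then
      if q = b then FreeGroup.of 0 else if q = c then FreeGroup.of 1 else 1
    else 1
  have ht₁ : ∀ q, t 1 q = 1 := fun q => if_neg ha.symm
  have ht₂ : ∀ p, t p 1 = 1 := fun p => by simp [t, hb.symm, hc.symm]
  let f : FreeGroup (Fin 2) →* G₁ ∗ G₂ :=
    FreeGroup.lift fun i => ⁅(inl a⁻¹ : G₁ ∗ G₂), inr (![b, c] i)⁻¹⁆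
  let Φ : G₁ ∗ G₂ →* Equiv.Perm (G₁ × G₂ × FreeGroup (Fin 2)) :=
    Coprod.lift leftPermHom (twistedPermHom t)
  have hof : ∀ i v, Φ (f (FreeGroup.of i)) (1, 1, v) = (1, 1, FreeGroup.of i * v) := by
    intro i v
    have hti : t a (![b, c] i) = FreeGroup.of i := by
      fin_cases i <;> simp [t, hbc.symm]
    simp only [f, Φ, FreeGroup.lift_apply_of]
    rw [lift_commutator_apply t ht₁ ht₂, hti]
  have key : ∀ w v, Φ (f w) (1, 1, v) = (1, 1, w * v) := by
    intro w
    induction w using FreeGroup.induction_on with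
    | C1 => intro v; simp
    | of i => exact hof i
    | inv_of i _ =>
      intro v
      rw [map_inv, map_inv, Equiv.Perm.inv_eq_iff_eq, hof, mul_inv_cancel_left]
    | mul x y hx hy =>
      intro v
      rw [map_mul, map_mul, Equiv.Perm.mul_apply, hy, hx, mul_assoc]
  refine ⟨f, fun w w' h => ?_⟩
  have hw := key w 1
  rw [h, key w' 1] at hw
  simpa using hw.symm
end

section
/- Let H be a complex Hilbert space admitting a Hilbert (orthonormal) basis (e_i)_{i ∈ ι} indexed by a nonempty countable set ι. Let U and V be unitary operators on H, and assume each e_i is an eigenvector of U. Then the set { μ ∈ ℂ : |μ| = 1 and μ·U is unitarily equivalent to V } is countable. -/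
/-! Suppose `μ₀` belongs to the set, witnessed by `W₀`, and fix a basis vector `b i₀`. The vectors
`W₀ (b j)` form an orthonormal basis of eigenvectors of `V`, with eigenvalues `μ₀ * c j`. If `μ`
is another member, witnessed by `W`, then `W (b i₀)` is a nonzero eigenvector of `V` with
eigenvalue `μ * c i₀`, so it is not orthogonal to some `W₀ (b j)`. Since `V` preserves inner
products, `conj (μ₀ * c j) * (μ * c i₀) = 1`. Thus `μ` is determined by `j`, which ranges over a
countable set. -/

/-- Unitary operators preserve inner products. -/
lemma inner_map_map_of_mem_unitary
    {H : Type*} [NormedAddCommGroup H] [InnerProductSpace ℂ H] [CompleteSpace H]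
    {V : H →L[ℂ] H} (hV : V ∈ unitary (H →L[ℂ] H)) (x y : H) :
    inner ℂ (V x) (V y) = inner ℂ x y := by
  have h : star V * V = 1 := (Unitary.mem_iff.mp hV).1
  have hy : (ContinuousLinearMap.adjoint V) (V y) = y := congrArg (fun T : H →L[ℂ] H => T y) h
  rw [← ContinuousLinearMap.adjoint_inner_right, hy]

/-- A vector orthogonal to the image of a Hilbert basis under a unitary operator vanishes. -/
lemma eq_zero_of_forall_inner_unitary_basis
    {H : Type*} [NormedAddCommGroup H] [InnerProductSpace ℂ H] [CompleteSpace H]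
    {ι : Type*} (b : HilbertBasis ι ℂ H)
    {W : H →L[ℂ] H} (hW : W ∈ unitary (H →L[ℂ] H)) (z : H)
    (hz : ∀ j, inner ℂ (W (b j)) z = 0) : z = 0 := by
  have h : W * star W = 1 := (Unitary.mem_iff.mp hW).2
  have hz' : W ((ContinuousLinearMap.adjoint W) z) = z :=
    congrArg (fun T : H →L[ℂ] H => T z) h
  have h0 : (ContinuousLinearMap.adjoint W) z = 0 := by
    apply b.repr.injective
    ext j
    simp [b.repr_apply_apply, ContinuousLinearMap.adjoint_inner_right, hz j]
  rw [← hz', h0, map_zero]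


/-- Let `H` be a complex Hilbert space with a Hilbert basis indexed by a nonempty countable
set, let `U`, `V` be unitary operators on `H`, and assume each basis vector is an eigenvector
of `U`. Then the set of `μ ∈ ℂ` of modulus one such that `μ • U` is unitarily equivalent to
`V` is countable. -/
theorem countable_unitary_equiv_scalars
    {H : Type*} [NormedAddCommGroup H] [InnerProductSpace ℂ H] [CompleteSpace H]
    {ι : Type*} [Countable ι] [Nonempty ι] (b : HilbertBasis ι ℂ H)
    (U V : H →L[ℂ] H) (hU : U ∈ unitary (H →L[ℂ] H)) (hV : V ∈ unitary (H →L[ℂ] H))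
    (hdiag : ∀ i : ι, ∃ c : ℂ, U (b i) = c • b i) :
    {μ : ℂ | ‖μ‖ = 1 ∧ ∃ W ∈ unitary (H →L[ℂ] H),
      W * (μ • U) = V * W}.Countable := by
  choose c hc using hdiag
  rcases Set.eq_empty_or_nonempty {μ : ℂ | ‖μ‖ = 1 ∧ ∃ W ∈ unitary (H →L[ℂ] H),
      W * (μ • U) = V * W} with hS | ⟨μ₀, -, W₀, hW₀, h₀⟩
  · rw [hS]
    exact Set.countable_empty
  have eig : ∀ (μ : ℂ) (W : H →L[ℂ] H), W * (μ • U) = V * W →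
      ∀ i, V (W (b i)) = (μ * c i) • W (b i) := by
    intro μ W h i
    have := congrArg (fun T : H →L[ℂ] H => T (b i)) h
    simpa [hc, smul_smul] using this.symm
  obtain ⟨i₀⟩ := ‹Nonempty ι›
  refine (Set.countable_range
    fun j => (starRingEnd ℂ (μ₀ * c j) * c i₀)⁻¹).mono ?_
  rintro μ ⟨-, W, hW, h⟩
  have hne : W (b i₀) ≠ 0 := by
    intro h0
    have h1 := inner_map_map_of_mem_unitary hW (b i₀) (b i₀)
    rw [h0, inner_zero_left, eq_comm, inner_self_eq_zero] at h1
    exact b.orthonormal.ne_zero i₀ h1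
  obtain ⟨j, hj⟩ : ∃ j, inner ℂ (W₀ (b j)) (W (b i₀)) ≠ 0 := by
    by_contra! hall
    exact hne (eq_zero_of_forall_inner_unitary_basis b hW₀ _ hall)
  refine ⟨j, ?_⟩
  have hin := inner_map_map_of_mem_unitary hV (W₀ (b j)) (W (b i₀))
  rw [eig μ₀ W₀ h₀, eig μ W h, inner_smul_left, inner_smul_right, ← mul_assoc] at hin
  have h1 := mul_right_cancel₀ hj (hin.trans (one_mul _).symm)
  exact inv_eq_of_mul_eq_one_right (by rw [← h1]; ring)
end

section
/- Let H be a complex Hilbert space admitting a Hilbert (orthonormal) basis (e_i)_{i ∈ ι} indexed by a nonempty countable set ι. Let U be a unitary operator on H such that each e_i is an eigenvector of U. Then the set { μ ∈ ℂ : |μ| = 1 and μ·U is unitarily equivalent to (μ·U)* } is countable, where (μ·U)* denotes the adjoint of μ·U. -/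
/-!
Write `U (b i) = c i • b i` and fix an index `i₀`. If a unitary `W` intertwines `μ • U` with its
adjoint, then `v = W (b i₀)` is a nonzero eigenvector of `(μ • U)*` with eigenvalue `μ * c i₀`.
Some coordinate `⟪b j, v⟫` is nonzero, and moving the adjoint across this inner product gives
`conj (μ * c j) = μ * c i₀`. As `|μ| = 1`, multiplying by `μ` gives `μ ^ 2 * c i₀ = conj (c j)`.
Since `c i₀ ≠ 0`, each `j` allows only finitely many `μ`, and there are countably many `j`.
-/

theorem finite_sq_mul_eq (a c : ℂ) (hc : c ≠ 0) : {μ : ℂ | μ ^ 2 * c = a}.Finite := by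
  refine (Polynomial.nthRoots 2 (a / c)).toFinset.finite_toSet.subset fun μ hμ => ?_
  simp only [Set.mem_setOf_eq] at hμ
  simp only [SetLike.mem_coe, Multiset.mem_toFinset]
  rw [Polynomial.mem_nthRoots (by norm_num), eq_div_iff hc, hμ]

/-- If a unitary operator intertwines `μ • U` with its adjoint, then every eigenvalue `c i` of the
diagonal operator `U` satisfies `μ ^ 2 * c i = conj (c j)` for some eigenvalue `c j`. -/
theorem exists_sq_mul_eq_conj
    {H : Type*} [NormedAddCommGroup H] [InnerProductSpace ℂ H] [CompleteSpace H]
    {ι : Type*} (b : HilbertBasis ι ℂ H) (U : H →L[ℂ] H) (c : ι → ℂ)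
    (hc : ∀ i, U (b i) = c i • b i) {μ : ℂ} (hμ : ‖μ‖ = 1)
    {W : H →L[ℂ] H} (hW : W ∈ unitary (H →L[ℂ] H))
    (h : W * (μ • U) = star (μ • U) * W) (i : ι) :
    ∃ j, μ ^ 2 * c i = (starRingEnd ℂ) (c j) := by
  have hv : W (b i) ≠ 0 := by
    intro h0
    have h1 : (star W * W) (b i) = b i := by
      rw [(Unitary.mem_iff.mp hW).1]; rfl
    rw [ContinuousLinearMap.mul_apply, h0, map_zero] at h1
    exact b.orthonormal.ne_zero i h1.symm
  obtain ⟨j, hj⟩ : ∃ j, inner ℂ (b j) (W (b i)) ≠ 0 := by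
    by_contra! hall
    refine hv (b.repr.injective ?_)
    ext j
    simpa [b.repr_apply_apply] using hall j
  have heig : star (μ • U) (W (b i)) = (μ * c i) • W (b i) := by
    rw [← ContinuousLinearMap.mul_apply, ← h, ContinuousLinearMap.mul_apply,
      ContinuousLinearMap.smul_apply, hc, smul_smul, map_smul]
  have hinner := congrArg (inner ℂ (b j)) heig
  rw [ContinuousLinearMap.star_eq_adjoint, ContinuousLinearMap.adjoint_inner_right,
    ContinuousLinearMap.smul_apply, hc, smul_smul, inner_smul_left, inner_smul_right] at hinner
  have hval := mul_right_cancel₀ hj hinner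
  have hμμ : μ * (starRingEnd ℂ) μ = 1 := by
    rw [Complex.mul_conj', hμ]; norm_num
  refine ⟨j, ?_⟩
  rw [map_mul] at hval
  linear_combination (-μ) * hval + (starRingEnd ℂ) (c j) * hμμ

/-- Let `H` be a complex Hilbert space with a Hilbert basis indexed by a nonempty countable
set, and let `U` be a unitary operator on `H` such that each basis vector is an eigenvector
of `U`. Then the set of `μ ∈ ℂ` of modulus one such that `μ • U` is unitarily equivalent to
its adjoint `(μ • U)*` is countable. -/
theorem countable_selfadjoint_equiv_scalars
    {H : Type*} [NormedAddCommGroup H] [InnerProductSpace ℂ H] [CompleteSpace H]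
    {ι : Type*} [Countable ι] [Nonempty ι] (b : HilbertBasis ι ℂ H)
    (U : H →L[ℂ] H) (hU : U ∈ unitary (H →L[ℂ] H))
    (hdiag : ∀ i : ι, ∃ c : ℂ, U (b i) = c • b i) :
    {μ : ℂ | ‖μ‖ = 1 ∧ ∃ W ∈ unitary (H →L[ℂ] H),
      W * (μ • U) = star (μ • U) * W}.Countable := by
  choose c hc using hdiag
  obtain ⟨i⟩ := ‹Nonempty ι›
  have hci : c i ≠ 0 := by
    intro h0
    have h1 : (star U * U) (b i) = b i := by
      rw [(Unitary.mem_iff.mp hU).1]; rfl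
    rw [ContinuousLinearMap.mul_apply, hc, h0, zero_smul, map_zero] at h1
    exact b.orthonormal.ne_zero i h1.symm
  refine (Set.countable_iUnion fun j =>
    (finite_sq_mul_eq ((starRingEnd ℂ) (c j)) (c i) hci).countable).mono ?_
  rintro μ ⟨hμ, W, hW, h⟩
  exact Set.mem_iUnion.mpr (exists_sq_mul_eq_conj b U c hc hμ hW h i)
end

section
/- Let A be a unital C*-algebra that is infinite-dimensional as a complex vector space and admits a faithful tracial state. Then every faithful irreducible representation of A on a complex Hilbert space is essential: if π is such a representation, then the only compact operator of the form π(a) is 0. -/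
/-!
Suppose `π a` is compact and nonzero. Continuous functional calculus on `a* a`, with a function
vanishing near `0`, gives a nonzero element of finite rank (`exists_finite_rank`), because the
eigenspaces of a compact operator for nonzero eigenvalues are finite-dimensional. Among such
elements one of minimal rank has rank one by irreducibility (`exists_rank_one`), and normalising
it gives `e` with `π e` the orthogonal projection onto `ℂw` for a unit vector `w`
(`exists_rank_one_projection`).

If the vectors `π(aᵢ)w`, `i < n`, are orthonormal, then the `aᵢ e aᵢ*` are mutually orthogonal
projections, each of trace `τ(e) > 0`, so `n τ(e) ≤ τ(1) = 1` (`finrank_mul_trace_le`). Hence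
`π(A)w` is finite-dimensional; being dense and closed it is all of `H`. Then `B(H)`, and with it
`A`, is finite-dimensional, a contradiction.
-/

/-! ### Orbits in irreducible representations -/

/-- The orbit `π(A)v` as a linear subspace of `H`. -/
def orbitSubmodule {A H : Type*} [Ring A] [StarRing A] [Algebra ℂ A]
    [NormedAddCommGroup H] [InnerProductSpace ℂ H] [CompleteSpace H]
    (π : A →⋆ₐ[ℂ] (H →L[ℂ] H)) (v : H) : Submodule ℂ H where
  carrier := {y | ∃ a, π a v = y}
  add_mem' := by
    rintro _ _ ⟨a, rfl⟩ ⟨b, rfl⟩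
    exact ⟨a + b, by simp⟩
  zero_mem' := ⟨0, by simp⟩
  smul_mem' := by
    rintro c _ ⟨a, rfl⟩
    exact ⟨c • a, by simp⟩

/-- In an irreducible representation every nonzero vector is cyclic. -/
lemma orbitSubmodule_topologicalClosure {A H : Type*} [Ring A] [StarRing A] [Algebra ℂ A]
    [NormedAddCommGroup H] [InnerProductSpace ℂ H] [CompleteSpace H]
    (π : A →⋆ₐ[ℂ] (H →L[ℂ] H))
    (hirred : ∀ S : Submodule ℂ H, IsClosed (S : Set H) →
      (∀ a : A, ∀ x ∈ S, π a x ∈ S) → S = ⊥ ∨ S = ⊤)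
    {v : H} (hv : v ≠ 0) : (orbitSubmodule π v).topologicalClosure = ⊤ := by
  refine (hirred _ (Submodule.isClosed_topologicalClosure _) ?_).resolve_left ?_
  · intro a x hx
    refine map_mem_closure (π a).continuous hx ?_
    rintro _ ⟨b, rfl⟩
    exact ⟨a * b, by simp⟩
  · intro h
    have : v ∈ (orbitSubmodule π v).topologicalClosure :=
      Submodule.le_topologicalClosure _ ⟨1, by simp⟩
    rw [h] at this
    exact hv (by simpa using this)

/-! ### Compact operators and elements of finite rank -/

/-- The eigenspace of a compact operator for the eigenvalue `1` is finite-dimensional, because the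
operator restricts to the identity there. -/
lemma finiteDimensional_of_compact_fixed {H : Type*} [NormedAddCommGroup H] [InnerProductSpace ℂ H]
    [CompleteSpace H] (K : H →L[ℂ] H) (hK : IsCompactOperator K) :
    FiniteDimensional ℂ (LinearMap.ker ((K - 1 : H →L[ℂ] H) : H →ₗ[ℂ] H)) := by
  set E := LinearMap.ker ((K - 1 : H →L[ℂ] H) : H →ₗ[ℂ] H) with hE
  have hmem : ∀ x ∈ E, K x = x := fun x hx => by
    simpa [hE, sub_eq_zero] using hx
  have hcl : IsClosed (E : Set H) := (K - 1 : H →L[ℂ] H).isClosed_ker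
  have h := IsCompactOperator.restrict (f := (K : H →ₗ[ℂ] H)) hK (V := E)
    (fun x hx => by
      have := hmem x hx
      simpa [this] using hx) hcl
  apply FiniteDimensional.of_isCompactOperator_id (𝕜 := ℂ)
  have hid : (id : E → E) = (K : H →ₗ[ℂ] H).restrict (p := E) (q := E) (fun x hx => by
      have := hmem x hx
      simpa [this] using hx) := by
    funext x
    apply Subtype.ext
    simp [hmem x x.2]
  rw [hid]
  exact h

/-- A nonzero `a` with `π a` compact yields a nonzero element acting with finite rank: apply to
`b = a* a` a continuous function vanishing near `0`. -/
lemma exists_finite_rank {A : Type*} [CStarAlgebra A]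
    {H : Type*} [NormedAddCommGroup H] [InnerProductSpace ℂ H] [CompleteSpace H]
    (π : A →⋆ₐ[ℂ] (H →L[ℂ] H)) (a : A) (ha : IsCompactOperator (π a)) (ha0 : a ≠ 0) :
    ∃ x : A, x ≠ 0 ∧ FiniteDimensional ℂ (LinearMap.range ((π x : H →L[ℂ] H) : H →ₗ[ℂ] H)) := by
  set b := star a * a with hb
  have hbsa : IsSelfAdjoint b := IsSelfAdjoint.star_mul_self a
  have hb0 : b ≠ 0 := by simpa [hb, CStarRing.star_mul_self_eq_zero_iff] using ha0
  have hbK : IsCompactOperator (π b) := by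
    rw [hb, map_mul]
    exact ha.clm_comp (π (star a))
  obtain ⟨t, ht, ht0⟩ : ∃ t ∈ spectrum ℝ b, t ≠ 0 := by
    by_contra! h
    apply hb0
    rw [← cfc_id' ℝ b, cfc_congr (g := fun _ => 0) (fun t ht => h t ht), cfc_const_zero]
  set ε : ℝ := |t| / 2
  have hε : 0 < ε := by positivity
  let f : ℝ → ℝ := fun s => max (|s| - ε) 0
  -- `g s * s = 1` wherever `f s ≠ 0`
  let g : ℝ → ℝ := fun s => s / (max |s| ε) ^ 2
  have hf : Continuous f := by fun_prop
  have hg : Continuous g := by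
    refine Continuous.div (by fun_prop) (by fun_prop) fun s => ?_
    have : 0 < max |s| ε := lt_max_of_lt_right hε
    positivity
  have hfg : ∀ s, g s * s * f s = f s := by
    intro s
    rcases le_total |s| ε with h | h
    · simp [f, h]
    · have hs : s ≠ 0 := by
        rintro rfl
        simp at h
        linarith
      have : g s * s = 1 := by
        simp only [g, max_eq_left h, sq_abs]
        field_simp
      rw [this, one_mul]
  have hkey : cfc g b * b * cfc f b = cfc f b := by
    have h1 : cfc g b * b = cfc (fun s => g s * s) b := by
      rw [cfc_mul g (fun s => s) b hg.continuousOn, cfc_id' ℝ b]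
    rw [h1, ← cfc_mul (fun s => g s * s) f b (hg.mul continuous_id).continuousOn hf.continuousOn]
    simp only [hfg]
  refine ⟨cfc f b, ?_, ?_⟩
  · intro h
    rw [← cfc_const_zero ℝ b] at h
    have := eqOn_of_cfc_eq_cfc h hf.continuousOn continuousOn_const hbsa ht
    have h2 : |t| - ε = |t| / 2 := by simp only [ε]; ring
    simp only [f, h2] at this
    have h3 : 0 < |t| := by positivity
    rw [max_eq_left (by positivity)] at this
    linarith
  · have hK : IsCompactOperator (π (cfc g b * b)) := by
      rw [map_mul]
      exact hbK.clm_comp (π (cfc g b))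
    have := finiteDimensional_of_compact_fixed _ hK
    refine Submodule.finiteDimensional_of_le
      (S₂ := LinearMap.ker ((π (cfc g b * b) - 1 : H →L[ℂ] H) : H →ₗ[ℂ] H)) ?_
    rintro _ ⟨y, rfl⟩
    have h := congrArg (fun z => π z y) hkey
    simp only [map_mul (π) (cfc g b * b)] at h
    simpa [sub_eq_zero] using h

/-! ### Rank-one projections -/

/-- An element `x` of minimal positive rank acts with rank one: if `μ` is an eigenvalue of
`π(xa)` on the range of `π(x)`, then `xax - μx` has smaller rank, so it vanishes. Hence
`π(x)π(a)v ∈ ℂv` for every `a` and every `v` in that range, and `π(A)v` is dense. -/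
lemma exists_rank_one {A : Type*} [Ring A] [StarRing A] [Algebra ℂ A]
    {H : Type*} [NormedAddCommGroup H] [InnerProductSpace ℂ H] [CompleteSpace H]
    (π : A →⋆ₐ[ℂ] (H →L[ℂ] H)) (hfaithful : Function.Injective π)
    (hirred : ∀ S : Submodule ℂ H, IsClosed (S : Set H) →
      (∀ a : A, ∀ x ∈ S, π a x ∈ S) → S = ⊥ ∨ S = ⊤)
    (hex : ∃ x : A, x ≠ 0 ∧
      FiniteDimensional ℂ (LinearMap.range ((π x : H →L[ℂ] H) : H →ₗ[ℂ] H))) :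
    ∃ x : A, x ≠ 0 ∧ ∃ v : H, ∀ y, π x y ∈ Submodule.span ℂ {v} := by
  classical
  let R : A → Submodule ℂ H := fun x => LinearMap.range ((π x : H →L[ℂ] H) : H →ₗ[ℂ] H)
  have hP : ∃ n, ∃ x : A, x ≠ 0 ∧ FiniteDimensional ℂ (R x) ∧ Module.finrank ℂ (R x) = n := by
    obtain ⟨x, h1, h2⟩ := hex
    exact ⟨_, x, h1, h2, rfl⟩
  obtain ⟨x, hx0, hxfd, hxn⟩ := Nat.find_spec hP
  have hmin : ∀ z : A, FiniteDimensional ℂ (R z) →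
      Module.finrank ℂ (R z) < Module.finrank ℂ (R x) → z = 0 := by
    intro z hz hlt
    by_contra hz0
    rw [hxn] at hlt
    exact Nat.find_min hP hlt ⟨z, hz0, hz, rfl⟩
  have hπx : π x ≠ 0 := fun h => hx0 (hfaithful (by rw [h, map_zero]))
  obtain ⟨u, hu⟩ : ∃ u, π x u ≠ 0 := by
    by_contra! h
    exact hπx (by ext y; simp [h y])
  have hmem : ∀ y, π x y ∈ R x := fun y => ⟨y, rfl⟩
  have : Nontrivial (R x) := ⟨⟨⟨π x u, hmem u⟩, 0, fun h => hu (by simpa using h)⟩⟩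
  have hscal : ∀ a : A, ∃ μ : ℂ, x * a * x = μ • x := by
    intro a
    let S : Module.End ℂ (R x) :=
      ((π (x * a) : H →L[ℂ] H) : H →ₗ[ℂ] H).restrict (p := R x) (q := R x)
        (fun y _ => by simpa using hmem (π a y))
    obtain ⟨μ, hμ⟩ := Module.End.exists_eigenvalue S
    refine ⟨μ, ?_⟩
    obtain ⟨w, hw⟩ := hμ.exists_hasEigenvector
    let S' : R x →ₗ[ℂ] R x := S - μ • LinearMap.id
    have hS'w : S' w = 0 := by
      have := hw.apply_eq_smul
      simp [S', this]
    have hninj : ¬ Function.Injective S' := fun h => hw.2 (h (by rw [hS'w, map_zero]))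
    have hlt : Module.finrank ℂ (LinearMap.range S') < Module.finrank ℂ (R x) := by
      apply Submodule.finrank_lt
      intro h
      exact hninj (LinearMap.injective_iff_surjective.2 (LinearMap.range_eq_top.1 h))
    have hle : R (x * a * x - μ • x) ≤ (LinearMap.range S').map (R x).subtype := by
      rintro _ ⟨y, rfl⟩
      refine ⟨S' ⟨π x y, hmem y⟩, ⟨_, rfl⟩, ?_⟩
      simp [S', S]
    have hfd : FiniteDimensional ℂ (R (x * a * x - μ • x)) := Submodule.finiteDimensional_of_le hle
    refine sub_eq_zero.1 (hmin _ hfd ?_)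
    calc _ ≤ _ := Submodule.finrank_mono hle
      _ ≤ _ := Submodule.finrank_map_le _ _
      _ < _ := hlt
  refine ⟨x, hx0, π x u, fun y => ?_⟩
  have hcl : IsClosed (Submodule.span ℂ {π x u} : Set H) := Submodule.closed_of_finiteDimensional _
  have hy : y ∈ (orbitSubmodule π (π x u)).topologicalClosure := by
    rw [orbitSubmodule_topologicalClosure π hirred hu]
    trivial
  have := map_mem_closure (π x).continuous hy (t := (Submodule.span ℂ {π x u} : Set H)) ?_
  · rwa [hcl.closure_eq] at this
  · rintro _ ⟨a, rfl⟩
    obtain ⟨μ, hμ⟩ := hscal a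
    refine Submodule.mem_span_singleton.2 ⟨μ, ?_⟩
    have := congrArg (fun z => π z u) hμ
    simpa using this.symm

/-- Normalising `x* x` for `x` of rank one gives an `e` acting as the orthogonal projection onto
the line of a unit vector. -/
lemma exists_rank_one_projection {A : Type*} [Ring A] [StarRing A] [Algebra ℂ A]
    {H : Type*} [NormedAddCommGroup H] [InnerProductSpace ℂ H] [CompleteSpace H]
    (π : A →⋆ₐ[ℂ] (H →L[ℂ] H)) (hfaithful : Function.Injective π)
    (hex : ∃ x : A, x ≠ 0 ∧ ∃ v : H, ∀ y, π x y ∈ Submodule.span ℂ {v}) :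
    ∃ (e : A) (w : H), ‖w‖ = 1 ∧ ∀ y, π e y = inner ℂ w y • w := by
  obtain ⟨x, hx0, v, hv⟩ := hex
  have hπx : π x ≠ 0 := fun h => hx0 (hfaithful (by rw [h, map_zero]))
  obtain ⟨u, hu⟩ : ∃ u, π x u ≠ 0 := by
    by_contra! h
    exact hπx (by ext y; simp [h y])
  have hstar : ∀ y z : H, inner ℂ y (π (star x) z) = inner ℂ (π x y) z := by
    intro y z
    rw [map_star, ContinuousLinearMap.star_eq_adjoint, ContinuousLinearMap.adjoint_inner_right]
  set w := π (star x) v with hw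
  obtain ⟨c, hc⟩ := Submodule.mem_span_singleton.1 (hv u)
  have hv0 : v ≠ 0 := by
    rintro rfl
    exact hu (by rw [← hc, smul_zero])
  -- `π x y` is determined by its inner product with `v`
  have hform : ∀ y, π x y = (inner ℂ w y / inner ℂ v v) • v := by
    intro y
    obtain ⟨d, hd⟩ := Submodule.mem_span_singleton.1 (hv y)
    have h1 : inner ℂ w y = inner ℂ v (π x y) := by
      rw [← inner_conj_symm, hw, hstar, inner_conj_symm]
    have h2 : inner ℂ v v ≠ 0 := inner_self_ne_zero.2 hv0
    rw [h1, ← hd, inner_smul_right, mul_div_cancel_right₀ _ h2]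
  have hw0 : w ≠ 0 := by
    intro h
    apply hu
    rw [hform, h]
    simp
  have hwn : (‖w‖ : ℂ) ≠ 0 := by simpa using hw0
  have hvv : inner ℂ v v ≠ 0 := inner_self_ne_zero.2 hv0
  refine ⟨(inner ℂ v v / (‖w‖ : ℂ) ^ 2) • (star x * x), (‖w‖ : ℂ)⁻¹ • w, ?_, fun y => ?_⟩
  · rw [norm_smul]
    have : ‖w‖ ≠ 0 := by simpa using hw0
    simp [this]
  · rw [map_smul, map_mul]
    simp only [smul_apply, mul_apply_eq_comp, hform y, map_smul,
      ← hw, inner_smul_left, smul_smul, map_inv₀, Complex.conj_ofReal]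
    congr 1
    field_simp

/-! ### The bound from the trace -/

/-- If `e` acts as the projection onto `ℂw`, a subspace of `π(A)w` of finite dimension `n`
satisfies `n τ(e) ≤ 1`: vectors `π(aᵢ)w` forming an orthonormal basis give a projection
`∑ aᵢ e aᵢ*` of trace `n τ(e)`. -/
lemma finrank_mul_trace_le {A : Type*} [Ring A] [StarRing A] [Algebra ℂ A]
    (τ : A →ₗ[ℂ] ℂ) (hτ1 : τ 1 = 1)
    (hτpos : ∀ a : A, ∃ r : ℝ, 0 ≤ r ∧ τ (star a * a) = (r : ℂ))
    (hτtr : ∀ a b : A, τ (a * b) = τ (b * a))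
    {H : Type*} [NormedAddCommGroup H] [InnerProductSpace ℂ H] [CompleteSpace H]
    (π : A →⋆ₐ[ℂ] (H →L[ℂ] H)) (hfaithful : Function.Injective π)
    (e : A) (w : H) (hw : ‖w‖ = 1) (he : ∀ y, π e y = inner ℂ w y • w)
    (t : ℝ) (ht : τ e = (t : ℂ))
    (F : Submodule ℂ H) [FiniteDimensional ℂ F] (hF : F ≤ orbitSubmodule π w) :
    (Module.finrank ℂ F : ℝ) * t ≤ 1 := by
  have hestar : star e = e := by
    apply hfaithful
    rw [map_star, ContinuousLinearMap.star_eq_adjoint]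
    symm
    rw [ContinuousLinearMap.eq_adjoint_iff]
    intro x y
    rw [he, he, inner_smul_left, inner_smul_right, inner_conj_symm]
    ring
  have hcompress : ∀ a b : A, e * (star a * b) * e = (inner ℂ (π a w) (π b w) : ℂ) • e := by
    intro a b
    apply hfaithful
    ext y
    simp only [map_mul, map_smul, mul_apply_eq_comp, smul_apply,
      he, map_star, ContinuousLinearMap.star_eq_adjoint,
      ContinuousLinearMap.adjoint_inner_right, smul_smul]
    rw [mul_comm]
  have hee : e * e = e := by
    apply hfaithful
    ext y
    simp [he, inner_self_eq_norm_sq_to_K, hw]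
  let B := stdOrthonormalBasis ℂ F
  choose a ha using fun i => hF (B i).2
  let b := fun i => a i * e
  have hbb : ∀ i j, star (b i) * b j = if i = j then e else 0 := by
    intro i j
    have h1 : star (b i) * b j = e * (star (a i) * a j) * e := by
      simp only [b, star_mul, hestar, mul_assoc]
    rw [h1, hcompress, ha, ha, ← Submodule.coe_inner, orthonormal_iff_ite.1 B.orthonormal i j]
    split_ifs <;> simp
  have hbe : ∀ i, b i * e = b i := fun i => by simp only [b, mul_assoc, hee]
  set q := ∑ i, b i * star (b i) with hq
  have hqs : star q = q := by simp [hq, star_sum]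
  have hqq : q * q = q := by
    rw [hq, Finset.sum_mul]
    refine Finset.sum_congr rfl fun i _ => ?_
    rw [Finset.mul_sum, Finset.sum_eq_single i]
    · rw [mul_assoc, ← mul_assoc (star (b i)), hbb, if_pos rfl, ← mul_assoc, hbe]
    · intro j _ hji
      rw [mul_assoc, ← mul_assoc (star (b i)), hbb, if_neg hji.symm]
      simp
    · simp
  have hτq : τ q = Module.finrank ℂ F * (t : ℂ) := by
    have : ∀ i, τ (b i * star (b i)) = t := fun i => by rw [hτtr, hbb, if_pos rfl, ht]
    simp [hq, this]
  obtain ⟨r, hr, h⟩ := hτpos (1 - q)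
  have h2 : star (1 - q) * (1 - q) = 1 - q := by
    rw [star_sub, star_one, hqs, mul_sub, sub_mul, sub_mul, hqq]
    simp
  rw [h2, map_sub, hτ1, hτq] at h
  have h3 : 1 - (Module.finrank ℂ F : ℝ) * t = r := by exact_mod_cast h
  linarith


/-- Let `A` be a unital C*-algebra that is infinite-dimensional over `ℂ` and admits a
faithful tracial state. Then every faithful irreducible representation of `A` on a complex
Hilbert space is essential: the only compact operator in its range is `0`. -/
theorem faithful_irreducible_rep_essential_of_faithful_trace
    {A : Type*} [NormedRing A] [StarRing A] [CStarRing A] [NormedAlgebra ℂ A]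
    [StarModule ℂ A] [CompleteSpace A]
    (hdim : ¬ FiniteDimensional ℂ A)
    (τ : A →ₗ[ℂ] ℂ)
    (hτ1 : τ 1 = 1)
    (hτpos : ∀ a : A, ∃ r : ℝ, 0 ≤ r ∧ τ (star a * a) = (r : ℂ))
    (hτtr : ∀ a b : A, τ (a * b) = τ (b * a))
    (hτfaithful : ∀ a : A, τ (star a * a) = 0 → a = 0)
    {H : Type*} [NormedAddCommGroup H] [InnerProductSpace ℂ H] [CompleteSpace H]
    (π : A →⋆ₐ[ℂ] (H →L[ℂ] H))
    (hfaithful : Function.Injective π)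
    (hirred : ∀ S : Submodule ℂ H, IsClosed (S : Set H) →
      (∀ a : A, ∀ x ∈ S, π a x ∈ S) → S = ⊥ ∨ S = ⊤) :
    ∀ a : A, IsCompactOperator (π a) → π a = 0 := by
  intro a ha
  by_contra hπa
  let _ : CStarAlgebra A := {}
  have ha0 : a ≠ 0 := by
    rintro rfl
    exact hπa (map_zero π)
  obtain ⟨e, w, hw, he⟩ := exists_rank_one_projection π hfaithful
    (exists_rank_one π hfaithful hirred (exists_finite_rank π a ha ha0))
  have hw0 : w ≠ 0 := by
    rintro rfl
    simp at hw
  have he0 : e ≠ 0 := by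
    rintro rfl
    have := he w
    simp [inner_self_eq_norm_sq_to_K, hw] at this
    exact hw0 this.symm
  obtain ⟨t, ht0, ht⟩ : ∃ t : ℝ, 0 < t ∧ τ e = t := by
    have hse : star e * e = e := by
      apply hfaithful
      ext y
      refine ext_inner_left ℂ fun z => ?_
      rw [map_mul, mul_apply_eq_comp, map_star, ContinuousLinearMap.star_eq_adjoint,
        ContinuousLinearMap.adjoint_inner_right]
      simp only [he, inner_smul_left, inner_smul_right, inner_conj_symm, inner_self_eq_norm_sq_to_K,
        hw]
      simp
    obtain ⟨r, hr, h⟩ := hτpos e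
    refine ⟨r, lt_of_le_of_ne hr ?_, by rw [← h, hse]⟩
    rintro rfl
    exact he0 (hτfaithful e (by simpa using h))
  have hbound := finrank_mul_trace_le τ hτ1 hτpos hτtr π hfaithful e w hw he t ht
  have hfin : FiniteDimensional ℂ (orbitSubmodule π w) := by
    rw [FiniteDimensional, ← Module.rank_lt_aleph0_iff]
    refine lt_of_le_of_lt (rank_le (n := ⌊1 / t⌋₊) fun s hs => ?_) (Cardinal.natCast_lt_aleph0)
    have h1 : Module.finrank ℂ (Submodule.span ℂ (s : Set (orbitSubmodule π w))) = s.card :=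
      finrank_span_finset_eq_card hs
    have h2 := hbound ((Submodule.span ℂ (s : Set (orbitSubmodule π w))).map
      (orbitSubmodule π w).subtype) (Submodule.map_subtype_le _ _)
    rw [Submodule.finrank_map_subtype_eq, h1] at h2
    exact Nat.le_floor ((le_div_iff₀ ht0).2 h2)
  have htop : orbitSubmodule π w = ⊤ := by
    rw [← orbitSubmodule_topologicalClosure π hirred hw0]
    exact ((Submodule.closed_of_finiteDimensional _).submodule_topologicalClosure_eq).symm
  have hH : FiniteDimensional ℂ H := by
    rw [htop] at hfin
    exact Module.Finite.equiv (Submodule.topEquiv (R := ℂ) (M := H))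
  have : FiniteDimensional ℂ (H →L[ℂ] H) := inferInstance
  exact hdim (FiniteDimensional.of_injective (π.toAlgHom.toLinearMap) hfaithful)
end

section
/- Let A be a unital separable C*-algebra that is infinite-dimensional as a complex vector space, admits a faithful tracial state, and admits at least one faithful irreducible representation on some complex Hilbert space. Then there exists an uncountable set S of representations of A on ℓ²(ℕ, ℂ) such that every member of S is faithful and irreducible, and no two distinct members of S are unitarily equivalent. -/
/-!
The representations are separated by eigenvectors along the branches of a binary tree of elements
of `A`.

*Splitting.* If some nonzero self-adjoint `c` were such that every self-adjoint `c * z * c` is a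
multiple of a projection, `A` would have a minimal projection `p` (`exists_minimal_projection`).
Under a faithful irreducible representation `p` has rank one, so there are infinitely many pairwise
orthogonal projections equivalent to `p`, contradicting the existence of a faithful trace
(`no_minimal_projection`). Hence some `c * z * c` has two distinct nonzero spectral values, and
functional calculus yields two orthogonal contractions that act as units on nonzero elements
(`split_of_spectrum`, `exists_split`).

*Tree.* The algebra is prime because it has a faithful irreducible representation
(`prime_of_irreducible`), so the splitting can be repeated inside any prescribed ideal. This gives
a binary tree of contractions `e`, nested along each path `x : ℕ → Bool`, orthogonal on distinct
paths from some level on, and lying at level `n + 1` in the ideal generated by `b n`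
(`exists_tree`). Here `b` is a sequence of nonzero elements, provided by separability, such that a
representation killing no `b n` is injective (`exists_detecting_sequence`).

*Representations.* For each path, weak-star compactness and the Krein–Milman theorem give a pure
state equal to `1` on all its contractions; its GNS representation is irreducible and has a unit
vector fixed by all of them (`exists_irreducible`). It is faithful by the choice of `b`, and it
lives on a separable infinite-dimensional space, which is identified with `ℓ²(ℕ, ℂ)`
(`exists_rep_l2`).

*Counting.* In one representation on `ℓ²(ℕ, ℂ)`, vectors fixed along distinct paths are orthogonal,
so only countably many paths have one (`countable_class`). Hence each unitary equivalence class
contains the representations of countably many paths, whereas there are uncountably many paths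
(`exists_set`).
-/

/-- The Hilbert space `ℓ²(ℕ, ℂ)` of square-summable complex sequences. -/
noncomputable abbrev l2NC : Type := lp (fun _ : ℕ => ℂ) 2

/-! ### Separating spectral values -/

section Algebra
variable {A : Type*} [CStarAlgebra A]

/-- A self-adjoint element with at most one nonzero spectral value is a real multiple of a
projection (or zero), expressed here by the quadratic relation `h * h = μ • h`. -/
lemma cfc_zero_points (h : A) (hh : IsSelfAdjoint h)
    (hs : ¬ ∃ l ∈ spectrum ℝ h, ∃ m ∈ spectrum ℝ h, l ≠ 0 ∧ m ≠ 0 ∧ l ≠ m) :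
    ∃ μ : ℝ, h * h = μ • h := by
  have key : ∃ μ : ℝ, ∀ t ∈ spectrum ℝ h, t * t = μ * t := by
    by_cases H : ∃ l ∈ spectrum ℝ h, l ≠ 0
    · obtain ⟨l, hl, hl0⟩ := H
      refine ⟨l, fun t ht => ?_⟩
      by_cases ht0 : t = 0
      · simp [ht0]
      · by_cases h1 : l = t
        · rw [h1]
        · exact absurd ⟨l, hl, t, ht, hl0, ht0, h1⟩ hs
    · push Not at H
      exact ⟨0, fun t ht => by simp [H t ht]⟩
  obtain ⟨μ, hμ⟩ := key
  refine ⟨μ, ?_⟩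
  have h1 : cfc (fun t : ℝ => t * t) h = cfc (fun t : ℝ => μ * t) h := cfc_congr hμ
  rw [cfc_mul (fun t : ℝ => t) (fun t : ℝ => t) h, cfc_const_mul μ (fun t : ℝ => t) h,
    cfc_id' ℝ h] at h1
  exact h1

/-- Two distinct nonzero spectral values of `h` are separated by functional calculus: bump
functions `f` around the two points give orthogonal contractions `e i`, and narrower bumps `g` with
`f * g = g` give nonzero elements `d i` on which `e i` acts as a unit. As `f` vanishes near `0`,
each `e i` lies in the right ideal generated by `h`. -/
lemma split_of_spectrum (h : A) (hh : IsSelfAdjoint h) {l m : ℝ} (hl : l ∈ spectrum ℝ h)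
    (hm : m ∈ spectrum ℝ h) (hl0 : l ≠ 0) (hm0 : m ≠ 0) (hlm : l ≠ m) :
    ∃ e d : Bool → A, (∀ i, IsSelfAdjoint (e i)) ∧ (∀ i, ‖e i‖ ≤ 1) ∧ (∀ i, d i ≠ 0) ∧
      (∀ i, e i * d i = d i) ∧ (e false * e true = 0) ∧ (∀ i, ∃ y, e i = h * y) := by
  obtain ⟨r, hr, hrl, hrm, hrlm⟩ : ∃ r : ℝ,
      0 < r ∧ 4 * r ≤ |l| ∧ 4 * r ≤ |m| ∧ 4 * r ≤ |l - m| := by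
    refine ⟨min |l| (min |m| |l - m|) / 4, ?_, ?_, ?_, ?_⟩
    · have := abs_pos.mpr hl0
      have := abs_pos.mpr hm0
      have := abs_pos.mpr (sub_ne_zero.mpr hlm)
      positivity
    all_goals
      have := min_le_left |l| (min |m| |l - m|)
      have := min_le_right |l| (min |m| |l - m|)
      have := min_le_left |m| |l - m|
      have := min_le_right |m| |l - m|
      linarith
  let p : Bool → ℝ := fun i => if i then m else l
  have hp : ∀ i, p i ∈ spectrum ℝ h := by intro i; cases i <;> simp [p, hl, hm]
  have hpr : ∀ i, 4 * r ≤ |p i| := by intro i; cases i <;> simp [p, hrl, hrm]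
  -- `f i` equals `1` on the `r`-ball around `p i` and vanishes off the `2 * r`-ball; `g i` lives on
  -- the `r`-ball; `q` is a continuous function agreeing with `t⁻¹` where `|t| ≥ r`
  let f : Bool → ℝ → ℝ := fun i t => max 0 (min 1 (2 - |t - p i| / r))
  let g : Bool → ℝ → ℝ := fun i t => max 0 (1 - |t - p i| / r)
  let q : ℝ → ℝ := fun t => t / max (t ^ 2) (r ^ 2)
  have hfc : ∀ i, Continuous (f i) := fun i => by fun_prop
  have hgc : ∀ i, Continuous (g i) := fun i => by fun_prop
  have hqc : Continuous q := by
    refine Continuous.div (by fun_prop) (by fun_prop) fun t => ?_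
    have : 0 < max (t ^ 2) (r ^ 2) := lt_max_of_lt_right (by positivity)
    exact this.ne'
  have hf0 : ∀ i t, f i t ≠ 0 → |t - p i| < 2 * r := by
    intro i t ht
    by_contra! hc
    apply ht
    have : 2 ≤ |t - p i| / r := by rw [le_div_iff₀ hr]; exact hc
    exact max_eq_left ((min_le_right _ _).trans (by linarith))
  have hg0 : ∀ i t, g i t ≠ 0 → |t - p i| < r := by
    intro i t ht
    by_contra! hc
    apply ht
    have : 1 ≤ |t - p i| / r := by rw [le_div_iff₀ hr]; linarith
    exact max_eq_left (by linarith)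
  have hfg : ∀ i t, f i t * g i t = g i t := by
    intro i t
    by_cases ht : g i t = 0
    · simp [ht]
    · have h1 := hg0 i t ht
      have h2 : |t - p i| / r < 1 := by rw [div_lt_iff₀ hr]; linarith
      have : f i t = 1 := by
        simp only [f]
        rw [min_eq_left (by linarith)]; simp
      rw [this, one_mul]
  have hq : ∀ i t, |t - p i| < 2 * r → t * q t = 1 := by
    intro i t ht
    have h1 : r < |t| := by
      have := abs_sub_abs_le_abs_sub (p i) t
      rw [abs_sub_comm] at this
      linarith [hpr i]
    have h2 : r ^ 2 ≤ t ^ 2 := by rw [← sq_abs t]; gcongr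
    have h3 : t ≠ 0 := by intro h; simp [h] at h1; linarith
    simp only [q]
    rw [max_eq_left h2]; field_simp
  have hfq : ∀ i t, t * (q t * f i t) = f i t := by
    intro i t
    by_cases ht : f i t = 0
    · simp [ht]
    · rw [← mul_assoc, hq i t (hf0 i t ht), one_mul]
  refine ⟨fun i => cfc (f i) h, fun i => cfc (g i) h, fun i => cfc_predicate _ _, fun i => ?_,
    fun i => ?_, fun i => ?_, ?_, fun i => ⟨cfc (fun t => q t * f i t) h, ?_⟩⟩
  · refine norm_cfc_le zero_le_one fun t _ => ?_
    rw [Real.norm_of_nonneg (le_max_left _ _)]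
    exact max_le zero_le_one (min_le_left _ _)
  · intro h0
    have h1 : p i ∈ spectrum ℝ h := hp i
    have h2 : g i (p i) ∈ spectrum ℝ (cfc (g i) h) := by
      rw [cfc_map_spectrum (g i) h hh (hgc i).continuousOn]
      exact ⟨_, h1, rfl⟩
    have : Nontrivial A := by
      by_contra hn
      rw [not_nontrivial_iff_subsingleton] at hn
      rw [spectrum.of_subsingleton] at h1; exact h1
    simp only at h0
    rw [h0, spectrum.zero_eq] at h2
    simp [g] at h2
  · rw [← cfc_mul (f i) (g i) h (hfc i).continuousOn (hgc i).continuousOn]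
    exact cfc_congr fun t _ => hfg i t
  · rw [← cfc_mul _ _ h (hfc _).continuousOn (hfc _).continuousOn]
    rw [← cfc_zero ℝ h]
    refine cfc_congr fun t _ => ?_
    by_contra hne
    have h1 := hf0 false t (left_ne_zero_of_mul hne)
    have h2 := hf0 true t (right_ne_zero_of_mul hne)
    simp only [p, if_true, Bool.false_eq_true, if_false] at h1 h2
    have := abs_sub_le l t m
    rw [abs_sub_comm l t] at this
    linarith
  · conv_rhs => enter [1]; rw [← cfc_id' ℝ h]
    rw [← cfc_mul (fun t => t) (fun t => q t * f i t) h (by fun_prop)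
      (hqc.mul (hfc i)).continuousOn]
    exact cfc_congr fun t _ => (hfq i t).symm

end Algebra

/-! ### Minimal projections and traces -/

section Corner
variable {A : Type*} [CStarAlgebra A]

/-- An element `h` of the corner of a projection `p` is a scalar multiple of `p` as soon as every
translate `h + s • p` satisfies a relation `k * k = μ • k`: comparing the relations for `s = 0` and
for a suitable `s ≠ 0` gives a linear relation between `h` and `p`. -/
lemma corner_scalar {p h : A} (hp : p * p = p) (hp0 : p ≠ 0) (h1 : p * h = h) (h2 : h * p = h)
    (H : ∀ s : ℝ, ∃ μ : ℝ, (h + s • p) * (h + s • p) = μ • (h + s • p)) :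
    ∃ z : ℝ, h = z • p := by
  obtain ⟨μ, hμ⟩ := H 0
  simp only [zero_smul, add_zero] at hμ
  -- the coefficient of `p` in the linear relation vanishes only if `s = 0` or `s = -μ`
  obtain ⟨s, hs0, hs1⟩ : ∃ s : ℝ, s ≠ 0 ∧ μ + s ≠ 0 := by
    refine ⟨|μ| + 1, by positivity, ?_⟩
    have := neg_abs_le μ
    intro h; linarith
  obtain ⟨ν, hν⟩ := H s
  have e1 : (h + s • p) * (h + s • p) = (μ + 2 * s) • h + (s * s) • p := by
    simp only [add_mul, mul_add, smul_mul_assoc, mul_smul_comm, h1, h2, hp, hμ]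
    module
  have e2 : (μ + 2 * s - ν) • h = (s * (ν - s)) • p := by
    have : (μ + 2 * s) • h + (s * s) • p = ν • (h + s • p) := e1 ▸ hν
    rw [sub_smul, sub_eq_iff_eq_add]
    rw [← eq_sub_iff_add_eq] at this
    rw [this]; module
  by_cases hc : μ + 2 * s - ν = 0
  · rw [hc, zero_smul] at e2
    rcases smul_eq_zero.mp e2.symm with h | h
    · rcases mul_eq_zero.mp h with h | h
      · exact absurd h hs0
      · exact absurd (by linarith) hs1
    · exact absurd h hp0
  · refine ⟨(μ + 2 * s - ν)⁻¹ * (s * (ν - s)), ?_⟩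
    rw [mul_smul, ← e2, smul_smul, inv_mul_cancel₀ hc, one_smul]

/-- If every self-adjoint element of the form `c * z * c` is a multiple of a projection, then the
normalization `p` of `c * c` is a minimal projection, that is, `p A p = ℂ p`. -/
lemma exists_minimal_projection {c : A} (hc : IsSelfAdjoint c) (hc0 : c ≠ 0)
    (H : ∀ z : A, IsSelfAdjoint (c * z * c) →
      ∃ μ : ℝ, (c * z * c) * (c * z * c) = μ • (c * z * c)) :
    ∃ p : A, p ≠ 0 ∧ IsSelfAdjoint p ∧ p * p = p ∧ ∀ a : A, ∃ z : ℂ, p * a * p = z • p := by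
  have hcc : IsSelfAdjoint (c * c) := by simpa [hc.star_eq] using IsSelfAdjoint.star_mul_self c
  have hcc0 : c * c ≠ 0 := by
    have := CStarRing.star_mul_self_ne_zero_iff c
    rw [hc.star_eq] at this
    exact this.mpr hc0
  obtain ⟨μ, hμ⟩ := H 1 (by simpa using hcc)
  simp only [mul_one] at hμ
  have hμ0 : μ ≠ 0 := by
    rintro rfl
    rw [zero_smul] at hμ
    have := CStarRing.star_mul_self_ne_zero_iff (c * c)
    rw [hcc.star_eq] at this
    exact this.mpr hcc0 hμ
  set p : A := μ⁻¹ • (c * c) with hpdef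
  have hps : IsSelfAdjoint p := (IsSelfAdjoint.all μ⁻¹).smul hcc
  have hpp : p * p = p := by
    simp only [hpdef, smul_mul_smul_comm, hμ, smul_smul]
    congr 1; field_simp
  have hp0 : p ≠ 0 := smul_ne_zero (inv_ne_zero hμ0) hcc0
  have hsa : ∀ a : A, IsSelfAdjoint a → ∃ z : ℝ, p * a * p = z • p := by
    intro a ha
    refine corner_scalar hpp hp0 (by simp [← mul_assoc, hpp]) (by simp [mul_assoc, hpp]) fun s => ?_
    have e : p * a * p + s • p = c * (μ⁻¹ • μ⁻¹ • (c * a * c) + (s * μ⁻¹) • 1) * c := by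
      simp only [hpdef, smul_mul_assoc, mul_smul_comm, mul_add, add_mul, mul_assoc, mul_one,
        smul_smul]
    have hsa' : IsSelfAdjoint (p * a * p + s • p) := by
      refine IsSelfAdjoint.add ?_ ((IsSelfAdjoint.all s).smul hps)
      have := ha.conjugate p
      rwa [hps.star_eq] at this
    rw [e] at hsa' ⊢
    exact H _ hsa'
  refine ⟨p, hp0, hps, hpp, fun a => ?_⟩
  obtain ⟨x, hx⟩ := hsa (realPart a) (realPart a).2
  obtain ⟨y, hy⟩ := hsa (imaginaryPart a) (imaginaryPart a).2
  refine ⟨x + Complex.I * y, ?_⟩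
  conv_lhs => rw [← realPart_add_I_smul_imaginaryPart a]
  simp only [mul_add, add_mul, mul_smul_comm, smul_mul_assoc, hx, hy, add_smul, mul_smul,
    Complex.coe_smul]

/-- An infinite-dimensional algebra with a faithful irreducible representation and a faithful trace
has no minimal projection. If `p` were one, it would act as a rank-one projection onto the span of
a unit vector `ξ`. The space `π A ξ` is infinite-dimensional, so it contains arbitrarily many
orthonormal vectors `π (a i) ξ`. The sum `q` of the `a i * p * star (a i)` is then a projection of
trace `n * τ p`, which exceeds `1` for large `n`. -/
lemma no_minimal_projection {H : Type*} [NormedAddCommGroup H] [InnerProductSpace ℂ H]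
    [CompleteSpace H] (π : A →⋆ₐ[ℂ] (H →L[ℂ] H)) (hπ : Function.Injective π)
    (hirr : ∀ S : Submodule ℂ H, IsClosed (S : Set H) →
        (∀ a : A, ∀ x ∈ S, π a x ∈ S) → S = ⊥ ∨ S = ⊤)
    (hdim : ¬ FiniteDimensional ℂ A)
    (τ : A →ₗ[ℂ] ℂ) (τ1 : τ 1 = 1)
    (τpos : ∀ a : A, ∃ r : ℝ, 0 ≤ r ∧ τ (star a * a) = (r : ℂ))
    (τtr : ∀ a b : A, τ (a * b) = τ (b * a))
    (τf : ∀ a : A, τ (star a * a) = 0 → a = 0)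
    {p : A} (hp0 : p ≠ 0) (hps : IsSelfAdjoint p) (hpp : p * p = p)
    (hmin : ∀ a : A, ∃ z : ℂ, p * a * p = z • p) : False := by
  -- a unit vector in the range of `π p`
  obtain ⟨ξ, hξn, hξ⟩ : ∃ ξ : H, ‖ξ‖ = 1 ∧ π p ξ = ξ := by
    have : π p ≠ 0 := fun h => hp0 (hπ (by rw [h, map_zero]))
    obtain ⟨v, hv⟩ : ∃ v, π p v ≠ 0 := by
      by_contra! h; exact this (ContinuousLinearMap.ext h)
    have hn : ‖π p v‖ ≠ 0 := norm_ne_zero_iff.mpr hv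
    refine ⟨((‖π p v‖⁻¹ : ℝ) : ℂ) • π p v, ?_, ?_⟩
    · rw [norm_smul]; simp [hn]
    · rw [map_smul, ← mul_apply_eq_comp, ← map_mul, hpp]
  let ev : A →ₗ[ℂ] H :=
    { toFun := fun a => π a ξ, map_add' := by simp, map_smul' := by simp }
  have hM : ¬ FiniteDimensional ℂ (LinearMap.range ev) := by
    intro hfin
    have hcl : IsClosed ((LinearMap.range ev : Submodule ℂ H) : Set H) :=
      Submodule.closed_of_finiteDimensional _
    have hH : FiniteDimensional ℂ H := by
      rcases hirr _ hcl (by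
        rintro a _ ⟨b, rfl⟩
        exact ⟨a * b, by simp [ev]⟩) with h | h
      · have : ξ ∈ LinearMap.range ev := ⟨1, by simp [ev]⟩
        rw [h, Submodule.mem_bot] at this
        simp [this] at hξn
      · rw [h] at hfin
        exact Module.Finite.equiv (Submodule.topEquiv)
    apply hdim
    exact FiniteDimensional.of_injective
      ((ContinuousLinearMap.coeLM ℂ).comp (π.toAlgHom.toLinearMap) : A →ₗ[ℂ] (H →ₗ[ℂ] H))
      (by
        intro a b hab
        apply hπ
        exact ContinuousLinearMap.coe_injective hab)
  obtain ⟨r, hr0, hr⟩ := τpos p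
  rw [hps.star_eq, hpp] at hr
  have hrpos : 0 < r := by
    rcases hr0.lt_or_eq with h | h
    · exact h
    · exact absurd (τf p (by rw [hps.star_eq, hpp, hr, ← h]; simp)) hp0
  obtain ⟨n, hn⟩ := exists_nat_gt (1 / r)
  rw [div_lt_iff₀ hrpos] at hn
  -- `n` orthonormal vectors of the form `π (a i) ξ`
  obtain ⟨v, hv, hvm⟩ : ∃ v : Fin n → H, Orthonormal ℂ v ∧ ∀ i, v i ∈ LinearMap.range ev := by
    have hrank : Cardinal.aleph0 ≤ Module.rank ℂ (LinearMap.range ev) := by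
      by_contra! h
      exact hM (Module.rank_lt_aleph0_iff.mp h)
    obtain ⟨w, hw⟩ := Module.le_rank_iff.mp ((Cardinal.natCast_lt_aleph0 (n := n)).le.trans hrank)
    have ho := InnerProductSpace.gramSchmidtNormed_orthonormal hw
    exact ⟨(LinearMap.range ev).subtypeₗᵢ ∘ InnerProductSpace.gramSchmidtNormed ℂ w,
      ho.comp_linearIsometry (LinearMap.range ev).subtypeₗᵢ,
      fun i => (InnerProductSpace.gramSchmidtNormed ℂ w i).2⟩
  choose a ha using hvm
  -- minimality of `p` turns orthonormality of the `v i` into an identity in the algebra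
  have hort : ∀ i j, p * star (a i) * a j * p = if i = j then p else 0 := by
    intro i j
    obtain ⟨z, hz⟩ := hmin (star (a i) * a j)
    rw [← mul_assoc] at hz
    have h1 : inner ℂ ξ (π (p * star (a i) * a j * p) ξ) = inner ℂ (v i) (v j) := by
      simp only [map_mul, mul_apply_eq_comp, hξ, map_star]
      rw [← ha, ← ha]
      simp only [ev, LinearMap.coe_mk, AddHom.coe_mk]
      have e : π p = star (π p) := by rw [← map_star, hps.star_eq]
      rw [e, ContinuousLinearMap.star_eq_adjoint, ContinuousLinearMap.adjoint_inner_right,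
        hξ, ContinuousLinearMap.star_eq_adjoint, ContinuousLinearMap.adjoint_inner_right]
    rw [hz, map_smul, smul_apply, hξ, inner_smul_right,
      inner_self_eq_norm_sq_to_K, hξn, orthonormal_iff_ite.mp hv] at h1
    rw [hz]
    have h2 : z = if i = j then 1 else 0 := by simpa using h1
    rw [h2]; split_ifs <;> simp
  set q : A := ∑ i, a i * p * star (a i) with hq
  have hqs : star q = q := by
    simp [hq, star_sum, star_mul, hps.star_eq, mul_assoc]
  have hqq : q * q = q := by
    rw [hq, Finset.sum_mul_sum]
    refine Finset.sum_congr rfl fun i _ => ?_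
    have : ∀ j, a i * p * star (a i) * (a j * p * star (a j)) =
        a i * (p * star (a i) * a j * p) * star (a j) := fun j => by simp only [mul_assoc]
    simp only [this, hort]
    simp
  have hτq : τ q = n * r := by
    rw [hq, map_sum]
    have : ∀ i, τ (a i * p * star (a i)) = r := by
      intro i
      have h1 := hort i i
      simp only [if_true] at h1
      have : a i * p * star (a i) = (a i * p) * (p * star (a i)) := by
        simp only [mul_assoc]; rw [← mul_assoc p p, hpp]
      rw [this, τtr, ← hr, ← mul_assoc, h1]
    simp [this]
  -- `1 - q` is a projection, so its trace is nonnegative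
  obtain ⟨t, ht0, ht⟩ := τpos (1 - q)
  have e : star (1 - q) * (1 - q) = 1 - q := by
    rw [star_sub, star_one, hqs, sub_mul, mul_sub, mul_sub, hqq]; simp
  rw [e, map_sub, τ1, hτq] at ht
  have : (1 : ℝ) - n * r = t := by exact_mod_cast ht
  linarith
end Corner

/-! ### Testing injectivity on countably many elements -/

section Sep
variable {A : Type*} [CStarAlgebra A]

lemma cut_ne_zero {a : A} (ha : 3 / 4 < ‖a‖) :
    cfc (fun t : ℝ => max 0 (t - 1 / 4)) (star a * a) ≠ 0 := by
  have hnt : Nontrivial A := by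
    refine ⟨a, 0, ?_⟩
    rintro rfl
    simp at ha; linarith
  have hsa : IsSelfAdjoint (star a * a) := IsSelfAdjoint.star_mul_self a
  intro h0
  -- `star a * a` is bounded by `1/4` in norm if the cut-down vanishes
  have h1 : ‖cfc (fun t : ℝ => t) (star a * a)‖ ≤ 1 / 4 := by
    refine norm_cfc_le (by norm_num) fun t ht => ?_
    have h2 := norm_apply_le_norm_cfc (fun t : ℝ => max 0 (t - 1 / 4)) (star a * a) ht
    rw [h0, norm_zero, norm_le_zero_iff] at h2
    have h3 := le_max_right 0 (t - 1 / 4)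
    have h4 : 0 ≤ t := spectrum_star_mul_self_nonneg t ht
    rw [Real.norm_of_nonneg h4]
    linarith
  rw [cfc_id' ℝ (star a * a), CStarRing.norm_star_mul_self] at h1
  nlinarith

/-- If `a` is close to an element `x` of the kernel of `σ`, then the cut-down of `star a * a` at
`1 / 4` also lies in the kernel, because `σ (star a * a)` has norm at most `1 / 16`. -/
lemma cut_map_eq_zero {a x : A} {K : Type*} [NormedAddCommGroup K] [InnerProductSpace ℂ K]
    [CompleteSpace K] (σ : A →⋆ₐ[ℂ] (K →L[ℂ] K)) (hx : σ x = 0) (hax : ‖a - x‖ < 1 / 4) :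
    σ (cfc (fun t : ℝ => max 0 (t - 1 / 4)) (star a * a)) = 0 := by
  have hsa : IsSelfAdjoint (star a * a) := IsSelfAdjoint.star_mul_self a
  have hsa' : IsSelfAdjoint (σ (star a * a)) := hsa.map σ
  have hn : ‖σ a‖ ≤ 1 / 4 := by
    have : σ a = σ (a - x) := by rw [map_sub, hx, sub_zero]
    rw [this]
    exact (NonUnitalStarAlgHom.norm_apply_le σ _).trans hax.le
  rw [StarAlgHom.map_cfc σ (fun t : ℝ => max 0 (t - 1 / 4)) (star a * a)
    (by fun_prop) (NonUnitalStarAlgHom.instContinuousLinearMapClassComplex.map_continuous σ)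
    hsa hsa']
  rw [← cfc_zero ℝ (σ (star a * a))]
  refine cfc_congr fun t ht => ?_
  have h1 : ‖t‖ ≤ ‖σ (star a * a)‖ := by
    have := norm_apply_le_norm_cfc (fun t : ℝ => t) (σ (star a * a)) ht
    rwa [cfc_id' ℝ (σ (star a * a))] at this
  rw [map_mul, map_star, CStarRing.norm_star_mul_self] at h1
  have h2 := le_abs_self t
  rw [Real.norm_eq_abs] at h1
  have h3 : 0 ≤ ‖σ a‖ := norm_nonneg _
  simp only [Pi.zero_apply]
  refine max_eq_left ?_
  nlinarith

universe u v

/-- In a separable algebra countably many nonzero elements suffice to test injectivity of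
representations. They are the nonzero cut-downs of `star a * a`, for `a` in a dense sequence (with
`1` in place of the cut-downs that vanish): a
nonzero kernel contains a unit vector, and the cut-down attached to a nearby `a` is nonzero and is
killed as well. -/
lemma exists_detecting_sequence (A : Type u) [CStarAlgebra A] [TopologicalSpace.SeparableSpace A]
    [Nontrivial A] :
    ∃ b : ℕ → A, (∀ n, b n ≠ 0) ∧ ∀ (K : Type v) [NormedAddCommGroup K] [InnerProductSpace ℂ K]
      [CompleteSpace K] (σ : A →⋆ₐ[ℂ] (K →L[ℂ] K)), (∀ n, σ (b n) ≠ 0) → Function.Injective σ := by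
  classical
  obtain ⟨a, ha⟩ := TopologicalSpace.exists_dense_seq A
  let c : ℕ → A := fun n => cfc (fun t : ℝ => max 0 (t - 1 / 4)) (star (a n) * a n)
  refine ⟨fun n => if c n = 0 then 1 else c n, fun n => ?_, fun K _ _ _ σ hσ => ?_⟩
  · dsimp only
    split_ifs with h
    · exact one_ne_zero
    · exact h
  · rw [injective_iff_map_eq_zero]
    intro x hx
    by_contra hx0
    have hn : ‖x‖ ≠ 0 := norm_ne_zero_iff.mpr hx0
    set y : A := ((‖x‖⁻¹ : ℝ) : ℂ) • x with hy
    have hy1 : ‖y‖ = 1 := by rw [hy, norm_smul]; simp [hn]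
    have hσy : σ y = 0 := by rw [hy, map_smul, hx, smul_zero]
    obtain ⟨n, hdist⟩ := ha.exists_dist_lt y (ε := 1 / 4) (by norm_num)
    rw [dist_comm, dist_eq_norm] at hdist
    have h1 : 3 / 4 < ‖a n‖ := by
      have := norm_sub_norm_le y (a n)
      rw [norm_sub_rev] at this
      linarith
    apply hσ n
    simp only [c, if_neg (cut_ne_zero h1)]
    exact cut_map_eq_zero σ hσy hdist
end Sep

/-! ### Pure states and irreducible representations -/

section Pure
universe u
open scoped ComplexOrder

/-- The weak-star topology is induced from the product topology on `A → ℂ`, hence it is locally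
convex over `ℝ`, as the Krein–Milman theorem demands. -/
instance weakDual_locallyConvex (A : Type*) [CStarAlgebra A] :
    LocallyConvexSpace ℝ (WeakDual ℂ A) :=
  Topology.IsInducing.locallyConvexSpace (𝕜 := ℝ) (F := A → ℂ)
    (f := { toFun := fun (φ : WeakDual ℂ A) (a : A) => φ a
            map_add' := fun _ _ => rfl
            map_smul' := fun _ _ => rfl }) ⟨rfl⟩

/-- The state space of `A`, as a subset of the weak-star dual: contractive unital functionals that
are nonnegative on the elements `star a * a`. The norm bound is redundant, but it makes weak-star
compactness immediate. -/
def stateSet (A : Type*) [CStarAlgebra A] : Set (WeakDual ℂ A) :=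
  {φ | (∀ a, ‖φ a‖ ≤ ‖a‖) ∧ φ 1 = 1 ∧ ∀ a, 0 ≤ φ (star a * a)}

variable {A : Type u} [CStarAlgebra A]

lemma isCompact_stateSet : IsCompact (stateSet A) := by
  refine (WeakDual.isCompact_closedBall (𝕜 := ℂ) (E := A) 0 1).of_isClosed_subset ?_ ?_
  · have h1 : IsClosed {φ : WeakDual ℂ A | ∀ a, ‖φ a‖ ≤ ‖a‖} := by
      simp only [Set.ofPred_forall]
      exact isClosed_iInter fun a =>
        isClosed_le (WeakDual.eval_continuous a).norm continuous_const
    have h2 : IsClosed {φ : WeakDual ℂ A | φ 1 = 1} :=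
      isClosed_eq (WeakDual.eval_continuous 1) continuous_const
    have h3 : IsClosed {φ : WeakDual ℂ A | ∀ a, 0 ≤ φ (star a * a)} := by
      simp only [Set.ofPred_forall]
      exact isClosed_iInter fun a =>
        isClosed_le continuous_const (WeakDual.eval_continuous _)
    exact h1.inter (h2.inter h3)
  · rintro φ ⟨h, -⟩
    simp only [Set.mem_preimage, Metric.mem_closedBall, dist_zero_right]
    exact ContinuousLinearMap.opNorm_le_bound _ zero_le_one fun a => by simpa using h a

section vec
variable {H : Type*} [NormedAddCommGroup H] [InnerProductSpace ℂ H] [CompleteSpace H]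

/-- The functional `a ↦ ⟪u, σ a u⟫`; it is a state when `u` is a unit vector. -/
noncomputable def vecState (σ : A →⋆ₐ[ℂ] (H →L[ℂ] H)) (u : H) : WeakDual ℂ A :=
  StrongDual.toWeakDual (LinearMap.mkContinuous
    { toFun := fun a => inner ℂ u (σ a u)
      map_add' := fun a b => by simp
      map_smul' := fun c a => by simp } (‖u‖ * ‖u‖) fun a => by
    calc ‖inner ℂ u (σ a u)‖ ≤ ‖u‖ * ‖σ a u‖ := norm_inner_le_norm _ _
      _ ≤ ‖u‖ * (‖a‖ * ‖u‖) := by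
        gcongr
        refine ((σ a).le_opNorm u).trans ?_
        gcongr
        exact NonUnitalStarAlgHom.norm_apply_le σ a
      _ = _ := by ring)

lemma vecState_apply (σ : A →⋆ₐ[ℂ] (H →L[ℂ] H)) (u : H) (a : A) :
    vecState σ u a = inner ℂ u (σ a u) := rfl

lemma vecState_mem (σ : A →⋆ₐ[ℂ] (H →L[ℂ] H)) {u : H} (hu : ‖u‖ = 1) :
    vecState σ u ∈ stateSet A := by
  refine ⟨fun a => ?_, ?_, fun a => ?_⟩
  · rw [vecState_apply]
    calc ‖inner ℂ u (σ a u)‖ ≤ ‖u‖ * ‖σ a u‖ := norm_inner_le_norm _ _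
      _ ≤ ‖u‖ * (‖a‖ * ‖u‖) := by
        gcongr
        refine ((σ a).le_opNorm u).trans ?_
        gcongr
        exact NonUnitalStarAlgHom.norm_apply_le σ a
      _ = _ := by rw [hu]; ring
  · rw [vecState_apply, map_one, one_apply_eq_self, inner_self_eq_norm_sq_to_K, hu]
    simp
  · rw [vecState_apply, map_mul, map_star, mul_apply_eq_comp,
      ContinuousLinearMap.star_eq_adjoint, ContinuousLinearMap.adjoint_inner_right]
    rw [inner_self_eq_norm_sq_to_K (𝕜 := ℂ)]
    simp

/-- If every finite initial segment of the contractions `e m` has a common fixed unit vector, some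
pure state takes the value `1` on all of them: by compactness there is a state with this property, such
states form a closed face of the state space, and an extreme point of a face is extreme. -/
lemma exists_pure_state (e : ℕ → A) (he : ∀ n, ‖e n‖ ≤ 1) (σ : A →⋆ₐ[ℂ] (H →L[ℂ] H))
    (hv : ∀ n, ∃ ξ : H, ‖ξ‖ = 1 ∧ ∀ m ≤ n, σ (e m) ξ = ξ) :
    ∃ φ ∈ (stateSet A).extremePoints ℝ, ∀ n, φ (e n) = 1 := by
  let F : ℕ → Set (WeakDual ℂ A) := fun n => stateSet A ∩ {φ | ∀ m ≤ n, φ (e m) = 1}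
  have hcl : ∀ n, IsClosed (F n) := by
    intro n
    refine isCompact_stateSet.isClosed.inter ?_
    simp only [Set.ofPred_forall]
    exact isClosed_iInter fun m => isClosed_iInter fun _ =>
      isClosed_eq (WeakDual.eval_continuous _) continuous_const
  have hcpt : IsCompact (F 0) := isCompact_stateSet.of_isClosed_subset (hcl 0) Set.inter_subset_left
  have hne : (⋂ n, F n).Nonempty := by
    refine IsCompact.nonempty_iInter_of_sequence_nonempty_isCompact_isClosed F ?_ ?_ hcpt hcl
    · exact fun n φ hφ => ⟨hφ.1, fun m hm => hφ.2 m (by omega)⟩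
    · intro n
      obtain ⟨ξ, h1, h2⟩ := hv n
      refine ⟨vecState σ ξ, vecState_mem σ h1, fun m hm => ?_⟩
      rw [vecState_apply, h2 m hm, inner_self_eq_norm_sq_to_K, h1]
      simp
  have hc : IsCompact (⋂ n, F n) :=
    hcpt.of_isClosed_subset (isClosed_iInter hcl) (Set.iInter_subset _ 0)
  obtain ⟨φ, hφ⟩ := hc.extremePoints_nonempty hne
  have hφm := Set.mem_iInter.mp hφ.1
  -- a state is at most one on a contraction, so the intersection is a face of the state space
  refine ⟨φ, ?_, fun n => (hφm n).2 n le_rfl⟩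
  rw [mem_extremePoints_iff_left] at hφ ⊢
  refine ⟨(hφm 0).1, fun ψ₁ h₁ ψ₂ h₂ hseg => ?_⟩
  have key : ∀ n, ψ₁ (e n) = 1 ∧ ψ₂ (e n) = 1 := by
    intro n
    obtain ⟨s, t, hs, ht, hst, hφ'⟩ := hseg
    have h := (hφm n).2 n le_rfl
    rw [← hφ'] at h
    change (s : ℝ) • ψ₁ (e n) + (t : ℝ) • ψ₂ (e n) = 1 at h
    have n1 : ‖ψ₁ (e n)‖ ≤ 1 := (h₁.1 _).trans (he n)
    have n2 : ‖ψ₂ (e n)‖ ≤ 1 := (h₂.1 _).trans (he n)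
    have r1 := (Complex.re_le_norm _).trans n1
    have r2 := (Complex.re_le_norm _).trans n2
    have hre := congrArg Complex.re h
    simp only [Complex.add_re, Complex.real_smul, Complex.re_ofReal_mul, Complex.one_re] at hre
    have one : ∀ z : ℂ, ‖z‖ ≤ 1 → z.re = 1 → z = 1 := by
      intro z h1 h2
      have h3 := Complex.sq_norm z
      rw [Complex.normSq_apply, h2] at h3
      have h4 : z.im = 0 := by
        have : z.im * z.im ≤ 0 := by nlinarith [norm_nonneg z]
        nlinarith
      exact Complex.ext h2 h4
    exact ⟨one _ n1 (by nlinarith), one _ n2 (by nlinarith)⟩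
  exact hφ.2 ψ₁ (Set.mem_iInter.mpr fun n => ⟨h₁, fun m _ => (key m).1⟩)
    ψ₂ (Set.mem_iInter.mpr fun n => ⟨h₂, fun m _ => (key m).2⟩) hseg

/-- A cyclic representation whose vector state is pure is irreducible. Otherwise the cyclic vector
splits as `η = u + v` along an invariant subspace `T` and its complement with both parts nonzero,
and the vector state is a proper convex combination of those of the normalized parts. Purity forces
`u = ‖u‖² • η`, so that `η ∈ T` and `v = 0`. -/
lemma irreducible_of_pure (σ : A →⋆ₐ[ℂ] (H →L[ℂ] H)) {η : H} (hη : ‖η‖ = 1)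
    (hcyc : Dense (Set.range fun a => σ a η))
    (hext : vecState σ η ∈ (stateSet A).extremePoints ℝ) :
    ∀ T : Submodule ℂ H, IsClosed (T : Set H) →
        (∀ a : A, ∀ x ∈ T, σ a x ∈ T) → T = ⊥ ∨ T = ⊤ := by
  intro T hT hinv
  have : CompleteSpace T := hT.completeSpace_coe
  have top_of : ∀ S : Submodule ℂ H, IsClosed (S : Set H) →
      (∀ a : A, ∀ x ∈ S, σ a x ∈ S) → η ∈ S → S = ⊤ := by
    intro S hS hi hm
    have h1 : Set.range (fun a => σ a η) ⊆ (S : Set H) := by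
      rintro _ ⟨a, rfl⟩; exact hi a η hm
    have h2 := (hcyc.mono h1).closure_eq
    rw [hS.closure_eq] at h2
    exact SetLike.coe_injective h2
  have adj : ∀ a x y, inner ℂ x (σ a y) = inner ℂ (σ (star a) x) y := by
    intro a x y
    rw [map_star, ContinuousLinearMap.star_eq_adjoint, ContinuousLinearMap.adjoint_inner_left]
  have hinv' : ∀ a : A, ∀ x ∈ Tᗮ, σ a x ∈ Tᗮ := by
    intro a x hx
    rw [Submodule.mem_orthogonal] at hx ⊢
    intro y hy
    rw [adj]
    exact hx _ (hinv _ _ hy)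
  obtain ⟨u, hu, v, hv, huv⟩ := T.exists_add_mem_mem_orthogonal η
  by_cases hu0 : u = 0
  · left
    have : Tᗮ = ⊤ := top_of _ (Submodule.isClosed_orthogonal T) hinv'
      (by rw [huv, hu0]; simpa using hv)
    rwa [Submodule.orthogonal_eq_top_iff] at this
  by_cases hv0 : v = 0
  · right
    exact top_of _ hT hinv (by rw [huv, hv0]; simpa using hu)
  exfalso
  have c1 : ∀ a, inner ℂ u (σ a v) = 0 := fun a => (hinv' a v hv) u hu
  have c2 : ∀ a, inner ℂ v (σ a u) = 0 := fun a =>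
    Submodule.inner_left_of_mem_orthogonal (hinv a u hu) hv
  have hnu : ‖u‖ ≠ 0 := norm_ne_zero_iff.mpr hu0
  have hnv : ‖v‖ ≠ 0 := norm_ne_zero_iff.mpr hv0
  have unit : ∀ w : H, ‖w‖ ≠ 0 → ‖((‖w‖⁻¹ : ℝ) : ℂ) • w‖ = 1 := by
    intro w hw; rw [norm_smul]; simp [hw]
  have val : ∀ w : H, ‖w‖ ≠ 0 → ∀ a, inner ℂ w (σ a w) =
      ((‖w‖ ^ 2 : ℝ) : ℂ) * vecState σ (((‖w‖⁻¹ : ℝ) : ℂ) • w) a := by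
    intro w hw a
    have hw' : (‖w‖ : ℂ) ≠ 0 := by exact_mod_cast hw
    rw [vecState_apply, map_smul, inner_smul_left, inner_smul_right]
    simp only [Complex.conj_ofReal]
    push_cast
    field_simp
  have hsum : ‖u‖ ^ 2 + ‖v‖ ^ 2 = 1 := by
    have := norm_add_sq_eq_norm_sq_add_norm_sq_of_inner_eq_zero u v (hv u hu)
    rw [← huv, hη] at this
    nlinarith
  rw [mem_extremePoints_iff_left] at hext
  have heq := hext.2 _ (vecState_mem σ (unit u hnu)) _ (vecState_mem σ (unit v hnv))
    ⟨‖u‖ ^ 2, ‖v‖ ^ 2, by positivity, by positivity, hsum, by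
      refine DFunLike.ext _ _ fun a => ?_
      change (‖u‖ ^ 2 : ℝ) • vecState σ _ a + (‖v‖ ^ 2 : ℝ) • vecState σ _ a = vecState σ η a
      rw [Complex.real_smul, Complex.real_smul, ← val u hnu, ← val v hnv, vecState_apply, huv]
      simp [c1, c2]⟩
  -- hence `u = ‖u‖² η`
  have hpar : u - ((‖u‖ ^ 2 : ℝ) : ℂ) • η = 0 := by
    refine hcyc.eq_zero_of_inner_left (𝕜 := ℂ) ?_
    rintro _ ⟨a, rfl⟩
    have h1 : inner ℂ u (σ a η) = inner ℂ u (σ a u) := by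
      rw [huv, map_add, inner_add_right, c1, add_zero]
    simp only
    rw [inner_sub_left, inner_smul_left, h1, val u hnu, heq, vecState_apply]
    simp
  have hηT : η ∈ T := by
    have h1 : ((‖u‖ ^ 2 : ℝ) : ℂ) • η ∈ T := by
      rw [← sub_eq_zero.mp hpar]; exact hu
    refine (T.smul_mem_iff ?_).mp h1
    exact_mod_cast pow_ne_zero 2 hnu
  have hvT : v ∈ T := by
    have : v = η - u := by rw [huv]; abel
    rw [this]; exact T.sub_mem hηT hu
  exact hv0 (inner_self_eq_zero (𝕜 := ℂ) |>.mp (hv v hvT))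

end vec

/-- The GNS construction for a state, with its cyclic unit vector. -/
lemma exists_gns {φ : WeakDual ℂ A} (hφ : φ ∈ stateSet A) :
    ∃ (K : Type u) (_ : NormedAddCommGroup K) (_ : InnerProductSpace ℂ K) (_ : CompleteSpace K)
      (σ : A →⋆ₐ[ℂ] (K →L[ℂ] K)) (η : K), ‖η‖ = 1 ∧ Dense (Set.range fun a => σ a η) ∧
      vecState σ η = φ := by
  let _ : PartialOrder A := CStarAlgebra.spectralOrder A
  have _ : StarOrderedRing A := CStarAlgebra.spectralOrderedRing A
  let f : A →ₚ[ℂ] ℂ := PositiveLinearMap.mk₀ (φ : A →L[ℂ] ℂ).toLinearMap (by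
    intro x hx
    obtain ⟨y, rfl⟩ := CStarAlgebra.nonneg_iff_eq_star_mul_self.mp hx
    exact hφ.2.2 y)
  have hf : ∀ a, f a = φ a := fun a => rfl
  let η : f.GNS := ((f.toPreGNS 1 : f.PreGNS) : f.GNS)
  have hσ : ∀ a, f.gnsStarAlgHom a η = ((f.toPreGNS a : f.PreGNS) : f.GNS) := by
    intro a
    change f.gnsNonUnitalStarAlgHom a _ = _
    simp [η]
  have hvec : vecState f.gnsStarAlgHom η = φ := by
    refine DFunLike.ext _ _ fun a => ?_
    rw [vecState_apply, hσ, UniformSpace.Completion.inner_coe, PositiveLinearMap.preGNS_inner_def]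
    simp [hf]
  refine ⟨f.GNS, inferInstance, inferInstance, inferInstance, f.gnsStarAlgHom, η, ?_, ?_, hvec⟩
  · have h1 := congrArg (fun ψ : WeakDual ℂ A => ψ 1) hvec
    simp only [vecState_apply, map_one, one_apply_eq_self, hφ.2.1] at h1
    rw [@norm_eq_sqrt_re_inner ℂ, h1]
    simp
  · have : (Set.range fun a => f.gnsStarAlgHom a η) =
        Set.range ((↑) : f.PreGNS → f.GNS) := by
      simp only [hσ]
      exact f.toPreGNS.surjective.range_comp (fun x : f.PreGNS => (x : f.GNS))
    rw [this]
    exact UniformSpace.Completion.denseRange_coe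

/-- The equality case of the Cauchy–Schwarz inequality. -/
lemma fixed_of_inner_eq_one {H : Type*} [NormedAddCommGroup H] [InnerProductSpace ℂ H]
    {x y : H} (hx : ‖x‖ = 1) (hy : ‖y‖ ≤ 1) (h : inner ℂ x y = 1) : y = x := by
  have h1 : ‖y - x‖ ^ 2 ≤ 0 := by
    rw [norm_sub_sq (𝕜 := ℂ), ← inner_conj_symm, h, hx]
    simp
    nlinarith [norm_nonneg y]
  have h2 : ‖y - x‖ = 0 := by nlinarith [norm_nonneg (y - x)]
  exact sub_eq_zero.mp (norm_eq_zero.mp h2)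

/-- If all finite initial segments of the contractions `e n` have common fixed unit vectors in some
representation, then the whole sequence has one in an irreducible cyclic representation, namely the
GNS representation of the pure state of `exists_pure_state`. -/
lemma exists_irreducible (e : ℕ → A) (he : ∀ n, ‖e n‖ ≤ 1) {H : Type*} [NormedAddCommGroup H]
    [InnerProductSpace ℂ H] [CompleteSpace H] (π : A →⋆ₐ[ℂ] (H →L[ℂ] H))
    (hv : ∀ n, ∃ ξ : H, ‖ξ‖ = 1 ∧ ∀ m ≤ n, π (e m) ξ = ξ) :
    ∃ (K : Type u) (_ : NormedAddCommGroup K) (_ : InnerProductSpace ℂ K) (_ : CompleteSpace K)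
      (σ : A →⋆ₐ[ℂ] (K →L[ℂ] K)) (η : K), ‖η‖ = 1 ∧ (∀ n, σ (e n) η = η) ∧
      Dense (Set.range fun a => σ a η) ∧
      ∀ T : Submodule ℂ K, IsClosed (T : Set K) →
        (∀ a : A, ∀ x ∈ T, σ a x ∈ T) → T = ⊥ ∨ T = ⊤ := by
  obtain ⟨φ, hφ, hφe⟩ := exists_pure_state e he π hv
  obtain ⟨K, _, _, _, σ, η, hη, hcyc, hvec⟩ := exists_gns hφ.1
  refine ⟨K, _, _, inferInstance, σ, η, hη, fun n => ?_, hcyc,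
    irreducible_of_pure σ hη hcyc (hvec ▸ hφ)⟩
  refine fixed_of_inner_eq_one hη ?_ ?_
  · refine ((σ (e n)).le_opNorm η).trans ?_
    rw [hη, mul_one]
    exact (NonUnitalStarAlgHom.norm_apply_le σ _).trans (he n)
  · rw [← vecState_apply, hvec, hφe]
end Pure

/-! ### Primeness and the tree -/

section Tree
variable {A : Type*} [CStarAlgebra A]

/-- An algebra with a faithful irreducible representation is prime: the closure of `π A (π b v)`
is invariant, hence everything when `π b v ≠ 0`, and `π a` cannot vanish on it. -/
lemma prime_of_irreducible {H : Type*} [NormedAddCommGroup H] [InnerProductSpace ℂ H]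
    [CompleteSpace H] (π : A →⋆ₐ[ℂ] (H →L[ℂ] H)) (hπ : Function.Injective π)
    (hirr : ∀ S : Submodule ℂ H, IsClosed (S : Set H) →
        (∀ a : A, ∀ x ∈ S, π a x ∈ S) → S = ⊥ ∨ S = ⊤)
    {a b : A} (ha : a ≠ 0) (hb : b ≠ 0) : ∃ x, a * x * b ≠ 0 := by
  by_contra! hab
  have hne : ∀ c : A, c ≠ 0 → ∃ v, π c v ≠ 0 := by
    intro c hc
    by_contra! h
    exact hc (hπ (by rw [map_zero]; exact ContinuousLinearMap.ext h))
  obtain ⟨v, hv⟩ := hne b hb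
  obtain ⟨w, hw⟩ := hne a ha
  let ev : A →ₗ[ℂ] H :=
    { toFun := fun x => π x (π b v), map_add' := by simp, map_smul' := by simp }
  have hmem : π b v ∈ (LinearMap.range ev).topologicalClosure :=
    Submodule.le_topologicalClosure _ ⟨1, by simp [ev]⟩
  have hker : (LinearMap.range ev).topologicalClosure ≤ LinearMap.ker (π a : H →ₗ[ℂ] H) := by
    refine Submodule.topologicalClosure_minimal _ ?_ (π a).isClosed_ker
    intro z hz
    obtain ⟨x, rfl⟩ : ∃ x, ev x = z := hz
    have := congrArg (fun c => π c v) (hab x)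
    simpa [ev] using this
  rcases hirr _ (Submodule.isClosed_topologicalClosure _) (by
    intro c x hx
    refine map_mem_closure (s := ((LinearMap.range ev : Submodule ℂ H) : Set H))
      (t := ((LinearMap.range ev : Submodule ℂ H) : Set H)) (π c).continuous hx ?_
    intro z hz
    obtain ⟨y, rfl⟩ : ∃ y, ev y = z := hz
    exact ⟨c * y, by simp [ev]⟩) with h | h
  · rw [h, Submodule.mem_bot] at hmem
    exact hv hmem
  · rw [h] at hker
    exact hw (hker (Submodule.mem_top (x := w)))

/-- A node of the tree: a pair `(e, d)` with `e` a self-adjoint contraction acting as a left unit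
on a nonzero element `d`. The element `d` witnesses that `e` has fixed vectors in every faithful
representation. -/
def IsNode (q : A × A) : Prop :=
  IsSelfAdjoint q.1 ∧ ‖q.1‖ ≤ 1 ∧ q.1 * q.2 = q.2 ∧ q.2 ≠ 0

/-- A node has two orthogonal children on which it acts as a unit, and whose first components lie
in the two-sided ideal generated by a prescribed nonzero `b`. They are obtained by splitting
`y * star y` for `y = q.2 * x * b`, with `x` provided by primeness. -/
lemma exists_children
    (hprime : ∀ a b : A, a ≠ 0 → b ≠ 0 → ∃ x, a * x * b ≠ 0)
    (hsplit : ∀ c : A, IsSelfAdjoint c → c ≠ 0 → ∃ e d : Bool → A, (∀ i, IsNode (e i, d i)) ∧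
      e false * e true = 0 ∧ ∀ i, ∃ y, e i = c * y)
    {b : A} (hb : b ≠ 0) {q : A × A} (hq : IsNode q) :
    ∃ r : Bool → A × A, (∀ i, IsNode (r i)) ∧ (r false).1 * (r true).1 = 0 ∧
      (∀ i, q.1 * (r i).1 = (r i).1) ∧ ∀ i, ∃ u w, (r i).1 = u * b * w := by
  obtain ⟨x, hx⟩ := hprime q.2 b hq.2.2.2 hb
  obtain ⟨e, d, h1, h2, h3⟩ := hsplit (q.2 * x * b * star (q.2 * x * b))
    (IsSelfAdjoint.mul_star_self _) ((CStarRing.mul_star_self_ne_zero_iff _).mpr hx)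
  refine ⟨fun i => (e i, d i), h1, h2, fun i => ?_, fun i => ?_⟩
  · obtain ⟨y, hy⟩ := h3 i
    change q.1 * e i = e i
    rw [hy]
    simp only [← mul_assoc, hq.2.2.1]
  · obtain ⟨y, hy⟩ := h3 i
    refine ⟨q.2 * x, star (q.2 * x * b) * y, ?_⟩
    change e i = _
    rw [hy]
    simp only [← mul_assoc]

/-- Iterating `exists_children` gives a binary tree of nodes: along a path each first component acts
as a unit on the next one, the nodes at level `n + 1` lie in the ideal of `b n`, and distinct paths
eventually carry orthogonal nodes. -/
lemma exists_tree [Nontrivial A]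
    (hprime : ∀ a b : A, a ≠ 0 → b ≠ 0 → ∃ x, a * x * b ≠ 0)
    (hsplit : ∀ c : A, IsSelfAdjoint c → c ≠ 0 → ∃ e d : Bool → A, (∀ i, IsNode (e i, d i)) ∧
      e false * e true = 0 ∧ ∀ i, ∃ y, e i = c * y)
    (b : ℕ → A) (hb : ∀ n, b n ≠ 0) :
    ∃ N : (ℕ → Bool) → ℕ → A × A, (∀ x n, IsNode (N x n)) ∧
      (∀ x n, (N x n).1 * (N x (n + 1)).1 = (N x (n + 1)).1) ∧
      (∀ x n, ∃ u w, (N x (n + 1)).1 = u * b n * w) ∧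
      ∀ x y, x ≠ y → ∃ n, (N x n).1 * (N y n).1 = 0 := by
  choose r r1 r2 r3 r4 using fun (n : ℕ) (q : {q : A × A // IsNode q}) =>
    exists_children hprime hsplit (hb n) q.2
  let root : {q : A × A // IsNode q} := ⟨(1, 1), IsSelfAdjoint.one A, by simp, by simp, by simp⟩
  let N : (ℕ → Bool) → ℕ → {q : A × A // IsNode q} := fun x n =>
    Nat.rec root (fun n q => ⟨r n q (x n), r1 n q (x n)⟩) n
  have hN : ∀ x n, (N x (n + 1)).1 = r n (N x n) (x n) := fun x n => rfl
  have hloc : ∀ x y n, (∀ m < n, x m = y m) → N x n = N y n := by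
    intro x y n
    induction n with
    | zero => exact fun _ => rfl
    | succ n ih =>
      intro h
      apply Subtype.ext
      rw [hN, hN, ih fun m hm => h m (by omega), h n (by omega)]
  refine ⟨fun x n => (N x n).1, fun x n => (N x n).2, fun x n => ?_, fun x n => ?_,
    fun x y hxy => ?_⟩
  · simp only [hN]; exact r3 _ _ _
  · simp only [hN]; exact r4 _ _ _
  · classical
    have hex : ∃ n, x n ≠ y n := Function.ne_iff.mp hxy
    have hn := Nat.find_spec hex
    have hlt : ∀ m < Nat.find hex, x m = y m := fun m hm => not_not.mp (Nat.find_min hex hm)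
    refine ⟨Nat.find hex + 1, ?_⟩
    simp only [hN, hloc x y _ hlt]
    have h0 := r2 (Nat.find hex) (N y (Nat.find hex))
    have h1 := congrArg star h0
    rw [star_mul, star_zero, (r1 _ _ _).1.star_eq, (r1 _ _ _).1.star_eq] at h1
    revert hn
    cases x (Nat.find hex) <;> cases y (Nat.find hex) <;> simp [h0, h1]

end Tree

/-! ### Representations on `ℓ²(ℕ, ℂ)` and counting -/

section Rep
universe u

/-- The balls of radius `1 / 2` around orthonormal vectors are disjoint, so there are at most
countably many of them in a separable space. -/
lemma countable_of_orthonormal {K ι : Type*} [NormedAddCommGroup K] [InnerProductSpace ℂ K]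
    [TopologicalSpace.SeparableSpace K] {v : ι → K} (hv : Orthonormal ℂ v) : Countable ι := by
  refine Pairwise.countable_of_isOpen_disjoint (s := fun i => Metric.ball (v i) (1 / 2)) ?_
    (fun i => Metric.isOpen_ball) (fun i => ⟨v i, by simp⟩)
  intro i j hij
  refine Metric.ball_disjoint_ball ?_
  have h : ‖v i - v j‖ ^ 2 = 2 := by
    rw [norm_sub_sq (𝕜 := ℂ), hv.2 hij, hv.1, hv.1]
    norm_num
  rw [dist_eq_norm]
  nlinarith [norm_nonneg (v i - v j)]

lemma nonempty_equiv_l2 {K : Type*} [NormedAddCommGroup K] [InnerProductSpace ℂ K]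
    [CompleteSpace K] [TopologicalSpace.SeparableSpace K] (hK : ¬ FiniteDimensional ℂ K) :
    Nonempty (K ≃ₗᵢ[ℂ] l2NC) := by
  obtain ⟨w, B, hB⟩ := exists_hilbertBasis ℂ K
  have ho : Orthonormal ℂ ((↑) : w → K) := hB ▸ B.orthonormal
  have hinf : Infinite w := by
    by_contra h
    rw [not_infinite_iff_finite] at h
    have := Fintype.ofFinite w
    exact hK (Module.Finite.of_basis B.toOrthonormalBasis.toBasis)
  have hc : Countable w := countable_of_orthonormal ho
  obtain ⟨f⟩ := nonempty_equiv_of_countable (α := ℕ) (β := w)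
  let B' : HilbertBasis ℕ ℂ K := HilbertBasis.mk (v := fun n => (f n : K))
    (ho.comp f f.injective) (by
      have h := B.dense_span
      rw [hB] at h
      have : Set.range (fun n => (f n : K)) = Set.range ((↑) : w → K) :=
        f.surjective.range_comp ((↑) : w → K)
      rw [this, h])
  exact ⟨B'.repr⟩

/-- The representation attached to a path `e`: the irreducible representation of
`exists_irreducible`, moved to `ℓ²(ℕ, ℂ)`. The vector fixed by all `e n` shows that no `b n` is
killed, since `e (n + 1)` lies in the ideal of `b n`; hence the representation is faithful. -/
lemma exists_rep_l2 {A : Type u} [CStarAlgebra A] [TopologicalSpace.SeparableSpace A]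
    (hdim : ¬ FiniteDimensional ℂ A) (e : ℕ → A) (he : ∀ n, ‖e n‖ ≤ 1)
    {H : Type*} [NormedAddCommGroup H]
    [InnerProductSpace ℂ H] [CompleteSpace H] (π : A →⋆ₐ[ℂ] (H →L[ℂ] H))
    (hv : ∀ n, ∃ ξ : H, ‖ξ‖ = 1 ∧ ∀ m ≤ n, π (e m) ξ = ξ)
    (b : ℕ → A) (heb : ∀ n, ∃ u w, e (n + 1) = u * b n * w)
    (hb : ∀ (K : Type u) [NormedAddCommGroup K] [InnerProductSpace ℂ K]
      [CompleteSpace K] (σ : A →⋆ₐ[ℂ] (K →L[ℂ] K)), (∀ n, σ (b n) ≠ 0) → Function.Injective σ) :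
    ∃ (ρ : A →⋆ₐ[ℂ] (l2NC →L[ℂ] l2NC)) (η : l2NC), Function.Injective ρ ∧
      (∀ T : Submodule ℂ l2NC, IsClosed (T : Set l2NC) →
          (∀ a : A, ∀ x ∈ T, ρ a x ∈ T) → T = ⊥ ∨ T = ⊤) ∧
      ‖η‖ = 1 ∧ ∀ n, ρ (e n) η = η := by
  obtain ⟨K, _, _, _, σ, η, hη, hfix, hcyc, hirr⟩ := exists_irreducible e he π hv
  have hη0 : η ≠ 0 := by rintro rfl; simp at hη
  have hinj : Function.Injective σ := by
    refine hb K σ fun n h0 => ?_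
    obtain ⟨u, w, huw⟩ := heb n
    apply hη0
    rw [← hfix (n + 1), huw, map_mul, map_mul, h0]
    simp
  have hcont : Continuous fun a => σ a η := by
    have h := NonUnitalStarAlgHom.instContinuousLinearMapClassComplex.map_continuous σ
    exact (ContinuousLinearMap.apply ℂ K η).continuous.comp h
  have hsep : TopologicalSpace.SeparableSpace K := DenseRange.separableSpace hcyc hcont
  have hK : ¬ FiniteDimensional ℂ K := fun hK => hdim <|
    FiniteDimensional.of_injective
      ((ContinuousLinearMap.coeLM ℂ).comp (σ.toAlgHom.toLinearMap) : A →ₗ[ℂ] (K →ₗ[ℂ] K))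
      fun a c hac => hinj (ContinuousLinearMap.coe_injective hac)
  obtain ⟨V⟩ := nonempty_equiv_l2 hK
  let ρ : A →⋆ₐ[ℂ] (l2NC →L[ℂ] l2NC) := (StarAlgEquiv.toStarAlgHom V.conjStarAlgEquiv).comp σ
  have hρ : ∀ a x, ρ a x = V (σ a (V.symm x)) := fun a x => rfl
  refine ⟨ρ, V η, fun a c hac => hinj (ContinuousLinearMap.ext fun x => ?_), fun T hT hinv => ?_,
    by rw [V.norm_map, hη], fun n => by rw [hρ, V.symm_apply_apply, hfix]⟩
  · have h := congrArg (fun S : l2NC →L[ℂ] l2NC => S (V x)) hac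
    simpa [hρ] using h
  · have h := hirr (T.comap (V.toLinearEquiv : K →ₗ[ℂ] l2NC)) (hT.preimage V.continuous)
      fun a x hx => by
        have h1 := hinv a (V x) hx
        rw [hρ, V.symm_apply_apply] at h1
        exact h1
    rcases h with h | h
    · left
      rw [Submodule.eq_bot_iff] at h ⊢
      intro x hx
      have h1 := h (V.symm x) (by
        change V (V.symm x) ∈ T
        rwa [V.apply_symm_apply])
      simpa using h1
    · right
      rw [Submodule.eq_top_iff'] at h ⊢
      intro x
      have h1 : V (V.symm x) ∈ T := h (V.symm x)
      rwa [V.apply_symm_apply] at h1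

/-- In a single representation on `ℓ²(ℕ, ℂ)`, only countably many paths of the tree can have a
fixed unit vector, because vectors fixed along distinct paths are orthogonal. -/
lemma countable_class {A : Type*} [CStarAlgebra A] (N : (ℕ → Bool) → ℕ → A)
    (hN : ∀ x n, IsSelfAdjoint (N x n)) (horth : ∀ x y, x ≠ y → ∃ n, N x n * N y n = 0)
    (ρ : A →⋆ₐ[ℂ] (l2NC →L[ℂ] l2NC)) (C : Set (ℕ → Bool))
    (hC : ∀ x ∈ C, ∃ ζ : l2NC, ‖ζ‖ = 1 ∧ ∀ n, ρ (N x n) ζ = ζ) : C.Countable := by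
  have hsep : TopologicalSpace.SeparableSpace l2NC := by
    let B : HilbertBasis ℕ ℂ l2NC := HilbertBasis.ofRepr (LinearIsometryEquiv.refl ℂ _)
    have h := (Set.countable_range B).isSeparable.span (R := ℂ) |>.closure
    rw [← Submodule.topologicalClosure_coe, B.dense_span, Submodule.top_coe] at h
    exact TopologicalSpace.isSeparable_univ_iff.mp h
  choose! ζ h1 h2 using hC
  refine countable_of_orthonormal (v := fun x : C => ζ x) ⟨fun x => h1 x x.2, fun x y hxy => ?_⟩
  obtain ⟨n, hn⟩ := horth x y (fun h => hxy (Subtype.ext h))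
  change inner ℂ (ζ x) (ζ y) = 0
  have e : ρ (N x n) = star (ρ (N x n)) := by rw [← map_star, (hN _ _).star_eq]
  rw [← h2 x x.2 n, ← h2 y y.2 n, e, ContinuousLinearMap.star_eq_adjoint,
    ContinuousLinearMap.adjoint_inner_left, ← mul_apply_eq_comp, ← map_mul, hn]
  simp

/-- Counting: a unitary equivalence carries the fixed vector of one path to a vector fixed along
the same path, so by `countable_class` every equivalence class of representations comes from
countably many paths. As there are uncountably many paths, a system of representatives of the
classes is uncountable. -/
lemma exists_set (A : Type*) [CStarAlgebra A] (N : (ℕ → Bool) → ℕ → A)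
    (hN : ∀ x n, IsSelfAdjoint (N x n)) (horth : ∀ x y, x ≠ y → ∃ n, N x n * N y n = 0)
    (P : (A →⋆ₐ[ℂ] (l2NC →L[ℂ] l2NC)) → Prop)
    (hP : ∀ x, ∃ ρ, P ρ ∧ ∃ ζ : l2NC, ‖ζ‖ = 1 ∧ ∀ n, ρ (N x n) ζ = ζ) :
    ∃ S : Set (A →⋆ₐ[ℂ] (l2NC →L[ℂ] l2NC)), ¬ S.Countable ∧ (∀ π ∈ S, P π) ∧
      (∀ π ∈ S, ∀ ρ ∈ S, π ≠ ρ →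
        ¬ ∃ U : l2NC ≃ₗᵢ[ℂ] l2NC, ∀ (a : A) (x : l2NC), U (π a x) = ρ a (U x)) := by
  choose ρ hρ ζ hζ hfix using hP
  let R : Setoid (ℕ → Bool) :=
    { r := fun x y => ∃ U : l2NC ≃ₗᵢ[ℂ] l2NC, ∀ (a : A) (v : l2NC), U (ρ x a v) = ρ y a (U v)
      iseqv :=
        { refl := fun x => ⟨LinearIsometryEquiv.refl ℂ _, fun a v => rfl⟩
          symm := by
            rintro x y ⟨U, hU⟩
            refine ⟨U.symm, fun a v => ?_⟩
            rw [U.symm_apply_eq, hU, U.apply_symm_apply]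
          trans := by
            rintro x y z ⟨U, hU⟩ ⟨V, hV⟩
            refine ⟨U.trans V, fun a v => ?_⟩
            simp [hU, hV] } }
  refine ⟨Set.range fun q : Quotient R => ρ q.out, fun hS => ?_, ?_, ?_⟩
  · have hcl : ∀ q : Quotient R, {x | Quotient.mk R x = q}.Countable := by
      intro q
      refine countable_class N hN horth (ρ q.out) _ fun x hx => ?_
      obtain ⟨U, hU⟩ : R x q.out := Quotient.exact (by rw [Quotient.out_eq]; exact hx)
      refine ⟨U (ζ x), by rw [U.norm_map, hζ], fun n => ?_⟩
      rw [← hU, hfix]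
    have hinj : Function.Injective fun q : Quotient R => ρ q.out := by
      intro q q' h
      have h' : ρ q.out = ρ q'.out := h
      refine Quotient.out_equiv_out.mp ?_
      exact ⟨LinearIsometryEquiv.refl ℂ _, fun a v => by simp [h']⟩
    have hQ : Countable (Quotient R) := by
      rw [← Set.countable_univ_iff]
      exact Set.countable_of_injective_of_countable_image hinj.injOn (by rwa [Set.image_univ])
    have hall : (⋃ q : Quotient R, {x | Quotient.mk R x = q}).Countable := Set.countable_iUnion hcl
    have huniv : (⋃ q : Quotient R, {x | Quotient.mk R x = q}) = Set.univ := by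
      ext x; simp
    rw [huniv, Set.countable_univ_iff] at hall
    have hcard := Cardinal.mk_le_aleph0_iff.mpr hall
    rw [← Cardinal.power_def, Cardinal.mk_bool, Cardinal.mk_nat, Cardinal.two_power_aleph0] at hcard
    exact absurd hcard (not_le.mpr Cardinal.aleph0_lt_continuum)
  · rintro _ ⟨q, rfl⟩
    exact hρ _
  · rintro _ ⟨q, rfl⟩ _ ⟨q', rfl⟩ hne hU
    apply hne
    have : q = q' := Quotient.out_equiv_out.mp hU
    rw [this]

end Rep

/-! ### Splitting and fixed vectors in the given representation -/

section Assemble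
variable {A : Type*} [CStarAlgebra A]

/-- In the absence of minimal projections, a nonzero self-adjoint `c` gives rise to two orthogonal
nodes in the right ideal it generates: some self-adjoint `c * z * c` has two distinct nonzero
spectral values, by `exists_minimal_projection` and `cfc_zero_points`. -/
lemma exists_split {c : A} (hc : IsSelfAdjoint c) (hc0 : c ≠ 0)
    (hmin : ∀ p : A, p ≠ 0 → IsSelfAdjoint p → p * p = p →
      (∀ a : A, ∃ z : ℂ, p * a * p = z • p) → False) :
    ∃ e d : Bool → A, (∀ i, IsNode (e i, d i)) ∧ e false * e true = 0 ∧
      ∀ i, ∃ y, e i = c * y := by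
  by_cases H : ∀ z : A, IsSelfAdjoint (c * z * c) →
      ∃ μ : ℝ, (c * z * c) * (c * z * c) = μ • (c * z * c)
  · obtain ⟨p, h1, h2, h3, h4⟩ := exists_minimal_projection hc hc0 H
    exact (hmin p h1 h2 h3 h4).elim
  push Not at H
  obtain ⟨z, hz, hne⟩ := H
  have hspec : ∃ l ∈ spectrum ℝ (c * z * c), ∃ m ∈ spectrum ℝ (c * z * c),
      l ≠ 0 ∧ m ≠ 0 ∧ l ≠ m := by
    by_contra h
    obtain ⟨μ, hμ⟩ := cfc_zero_points _ hz h
    exact hne μ hμ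
  obtain ⟨l, hl, m, hm, hl0, hm0, hlm⟩ := hspec
  obtain ⟨e, d, h1, h2, h3, h4, h5, h6⟩ := split_of_spectrum _ hz hl hm hl0 hm0 hlm
  refine ⟨e, d, fun i => ⟨h1 i, h2 i, h4 i, h3 i⟩, h5, fun i => ?_⟩
  obtain ⟨y, hy⟩ := h6 i
  exact ⟨z * c * y, by rw [hy]; simp only [mul_assoc]⟩

/-- Along a path of nodes, a unit vector in the range of `π (N n).2` is fixed by all the first
components up to level `n`. -/
lemma exists_fixed_vectors {H : Type*} [NormedAddCommGroup H] [InnerProductSpace ℂ H]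
    [CompleteSpace H] (π : A →⋆ₐ[ℂ] (H →L[ℂ] H)) (hπ : Function.Injective π)
    (N : ℕ → A × A) (hN : ∀ n, IsNode (N n))
    (hnest : ∀ n, (N n).1 * (N (n + 1)).1 = (N (n + 1)).1) (n : ℕ) :
    ∃ ξ : H, ‖ξ‖ = 1 ∧ ∀ m ≤ n, π (N m).1 ξ = ξ := by
  have hne : π (N n).2 ≠ 0 := fun h => (hN n).2.2.2 (hπ (by rw [h, map_zero]))
  obtain ⟨v, hv⟩ : ∃ v, π (N n).2 v ≠ 0 := by
    by_contra! h
    exact hne (ContinuousLinearMap.ext h)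
  have hv' : ‖π (N n).2 v‖ ≠ 0 := norm_ne_zero_iff.mpr hv
  refine ⟨((‖π (N n).2 v‖⁻¹ : ℝ) : ℂ) • π (N n).2 v, ?_, fun m hm => ?_⟩
  · rw [norm_smul]; simp [hv']
  · have hmul : (N m).1 * (N n).2 = (N n).2 := by
      have hchain : ∀ k, m ≤ k → (N m).1 * (N k).2 = (N k).2 := by
        intro k hk
        obtain rfl | hlt := hk.eq_or_lt
        · exact (hN m).2.2.1
        · have h : ∀ j, m + 1 ≤ j → (N m).1 * (N j).1 = (N j).1 := by
            intro j hj
            induction j, hj using Nat.le_induction with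
            | base => exact hnest m
            | succ j _ ih => rw [← hnest j, ← mul_assoc, ih]
          rw [← (hN k).2.2.1, ← mul_assoc, h k hlt]
      exact hchain n hm
    rw [map_smul, ← mul_apply_eq_comp, ← map_mul, hmul]

end Assemble

/-- Let `A` be a unital separable infinite-dimensional C*-algebra admitting a faithful
tracial state and at least one faithful irreducible representation. Then `A` has an
uncountable family of pairwise inequivalent, faithful irreducible representations
on `ℓ²(ℕ, ℂ)`. -/
theorem uncountably_many_reps_of_faithful_trace
    {A : Type*} [NormedRing A] [StarRing A] [CStarRing A] [NormedAlgebra ℂ A]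
    [StarModule ℂ A] [CompleteSpace A] [TopologicalSpace.SeparableSpace A]
    (hdim : ¬ FiniteDimensional ℂ A)
    (htrace : ∃ τ : A →ₗ[ℂ] ℂ, τ 1 = 1 ∧
      (∀ a : A, ∃ r : ℝ, 0 ≤ r ∧ τ (star a * a) = (r : ℂ)) ∧
      (∀ a b : A, τ (a * b) = τ (b * a)) ∧
      (∀ a : A, τ (star a * a) = 0 → a = 0))
    (hex : ∃ (H : Type) (_ : NormedAddCommGroup H) (_ : InnerProductSpace ℂ H)
        (_ : CompleteSpace H) (π : A →⋆ₐ[ℂ] (H →L[ℂ] H)),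
      Function.Injective π ∧
      (∀ S : Submodule ℂ H, IsClosed (S : Set H) →
        (∀ a : A, ∀ x ∈ S, π a x ∈ S) → S = ⊥ ∨ S = ⊤)) :
    ∃ S : Set (A →⋆ₐ[ℂ] (l2NC →L[ℂ] l2NC)),
      ¬ S.Countable ∧
      (∀ π ∈ S, Function.Injective π ∧
        (∀ T : Submodule ℂ l2NC, IsClosed (T : Set l2NC) →
          (∀ a : A, ∀ x ∈ T, π a x ∈ T) → T = ⊥ ∨ T = ⊤)) ∧
      (∀ π ∈ S, ∀ ρ ∈ S, π ≠ ρ →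
        ¬ ∃ U : l2NC ≃ₗᵢ[ℂ] l2NC, ∀ (a : A) (x : l2NC), U (π a x) = ρ a (U x)) := by
  let _ : CStarAlgebra A := {}
  obtain ⟨τ, τ1, τpos, τtr, τf⟩ := htrace
  obtain ⟨H, _, _, _, π, hπ, hirr⟩ := hex
  have hnt : Nontrivial A := by
    by_contra h
    rw [not_nontrivial_iff_subsingleton] at h
    exact hdim inferInstance
  have hsplit : ∀ c : A, IsSelfAdjoint c → c ≠ 0 → ∃ e d : Bool → A,
      (∀ i, IsNode (e i, d i)) ∧ e false * e true = 0 ∧ ∀ i, ∃ y, e i = c * y :=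
    fun c hc hc0 => exists_split hc hc0 fun p hp0 hps hpp hmin =>
      no_minimal_projection π hπ hirr hdim τ τ1 τpos τtr τf hp0 hps hpp hmin
  obtain ⟨b, hb0, hb⟩ := exists_detecting_sequence A
  obtain ⟨N, hN, hnest, hNb, horth⟩ := exists_tree
    (fun a b ha hb => prime_of_irreducible π hπ hirr ha hb) hsplit b hb0
  refine exists_set A (fun x n => (N x n).1) (fun x n => (hN x n).1) horth _ fun x => ?_
  obtain ⟨ρ, η, h1, h2, h3, h4⟩ := exists_rep_l2 hdim (fun n => (N x n).1) (fun n => (hN x n).2.1) π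
    (exists_fixed_vectors π hπ (N x) (hN x) (hnest x)) b (hNb x) hb
  exact ⟨ρ, ⟨h1, h2⟩, η, h3, h4⟩
end

section
/- Let A be a unital separable C*-algebra that is infinite-dimensional as a complex vector space, whose only projections are 0 and 1 (every p ∈ A with p = p* = p² satisfies p = 0 or p = 1), and which admits at least one faithful irreducible representation on some complex Hilbert space. Then there exists an uncountable set S of representations of A on ℓ²(ℕ, ℂ) such that every member of S is faithful and irreducible, and no two distinct members of S are unitarily equivalent. -/
namespace UncountablyManyReps

open scoped InnerProductSpace Topology

/-! ### Irreducible representations: commutant and compressions -/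

section Irreducible

variable {A : Type*} [CStarAlgebra A]
variable {H : Type*} [NormedAddCommGroup H] [InnerProductSpace ℂ H] [CompleteSpace H]

/-- Topological irreducibility: the only closed invariant subspaces are `⊥` and `⊤`. -/
def IsIrreducibleRep (π : A →⋆ₐ[ℂ] (H →L[ℂ] H)) : Prop :=
  ∀ S : Submodule ℂ H, IsClosed (S : Set H) →
    (∀ a : A, ∀ x ∈ S, π a x ∈ S) → S = ⊥ ∨ S = ⊤

/-- The self-adjoint case of Schur's lemma: two points of the spectrum of `T` would give nonzero
commuting functions of `T` with product zero, and the kernel of one of them is invariant. -/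
lemma schur_selfAdjoint {π : A →⋆ₐ[ℂ] (H →L[ℂ] H)} (hπ : IsIrreducibleRep π)
    {T : H →L[ℂ] H} (hT : IsSelfAdjoint T) (hc : ∀ a, Commute T (π a)) :
    ∃ c : ℂ, T = c • (1 : H →L[ℂ] H) := by
  have key : (spectrum ℝ T).Subsingleton := by
    have main : ∀ s ∈ spectrum ℝ T, ∀ t ∈ spectrum ℝ T, ¬ s < t := by
      intro s hs t ht hst
      set m := (s + t) / 2 with hm
      set f : ℝ → ℝ := fun x => max (x - m) 0 with hf
      set g : ℝ → ℝ := fun x => max (m - x) 0 with hg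
      have hfc : Continuous f := by fun_prop
      have hgc : Continuous g := by fun_prop
      have hfg : cfc f T * cfc g T = 0 := by
        rw [← cfc_mul f g T hfc.continuousOn hgc.continuousOn]
        have : (fun x => f x * g x) = fun _ => (0 : ℝ) := by
          funext x
          rcases le_total x m with h | h
          · simp [hf, max_eq_right (sub_nonpos.2 h)]
          · simp [hg, max_eq_right (sub_nonpos.2 h)]
        rw [this]
        rw [cfc_const (0 : ℝ) T hT, map_zero]
      have hnz : ∀ h : ℝ → ℝ, Continuous h → ∀ x ∈ spectrum ℝ T, h x ≠ 0 → cfc h T ≠ 0 := by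
        intro h hh x hx hx0 h0
        have h1 : cfc h T = cfc (fun _ => (0 : ℝ)) T := by
          rw [h0, cfc_const (0 : ℝ) T hT, map_zero]
        exact hx0 (eqOn_of_cfc_eq_cfc h1 hh.continuousOn continuousOn_const hT hx)
      have hf0 : cfc f T ≠ 0 := hnz f hfc t ht (by
        have : 0 < t - m := by rw [hm]; linarith
        simp [hf, max_eq_left this.le, this.ne'])
      have hg0 : cfc g T ≠ 0 := hnz g hgc s hs (by
        have : 0 < m - s := by rw [hm]; linarith
        simp [hg, max_eq_left this.le, this.ne'])
      have hcf : ∀ a, Commute (cfc f T) (π a) := fun a => (hc a).cfc_real f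
      rcases hπ (cfc f T).ker ((cfc f T).isClosed_ker) (by
        intro a x hx
        have := congrArg (fun S : H →L[ℂ] H => S x) (hcf a).eq
        simp only [ContinuousLinearMap.mul_def, ContinuousLinearMap.comp_apply] at this
        simp only [LinearMap.mem_ker, ContinuousLinearMap.coe_coe] at hx ⊢
        rw [this, hx, map_zero]) with h | h
      · apply hg0
        ext x
        have hx : cfc g T x ∈ (cfc f T).ker := by
          have := congrArg (fun S : H →L[ℂ] H => S x) hfg
          simpa using this
        rw [h] at hx
        simpa using hx
      · apply hf0
        ext x
        have hx : x ∈ (cfc f T).ker := by rw [h]; trivial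
        simpa using hx
    intro s hs t ht
    exact le_antisymm (not_lt.1 (main t ht s hs)) (not_lt.1 (main s hs t ht))
  obtain ⟨r, hr⟩ : ∃ r, spectrum ℝ T ⊆ {r} := by
    rcases key.eq_empty_or_singleton with h | ⟨r, h⟩
    · exact ⟨0, by simp [h]⟩
    · exact ⟨r, h.le⟩
  refine ⟨(r : ℂ), ?_⟩
  rw [CFC.eq_algebraMap_of_spectrum_subset_singleton T r hr hT]
  ext x
  simp [Algebra.algebraMap_eq_smul_one]

/-- The commutant of an irreducible representation consists of scalars. -/
lemma schur {π : A →⋆ₐ[ℂ] (H →L[ℂ] H)} (hπ : IsIrreducibleRep π)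
    {T : H →L[ℂ] H} (hc : ∀ a, Commute T (π a)) :
    ∃ c : ℂ, T = c • (1 : H →L[ℂ] H) := by
  have hc' : ∀ a, Commute (star T) (π a) := by
    intro a
    have := (hc (star a)).star_star
    simpa [map_star] using this
  obtain ⟨c, h1⟩ := schur_selfAdjoint hπ (realPart T).2 (fun a => by
    rw [realPart_apply_coe]
    exact ((hc a).add_left (hc' a)).smul_left _)
  obtain ⟨d, h2⟩ := schur_selfAdjoint hπ (imaginaryPart T).2 (fun a => by
    rw [imaginaryPart_apply_coe]
    exact (((hc a).sub_left (hc' a)).smul_left _).smul_left _)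
  refine ⟨c + Complex.I * d, ?_⟩
  conv_lhs => rw [← realPart_add_I_smul_imaginaryPart T, h1, h2]
  rw [add_smul, mul_smul]

/-- The two-vector case of von Neumann's density theorem, in dual form. -/
lemma two_vector_annihilator {π : A →⋆ₐ[ℂ] (H →L[ℂ] H)} (hπ : IsIrreducibleRep π)
    {η β α ζ : H} (h : ∀ x : A, ⟪α, π x η⟫_ℂ + ⟪ζ, π x β⟫_ℂ = 0) (y : H →L[ℂ] H) :
    ⟪α, y η⟫_ℂ + ⟪ζ, y β⟫_ℂ = 0 := by
  let E := WithLp 2 (H × H)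
  let e : E ≃L[ℂ] H × H := WithLp.prodContinuousLinearEquiv 2 ℂ H H
  have he : ∀ p : H × H, e.symm p = WithLp.toLp 2 p := fun p => rfl
  let i₁ : H →L[ℂ] E := e.symm.toContinuousLinearMap ∘L ContinuousLinearMap.inl ℂ H H
  let i₂ : H →L[ℂ] E := e.symm.toContinuousLinearMap ∘L ContinuousLinearMap.inr ℂ H H
  let p₁ : E →L[ℂ] H := WithLp.fstL 2 ℂ H H
  let p₂ : E →L[ℂ] H := WithLp.sndL 2 ℂ H H
  have hdec : ∀ u v : H, WithLp.toLp 2 (u, v) = i₁ u + i₂ v := by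
    intro u v
    change WithLp.toLp 2 (u, v) = WithLp.toLp 2 (u, 0) + WithLp.toLp 2 (0, v)
    rw [← WithLp.toLp_add]
    simp
  have hinn : ∀ v w : E, ⟪v, w⟫_ℂ = ⟪v.fst, w.fst⟫_ℂ + ⟪v.snd, w.snd⟫_ℂ := fun v w =>
    WithLp.prod_inner_apply v w
  -- the diagonal action of `A` on `H ⊕ H`
  let G : A → E →ₗ[ℂ] E := fun x =>
    (i₁ ∘L (π x) ∘L p₁ + i₂ ∘L (π x) ∘L p₂ : E →L[ℂ] E)
  have hG : ∀ x u v, G x (WithLp.toLp 2 (u, v)) = WithLp.toLp 2 (π x u, π x v) := by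
    intro x u v
    rw [hdec (π x u)]
    rfl
  have hGadj : ∀ x v w, ⟪G x v, w⟫_ℂ = ⟪v, G (star x) w⟫_ℂ := by
    rintro x ⟨u, v⟩ ⟨u', v'⟩
    rw [hG, hG, hinn, hinn]
    simp only [map_star, ContinuousLinearMap.star_eq_adjoint, WithLp.fst, WithLp.snd,
      ContinuousLinearMap.adjoint_inner_right]
  -- the orthocomplement of the cyclic subspace generated by `(η, β)`
  let L : Submodule ℂ E := Submodule.span ℂ (Set.range fun x => G x (WithLp.toLp 2 (η, β)))
  let N : Submodule ℂ E := Lᗮ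
  have hN : ∀ w, w ∈ N ↔ ∀ x, ⟪G x (WithLp.toLp 2 (η, β)), w⟫_ℂ = 0 := by
    intro w
    constructor
    · intro hw x
      exact hw _ (Submodule.subset_span ⟨x, rfl⟩)
    · intro hw
      refine (Submodule.mem_orthogonal _ _).2 fun u hu => ?_
      induction hu using Submodule.span_induction with
      | mem u hu => obtain ⟨x, rfl⟩ := hu; exact hw x
      | zero => simp
      | add u v _ _ h1 h2 => rw [inner_add_left, h1, h2, add_zero]
      | smul c u _ h1 => rw [inner_smul_left, h1, mul_zero]
  have hGG : ∀ x z v, G x (G z v) = G (x * z) v := by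
    rintro x z ⟨u, v⟩
    simp [hG]
  have hNinv : ∀ x, ∀ w ∈ N, G x w ∈ N := by
    intro x w hw
    rw [hN] at hw ⊢
    intro z
    have := hw (star x * z)
    rw [← hGG, hGadj, star_star] at this
    exact this
  have hNinv' : ∀ x, ∀ w ∈ Nᗮ, G x w ∈ Nᗮ := by
    intro x w hw
    rw [Submodule.mem_orthogonal] at hw ⊢
    intro u hu
    have := hw _ (hNinv (star x) u hu)
    rwa [hGadj, star_star] at this
  have hQ : ∀ x v, N.starProjection (G x v) = G x (N.starProjection v) := by
    intro x v
    apply Submodule.eq_starProjection_of_mem_orthogonal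
    · exact hNinv x _ (Submodule.starProjection_apply_mem _ _)
    · rw [← map_sub]
      exact hNinv' x _ (Submodule.sub_starProjection_mem_orthogonal v)
  have hG1 : ∀ x u, G x (i₁ u) = i₁ (π x u) := by
    intro x u
    change G x (WithLp.toLp 2 (u, 0)) = WithLp.toLp 2 (π x u, 0)
    simp [hG]
  have hG2 : ∀ x u, G x (i₂ u) = i₂ (π x u) := by
    intro x u
    change G x (WithLp.toLp 2 (0, u)) = WithLp.toLp 2 (0, π x u)
    simp [hG]
  have hp1 : ∀ x v, p₁ (G x v) = π x (p₁ v) := by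
    rintro x ⟨u, v⟩
    rw [hG]; rfl
  have hp2 : ∀ x v, p₂ (G x v) = π x (p₂ v) := by
    rintro x ⟨u, v⟩
    rw [hG]; rfl
  -- by Schur's lemma, the projection onto `N` is a matrix of scalars
  obtain ⟨c₁₁, h₁₁⟩ := schur hπ (T := p₁ ∘L N.starProjection ∘L i₁) (fun a => by
    ext u; simp [← hG1, hQ, hp1])
  obtain ⟨c₁₂, h₁₂⟩ := schur hπ (T := p₁ ∘L N.starProjection ∘L i₂) (fun a => by
    ext u; simp [← hG2, hQ, hp1])
  obtain ⟨c₂₁, h₂₁⟩ := schur hπ (T := p₂ ∘L N.starProjection ∘L i₁) (fun a => by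
    ext u; simp [← hG1, hQ, hp2])
  obtain ⟨c₂₂, h₂₂⟩ := schur hπ (T := p₂ ∘L N.starProjection ∘L i₂) (fun a => by
    ext u; simp [← hG2, hQ, hp2])
  have hP : ∀ u v, N.starProjection (WithLp.toLp 2 (u, v)) =
      WithLp.toLp 2 (c₁₁ • u + c₁₂ • v, c₂₁ • u + c₂₂ • v) := by
    intro u v
    have e1 : p₁ (N.starProjection (WithLp.toLp 2 (u, v))) = c₁₁ • u + c₁₂ • v := by
      rw [hdec, map_add, map_add]
      exact congrArg₂ (· + ·) (congrArg (fun S : H →L[ℂ] H => S u) h₁₁)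
        (congrArg (fun S : H →L[ℂ] H => S v) h₁₂)
    have e2 : p₂ (N.starProjection (WithLp.toLp 2 (u, v))) = c₂₁ • u + c₂₂ • v := by
      rw [hdec, map_add, map_add]
      exact congrArg₂ (· + ·) (congrArg (fun S : H →L[ℂ] H => S u) h₂₁)
        (congrArg (fun S : H →L[ℂ] H => S v) h₂₂)
    rw [← e1, ← e2]
    rfl
  have h0 : N.starProjection (WithLp.toLp 2 (η, β)) = 0 := by
    rw [Submodule.starProjection_apply_eq_zero_iff]
    apply Submodule.le_orthogonal_orthogonal
    apply Submodule.subset_span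
    exact ⟨1, by simp [hG]⟩
  rw [hP] at h0
  have e1 : c₁₁ • η + c₁₂ • β = 0 := congrArg p₁ h0
  have e2 : c₂₁ • η + c₂₂ • β = 0 := congrArg p₂ h0
  have hy : N.starProjection (WithLp.toLp 2 (y η, y β)) = 0 := by
    rw [hP, ← map_smul, ← map_smul, ← map_smul, ← map_smul, ← map_add, ← map_add, e1, e2,
      map_zero]
    rfl
  rw [Submodule.starProjection_apply_eq_zero_iff] at hy
  have hw : (WithLp.toLp 2 (α, ζ) : E) ∈ N := by
    rw [hN]
    intro x
    rw [inner_eq_zero_symm, hG, hinn]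
    exact h x
  simpa [hinn] using (Submodule.mem_orthogonal _ _).1 hy _ hw

/-- A self-adjoint element acting with finite rank in a faithful representation vanishes: its
spectrum is finite, and has no gaps because `A` has no nontrivial projections, so it is a scalar,
which is zero because `H` is infinite-dimensional. -/
lemma eq_zero_of_finite_rank (hdim : ¬ FiniteDimensional ℂ A)
    (hproj : ∀ p : A, star p = p → p * p = p → p = 0 ∨ p = 1)
    {π : A →⋆ₐ[ℂ] (H →L[ℂ] H)} (hinj : Function.Injective π)
    {b : A} (hb : IsSelfAdjoint b)
    (hfin : FiniteDimensional ℂ (LinearMap.range (π b : H →ₗ[ℂ] H))) : b = 0 := by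
  have hH : ¬ FiniteDimensional ℂ H := by
    intro hH
    apply hdim
    exact Module.Finite.of_injective (π.toAlgHom.toLinearMap) hinj
  have conv : ∀ s ∈ spectrum ℝ b, ∀ t ∈ spectrum ℝ b, ∀ m, s < m → m < t → m ∈ spectrum ℝ b := by
    intro s hs t ht m hsm hmt
    by_contra hm
    set f : ℝ → ℝ := fun x => if m < x then 1 else 0 with hf
    have hfc : ContinuousOn f (spectrum ℝ b) := by
      intro x hx
      have hxm : x ≠ m := fun h => hm (h ▸ hx)
      apply ContinuousAt.continuousWithinAt
      rcases lt_or_gt_of_ne hxm with h | h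
      · apply (continuousAt_const (y := (0 : ℝ))).congr
        filter_upwards [Iio_mem_nhds h] with z hz
        simp [hf, not_lt.2 (le_of_lt (Set.mem_Iio.1 hz))]
      · apply (continuousAt_const (y := (1 : ℝ))).congr
        filter_upwards [Ioi_mem_nhds h] with z hz
        have : m < z := hz
        simp [hf, this]
    have h1 : star (cfc f b) = cfc f b := (cfc_predicate f b : IsSelfAdjoint _).star_eq
    have h2 : cfc f b * cfc f b = cfc f b := by
      rw [← cfc_mul f f b hfc hfc]
      congr 1
      funext x
      simp [hf]
    rcases hproj _ h1 h2 with h0 | h0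
    · have : cfc f b = cfc (fun _ => (0 : ℝ)) b := by rw [h0, cfc_const (0 : ℝ) b hb, map_zero]
      have := eqOn_of_cfc_eq_cfc this hfc continuousOn_const hb ht
      simp [hf, hmt] at this
    · have : cfc f b = cfc (fun _ => (1 : ℝ)) b := by rw [h0, cfc_const (1 : ℝ) b hb, map_one]
      have := eqOn_of_cfc_eq_cfc this hfc continuousOn_const hb hs
      simp [hf, not_lt.2 hsm.le] at this
  have hspfin : (spectrum ℝ b).Finite := by
    let B : Module.End ℂ H := (π b : H →ₗ[ℂ] H)
    let R := LinearMap.range B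
    let f : H →ₗ[ℂ] R := B.rangeRestrict
    let g : R →ₗ[ℂ] H := R.subtype
    let T : Module.End ℂ R := f ∘ₗ g
    have hpow : ∀ p : Polynomial ℂ, Polynomial.aeval B p * B = g ∘ₗ (Polynomial.aeval T p) ∘ₗ f := by
      intro p
      induction p using Polynomial.induction_on' with
      | add p q hp hq =>
        rw [map_add, map_add, add_mul, hp, hq]
        ext x; simp
      | monomial n c =>
        have : ∀ n, B ^ n * B = g ∘ₗ (T ^ n) ∘ₗ f := by
          intro n
          induction n with
          | zero => ext x; rfl
          | succ n ih =>
            rw [pow_succ', mul_assoc, ih, pow_succ']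
            ext x; rfl
        rw [Polynomial.aeval_monomial, Polynomial.aeval_monomial, mul_assoc, this]
        ext x
        simp [Algebra.algebraMap_eq_smul_one]
    obtain ⟨p, hp, hp0⟩ := Algebra.IsIntegral.isIntegral (R := ℂ) T
    have hq : Polynomial.aeval b (p * Polynomial.X) = 0 := by
      apply hinj
      rw [map_zero]
      let Φ : A →ₐ[ℂ] Module.End ℂ H :=
        AlgHom.comp { (ContinuousLinearMap.toLinearMapRingHom :
          (H →L[ℂ] H) →+* Module.End ℂ H) with commutes' := fun c => by ext; rfl } π.toAlgHom
      have h1 : Φ (Polynomial.aeval b (p * Polynomial.X)) = 0 := by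
        rw [← Polynomial.aeval_algHom_apply, map_mul, Polynomial.aeval_X]
        have h2 := hpow p
        rw [Polynomial.aeval_def T, hp0] at h2
        have h3 : Polynomial.aeval B p * B = 0 := by
          rw [h2]; ext x; simp
        exact h3
      ext x
      exact congrArg (fun S : Module.End ℂ H => S x) h1
    have hne : p * Polynomial.X ≠ 0 := mul_ne_zero hp.ne_zero Polynomial.X_ne_zero
    have hA : Nontrivial A := by
      by_contra hA
      rw [not_nontrivial_iff_subsingleton] at hA
      exact hdim inferInstance
    refine Set.Finite.of_finite_image (f := ((↑) : ℝ → ℂ)) ?_ Complex.ofReal_injective.injOn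
    refine (Polynomial.rootSet_finite (p * Polynomial.X) ℂ).subset ?_
    rintro _ ⟨t, ht, rfl⟩
    have ht' : (t : ℂ) ∈ spectrum ℂ b := by
      have := spectrum.algebraMap_mem ℂ ht
      simpa using this
    have := spectrum.subset_polynomial_aeval b (p * Polynomial.X) ⟨_, ht', rfl⟩
    rw [hq, spectrum.zero_eq] at this
    rw [Polynomial.mem_rootSet]
    exact ⟨hne, by simpa using this⟩
  have hsub : (spectrum ℝ b).Subsingleton := by
    have main : ∀ s ∈ spectrum ℝ b, ∀ t ∈ spectrum ℝ b, ¬ s < t := by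
      intro s hs t ht hst
      exact Set.Ioo_infinite hst (hspfin.subset fun m hm => conv s hs t ht m hm.1 hm.2)
    intro s hs t ht
    exact le_antisymm (not_lt.1 (main t ht s hs)) (not_lt.1 (main s hs t ht))
  obtain ⟨r, hr⟩ : ∃ r, spectrum ℝ b ⊆ {r} := by
    rcases hsub.eq_empty_or_singleton with h | ⟨r, h⟩
    · exact ⟨0, by simp [h]⟩
    · exact ⟨r, h.le⟩
  have hbr := CFC.eq_algebraMap_of_spectrum_subset_singleton b r hr hb
  by_cases hr0 : r = 0
  · simpa [hr0] using hbr
  · exfalso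
    apply hH
    have hpb : ∀ x, π b x = (r : ℂ) • x := by
      intro x
      have : b = algebraMap ℂ A r := by rw [hbr]; rfl
      rw [this, AlgHomClass.commutes π]
      simp [Algebra.algebraMap_eq_smul_one]
    have : LinearMap.range (π b : H →ₗ[ℂ] H) = ⊤ := by
      rw [LinearMap.range_eq_top]
      intro x
      refine ⟨(r : ℂ)⁻¹ • x, ?_⟩
      simp only [ContinuousLinearMap.coe_coe]
      rw [hpb, smul_smul, mul_inv_cancel₀ (by exact_mod_cast hr0), one_smul]
    rw [this] at hfin
    exact Module.Finite.equiv (Submodule.topEquiv (R := ℂ) (M := H))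

/-- The range of `π b` has infinite dimension, so it meets the orthogonal complement of any finite
set of vectors. -/
lemma exists_range_orthogonal (hdim : ¬ FiniteDimensional ℂ A)
    (hproj : ∀ p : A, star p = p → p * p = p → p = 0 ∨ p = 1)
    {π : A →⋆ₐ[ℂ] (H →L[ℂ] H)} (hinj : Function.Injective π)
    {b : A} (hb : IsSelfAdjoint b) (hb0 : b ≠ 0) (F : Finset H) :
    ∃ η, π b η ≠ 0 ∧ ∀ f ∈ F, ⟪f, π b η⟫_ℂ = 0 := by
  by_contra! hcon
  apply hb0
  apply eq_zero_of_finite_rank hdim hproj hinj hb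
  let L : H →ₗ[ℂ] (F → ℂ) := LinearMap.pi fun f => (innerSL ℂ (f : H)).toLinearMap
  apply Module.Finite.of_injective (L ∘ₗ (LinearMap.range (π b : H →ₗ[ℂ] H)).subtype)
  rw [← LinearMap.ker_eq_bot, LinearMap.ker_eq_bot']
  rintro ⟨_, η, rfl⟩ hη
  ext
  by_contra h0
  obtain ⟨f, hf, hne⟩ := hcon η h0
  exact hne (congrFun hη ⟨f, hf⟩)

end Irreducible

/-! ### Transitivity with norm control -/

section Density

variable {A : Type*} [CStarAlgebra A]
variable {H : Type*} [NormedAddCommGroup H] [InnerProductSpace ℂ H] [CompleteSpace H]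

lemma inner_rep_star (π : A →⋆ₐ[ℂ] (H →L[ℂ] H)) (a : A) (u v : H) :
    ⟪u, π (star a) v⟫_ℂ = ⟪π a u, v⟫_ℂ := by
  rw [map_star, ContinuousLinearMap.star_eq_adjoint, ContinuousLinearMap.adjoint_inner_right]

lemma inner_rep_star' (π : A →⋆ₐ[ℂ] (H →L[ℂ] H)) (a : A) (u v : H) :
    ⟪π (star a) u, v⟫_ℂ = ⟪u, π a v⟫_ℂ := by
  rw [map_star, ContinuousLinearMap.star_eq_adjoint, ContinuousLinearMap.adjoint_inner_left]

lemma rep_mul_apply (π : A →⋆ₐ[ℂ] (H →L[ℂ] H)) (a b : A) (u : H) :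
    π (a * b) u = π a (π b u) := by
  rw [map_mul]; rfl

lemma norm_rep_apply_le (π : A →⋆ₐ[ℂ] (H →L[ℂ] H)) (a : A) (u : H) :
    ‖π a u‖ ≤ ‖a‖ * ‖u‖ :=
  ((π a).le_opNorm u).trans
    (mul_le_mul_of_nonneg_right (NonUnitalStarAlgHom.norm_apply_le π a) (norm_nonneg _))

/-- Some `x` sends `η` near `ζ` while its adjoint sends `ζ` near `η`: otherwise a separating
functional on `H × H` contradicts the dual density theorem for two vectors. -/
lemma exists_approx_pair {π : A →⋆ₐ[ℂ] (H →L[ℂ] H)} (hπ : IsIrreducibleRep π)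
    {η ζ : H} (hη : ‖η‖ = 1) (hζ : ‖ζ‖ = 1) {ε : ℝ} (hε : 0 < ε) :
    ∃ x : A, ‖π x η - ζ‖ < ε ∧ ‖π (star x) ζ - η‖ < ε := by
  let φ : A → H × H := fun x => (π x η, π (star x) ζ)
  have hφadd : ∀ x y, φ (x + y) = φ x + φ y := by
    intro x y; simp [φ]
  have hφsmul : ∀ (r : ℝ) x, φ ((r : ℂ) • x) = r • φ x := by
    intro r x
    have h1 : π ((r : ℂ) • x) η = r • π x η := by
      rw [map_smul, ← Complex.coe_smul]; rfl
    have h2 : π (star ((r : ℂ) • x)) ζ = r • π (star x) ζ := by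
      rw [star_smul, map_smul, ← Complex.coe_smul]
      simp
    exact Prod.ext h1 h2
  have hconv : Convex ℝ (Set.range φ) := by
    rintro _ ⟨x, rfl⟩ _ ⟨y, rfl⟩ p q _ _ _
    exact ⟨(p : ℂ) • x + (q : ℂ) • y, by rw [hφadd, hφsmul, hφsmul]⟩
  have hmem : ((ζ, η) : H × H) ∈ closure (Set.range φ) := by
    by_contra hnot
    obtain ⟨f, u, hf, hu⟩ := RCLike.geometric_hahn_banach_closed_point (𝕜 := ℂ)
      hconv.closure isClosed_closure hnot
    have hzero : ∀ x, (f (φ x)).re = 0 := by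
      intro x
      by_contra hx
      have h1 := hf (φ (((u / (f (φ x)).re : ℝ) : ℂ) • x)) (subset_closure ⟨_, rfl⟩)
      rw [hφsmul, ← Complex.coe_smul, map_smul] at h1
      simp [hx] at h1
    have hu0 : 0 < (f (ζ, η)).re := by
      have h1 := hf (φ 0) (subset_closure ⟨_, rfl⟩)
      have h2 := hzero 0
      simp only [RCLike.re_to_complex] at h1 hu
      linarith
    let α := (InnerProductSpace.toDual ℂ H).symm (f ∘L ContinuousLinearMap.inl ℂ H H)
    let β := (InnerProductSpace.toDual ℂ H).symm (f ∘L ContinuousLinearMap.inr ℂ H H)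
    have hfrep : ∀ a b, f (a, b) = ⟪α, a⟫_ℂ + ⟪β, b⟫_ℂ := by
      intro a b
      have : ((a, b) : H × H) = (a, 0) + (0, b) := by simp
      rw [this, map_add]
      simp [α, β]
    -- the real-linear condition becomes complex-linear after conjugating the second term
    have hre : ∀ x, (⟪α, π x η⟫_ℂ + ⟪ζ, π x β⟫_ℂ).re = 0 := by
      intro x
      have := hzero x
      rw [hfrep, inner_rep_star] at this
      rw [← inner_conj_symm ζ, Complex.add_re, Complex.conj_re]
      exact this
    have hall : ∀ x, ⟪α, π x η⟫_ℂ + ⟪ζ, π x β⟫_ℂ = 0 := by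
      intro x
      apply Complex.ext (hre x)
      have := hre (Complex.I • x)
      simp only [map_smul, FunLike.coe_smul, Pi.smul_apply, inner_smul_right, ← mul_add,
        Complex.I_mul_re] at this
      simpa only [Complex.zero_im] using neg_eq_zero.1 this
    have h := two_vector_annihilator hπ hall (InnerProductSpace.rankOne ℂ ζ η)
    simp only [InnerProductSpace.rankOne_apply, inner_smul_right, inner_self_eq_norm_sq_to_K,
      hη, hζ] at h
    apply hu0.ne'
    rw [hfrep, ← inner_conj_symm β η, Complex.add_re, Complex.conj_re]
    simpa using congrArg Complex.re h
  obtain ⟨_, ⟨x, rfl⟩, hx⟩ := Metric.mem_closure_iff.1 hmem ε hε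
  rw [Prod.dist_eq, max_lt_iff, dist_comm, dist_comm _ (φ x).2, dist_eq_norm, dist_eq_norm] at hx
  exact ⟨x, hx⟩

/-- A bounded form of transitivity, obtained by Kaplansky's trick: replace `x` by
`2 (1 + x x⋆)⁻¹ x`, which has norm at most `2` independently of `x`. -/
lemma exists_bounded_approx {π : A →⋆ₐ[ℂ] (H →L[ℂ] H)} (hπ : IsIrreducibleRep π)
    {η ζ : H} (hη : ‖η‖ = 1) (hζ : ‖ζ‖ = 1) {ε : ℝ} (hε : 0 < ε) :
    ∃ b : A, ‖b‖ ≤ 2 ∧ ‖π b η - ζ‖ < ε := by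
  obtain ⟨x, h1, h2⟩ := exists_approx_pair hπ hη hζ (half_pos hε)
  set z := x * star x with hz
  have hzsa : IsSelfAdjoint z := IsSelfAdjoint.mul_star_self x
  have hsp : ∀ t ∈ spectrum ℝ z, 0 ≤ t := by
    have := spectrum_star_mul_self_nonneg (b := star x)
    rwa [star_star] at this
  set y := cfc (fun t : ℝ => (1 + t)⁻¹) z with hy
  have hc1 : ContinuousOn (fun t : ℝ => (1 + t)⁻¹) (spectrum ℝ z) := by
    apply ContinuousOn.inv₀ (by fun_prop)
    intro t ht
    have := hsp t ht
    positivity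
  have hysa : star y = y := (cfc_predicate _ z : IsSelfAdjoint y).star_eq
  have hy1 : ‖y‖ ≤ 1 := by
    apply norm_cfc_le zero_le_one
    intro t ht
    have := hsp t ht
    rw [Real.norm_of_nonneg (by positivity)]
    exact inv_le_one_of_one_le₀ (by linarith)
  have hyz : y * (1 + z) = 1 := by
    have e1 : 1 + z = cfc (fun t : ℝ => 1 + t) z := by
      rw [cfc_add z (fun _ : ℝ => (1 : ℝ)) (fun t : ℝ => t), cfc_const_one ℝ z, cfc_id' ℝ z]
    rw [e1, hy, ← cfc_mul _ _ z hc1 (by fun_prop), ← cfc_one ℝ z]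
    apply cfc_congr
    intro t ht
    have := hsp t ht
    have : 1 + t ≠ 0 := by positivity
    simp [inv_mul_cancel₀ this]
  have hyx : ‖y * x‖ ≤ 1 := by
    have e1 : (y * x) * star (y * x) = cfc (fun t : ℝ => (1 + t)⁻¹ * t * (1 + t)⁻¹) z := by
      rw [cfc_mul _ _ z (by fun_prop) hc1, cfc_mul _ _ z hc1 (by fun_prop), cfc_id' ℝ z, ← hy,
        star_mul, hysa, hz]
      simp only [mul_assoc]
    have e2 : ‖y * x‖ * ‖y * x‖ ≤ 1 := by
      rw [← CStarRing.norm_self_mul_star, e1]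
      apply norm_cfc_le zero_le_one
      intro t ht
      have h0 := hsp t ht
      rw [Real.norm_of_nonneg (by positivity)]
      have h3 : (1 + t)⁻¹ * t ≤ 1 := by
        rw [inv_mul_le_iff₀ (by positivity)]; linarith
      have h4 : (1 + t)⁻¹ ≤ 1 := inv_le_one_of_one_le₀ (by linarith)
      exact mul_le_one₀ h3 (by positivity) h4
    nlinarith [norm_nonneg (y * x)]
  refine ⟨(2 : ℂ) • (y * x), ?_, ?_⟩
  · rw [norm_smul]
    simp only [Complex.norm_ofNat]
    linarith
  · have hone : π y (ζ + π z ζ) = ζ := by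
      have := rep_mul_apply π y (1 + z) ζ
      rw [hyz] at this
      simpa using this.symm
    have e : π ((2 : ℂ) • (y * x)) η - ζ =
        π y (π x η - ζ) - π (y * x) (π (star x) ζ - η) := by
      have hzz : π y (π z ζ) = π y (π x (π (star x) ζ)) := by
        rw [hz, rep_mul_apply]
      have h3 : ζ = π y ζ + π y (π x (π (star x) ζ)) := by
        rw [← hzz, ← map_add, hone]
      rw [map_smul, FunLike.coe_smul, Pi.smul_apply, rep_mul_apply, rep_mul_apply, map_sub,
        map_sub, map_sub, two_smul]
      nth_rewrite 1 [h3]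
      abel
    rw [e]
    calc _ ≤ ‖π y (π x η - ζ)‖ + ‖π (y * x) (π (star x) ζ - η)‖ := norm_sub_le _ _
      _ ≤ ‖y‖ * ‖π x η - ζ‖ + ‖y * x‖ * ‖π (star x) ζ - η‖ :=
        add_le_add (norm_rep_apply_le _ _ _) (norm_rep_apply_le _ _ _)
      _ ≤ 1 * ‖π x η - ζ‖ + 1 * ‖π (star x) ζ - η‖ := by gcongr
      _ < ε := by linarith

end Density

/-! ### Vector states orthogonal to finite sets -/

section Glimm

variable {A : Type*} [CStarAlgebra A]
variable {H : Type*} [NormedAddCommGroup H] [InnerProductSpace ℂ H] [CompleteSpace H]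

/-- The positive and negative parts of `a - s`, written as squares of self-adjoint elements. -/
lemma exists_pos_neg_parts {a : A} (ha : IsSelfAdjoint a) (s : ℝ) :
    ∃ c d : A, IsSelfAdjoint c ∧ IsSelfAdjoint d ∧ a - (s : ℂ) • (1 : A) = c * c - d * d ∧
      d * c = 0 := by
  let f : ℝ → ℝ := fun t => √(max (t - s) 0)
  let g : ℝ → ℝ := fun t => √(max (s - t) 0)
  have hf : Continuous f := by fun_prop
  have hg : Continuous g := by fun_prop
  refine ⟨cfc f a, cfc g a, cfc_predicate _ _, cfc_predicate _ _, ?_, ?_⟩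
  · rw [← cfc_mul f f a hf.continuousOn hf.continuousOn,
      ← cfc_mul g g a hg.continuousOn hg.continuousOn,
      ← cfc_sub (a := a) (fun t => f t * f t) (fun t => g t * g t) (hf.mul hf).continuousOn
        (hg.mul hg).continuousOn]
    have e1 : a - (s : ℂ) • (1 : A) = cfc (fun t : ℝ => t - s) a := by
      rw [cfc_sub (a := a) (fun t : ℝ => t) (fun _ => s), cfc_id' ℝ a, cfc_const s a,
        Algebra.algebraMap_eq_smul_one, Complex.coe_smul]
    rw [e1]
    congr 1
    funext t
    simp only [f, g]
    rw [Real.mul_self_sqrt (le_max_right _ _), Real.mul_self_sqrt (le_max_right _ _)]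
    rcases le_total t s with h | h
    · rw [max_eq_right (by linarith), max_eq_left (by linarith)]; ring
    · rw [max_eq_left (by linarith), max_eq_right (by linarith)]; ring
  · rw [← cfc_mul g f a hg.continuousOn hf.continuousOn]
    have : (fun t => g t * f t) = fun _ => (0 : ℝ) := by
      funext t
      simp only [f, g]
      rcases le_total t s with h | h
      · rw [max_eq_right (by linarith : t - s ≤ 0)]; simp
      · rw [max_eq_right (by linarith : s - t ≤ 0)]; simp
    rw [this, cfc_const (0 : ℝ) a, map_zero]

/-- If a vector state takes a value above `s` on a self-adjoint element, then so does (weakly)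
some vector state whose vector is orthogonal to a prescribed finite set. -/
lemma exists_unit_orthogonal_ge (hdim : ¬ FiniteDimensional ℂ A)
    (hproj : ∀ p : A, star p = p → p * p = p → p = 0 ∨ p = 1)
    {π : A →⋆ₐ[ℂ] (H →L[ℂ] H)} (hinj : Function.Injective π)
    {a : A} (ha : IsSelfAdjoint a) {ξ : H} (hξ : ‖ξ‖ = 1) {s : ℝ}
    (hs : s < (⟪ξ, π a ξ⟫_ℂ).re) (F : Finset H) :
    ∃ ζ : H, ‖ζ‖ = 1 ∧ (∀ f ∈ F, ⟪f, ζ⟫_ℂ = 0) ∧ s ≤ (⟪ζ, π a ζ⟫_ℂ).re := by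
  obtain ⟨c, d, hc, hd, hcd, hdc⟩ := exists_pos_neg_parts ha s
  have key : ∀ u : H, ‖u‖ = 1 → (⟪u, π a u⟫_ℂ).re = s + ‖π c u‖ ^ 2 - ‖π d u‖ ^ 2 := by
    intro u hu
    have e : a = (s : ℂ) • (1 : A) + c * c - d * d := by
      rw [add_sub_assoc, ← hcd]; abel
    have h1 : ∀ x : A, IsSelfAdjoint x → ⟪u, π (x * x) u⟫_ℂ = (‖π x u‖ ^ 2 : ℝ) := by
      intro x hx
      rw [rep_mul_apply]
      nth_rewrite 1 [← hx.star_eq]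
      rw [inner_rep_star, inner_self_eq_norm_sq_to_K]
      simp
    rw [e, map_sub, map_add, map_smul, map_one]
    simp only [FunLike.coe_sub, FunLike.coe_add, FunLike.coe_smul, Pi.sub_apply, Pi.add_apply,
      Pi.smul_apply, one_apply_eq_self, inner_sub_right, inner_add_right,
      inner_smul_right, h1 c hc, h1 d hd, inner_self_eq_norm_sq_to_K, hu, Complex.sub_re,
      Complex.add_re, Complex.ofReal_re]
    simp
  set b := c * c with hb
  have hb0 : b ≠ 0 := by
    intro h0
    have hc0 : c = 0 := by
      have : star c * c = 0 := by rw [hc.star_eq]; exact h0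
      exact (CStarRing.star_mul_self_eq_zero_iff c).1 this
    have := key ξ hξ
    rw [hc0] at this
    simp at this
    nlinarith [sq_nonneg ‖π d ξ‖]
  have hbsa : IsSelfAdjoint b := by
    rw [IsSelfAdjoint, hb, star_mul, hc.star_eq]
  obtain ⟨η, hη0, hη⟩ := exists_range_orthogonal hdim hproj hinj hbsa hb0 F
  refine ⟨((‖π b η‖⁻¹ : ℝ) : ℂ) • π b η, ?_, ?_, ?_⟩
  · rw [norm_smul, Complex.norm_real, norm_inv, norm_norm, inv_mul_cancel₀ (norm_ne_zero_iff.2 hη0)]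
  · intro f hf
    rw [inner_smul_right, hη f hf, mul_zero]
  · have hu : ‖((‖π b η‖⁻¹ : ℝ) : ℂ) • π b η‖ = 1 := by
      rw [norm_smul, Complex.norm_real, norm_inv, norm_norm,
        inv_mul_cancel₀ (norm_ne_zero_iff.2 hη0)]
    rw [key _ hu]
    have : π d (π b η) = 0 := by
      rw [← rep_mul_apply, hb, ← mul_assoc, hdc, zero_mul, map_zero]; rfl
    rw [map_smul (π d), this]
    simp

/-- The hypotheses make the cross terms in the vector functional of a combination vanish. -/
lemma inner_rep_combo {π : A →⋆ₐ[ℂ] (H →L[ℂ] H)} {a : A} {ζ ζ' : H}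
    (h1 : ⟪π a ζ, ζ'⟫_ℂ = 0) (h2 : ⟪π (star a) ζ, ζ'⟫_ℂ = 0) (α β : ℂ) :
    ⟪α • ζ + β • ζ', π a (α • ζ + β • ζ')⟫_ℂ =
      (‖α‖ ^ 2 : ℝ) * ⟪ζ, π a ζ⟫_ℂ + (‖β‖ ^ 2 : ℝ) * ⟪ζ', π a ζ'⟫_ℂ := by
  have h1' : ⟪ζ', π a ζ⟫_ℂ = 0 := by rw [← inner_conj_symm, h1, map_zero]
  have h2' : ⟪ζ, π a ζ'⟫_ℂ = 0 := by rw [← inner_rep_star', h2]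
  have e : ∀ z : ℂ, ((‖z‖ ^ 2 : ℝ) : ℂ) = z * (starRingEnd ℂ) z := by
    intro z; rw [Complex.mul_conj, Complex.normSq_eq_norm_sq]
  simp only [map_add, map_smul, inner_add_left, inner_add_right, inner_smul_left,
    inner_smul_right, h1', h2', e]
  ring

lemma norm_combo_sq {E : Type*} [NormedAddCommGroup E] [InnerProductSpace ℂ E] {ζ ζ' : E}
     (hζ : ‖ζ‖ = 1) (hζ' : ‖ζ'‖ = 1) (h : ⟪ζ, ζ'⟫_ℂ = 0) (α β : ℂ) :
    ‖α • ζ + β • ζ'‖ ^ 2 = ‖α‖ ^ 2 + ‖β‖ ^ 2 := by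
  have : ⟪α • ζ, β • ζ'⟫_ℂ = 0 := by
    rw [inner_smul_left, inner_smul_right, h]; simp
  rw [sq, norm_add_sq_eq_norm_sq_add_norm_sq_of_inner_eq_zero _ _ this, norm_smul, norm_smul, hζ,
    hζ']
  ring

open Classical in
/-- Glimm's lemma for a faithful representation containing no nonzero finite-rank operator:
on finitely many elements, every vector state is approximated by vector states whose vectors are
orthogonal to a prescribed finite set. -/
lemma exists_unit_orthogonal_near (hdim : ¬ FiniteDimensional ℂ A)
    (hproj : ∀ p : A, star p = p → p * p = p → p = 0 ∨ p = 1)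
    {π : A →⋆ₐ[ℂ] (H →L[ℂ] H)} (hinj : Function.Injective π)
    (s : Finset A) {ξ : H} (hξ : ‖ξ‖ = 1) (F : Finset H) {ε : ℝ} (hε : 0 < ε) :
    ∃ ζ : H, ‖ζ‖ = 1 ∧ (∀ f ∈ F, ⟪f, ζ⟫_ℂ = 0) ∧
      ∀ a ∈ s, ‖⟪ζ, π a ζ⟫_ℂ - ⟪ξ, π a ξ⟫_ℂ‖ < ε := by
  let w : H → (s → ℂ) := fun ζ a => ⟪ζ, π a ζ⟫_ℂ
  let W : Finset H → Set (s → ℂ) := fun F => w '' {ζ | ‖ζ‖ = 1 ∧ ∀ f ∈ F, ⟪f, ζ⟫_ℂ = 0}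
  have Wmono : ∀ {F G : Finset H}, F ⊆ G → W G ⊆ W F := by
    rintro F G h _ ⟨ζ, ⟨h1, h2⟩, rfl⟩
    exact ⟨ζ, ⟨h1, fun f hf => h2 f (h hf)⟩, rfl⟩
  let E : Set (s → ℂ) := ⋂ F, closure (W F)
  -- it suffices that the value vector of `ξ` lies in the essential range `E`
  suffices hmem : w ξ ∈ E by
    obtain ⟨_, ⟨ζ, ⟨h1, h2⟩, rfl⟩, hd⟩ := Metric.mem_closure_iff.1 (Set.mem_iInter.1 hmem F) ε hε
    refine ⟨ζ, h1, h2, fun a ha => ?_⟩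
    rw [dist_comm] at hd
    have := (dist_pi_lt_iff hε).1 hd ⟨a, ha⟩
    rwa [dist_eq_norm] at this
  have hEclosed : IsClosed E := isClosed_iInter fun _ => isClosed_closure
  have hEconv : Convex ℝ E := by
    intro x hx y hy p q hp hq hpq
    refine Set.mem_iInter.2 fun F => ?_
    rw [Metric.mem_closure_iff]
    intro δ hδ
    obtain ⟨_, ⟨ζ, ⟨h1, h2⟩, rfl⟩, hd⟩ := Metric.mem_closure_iff.1 (Set.mem_iInter.1 hx F) δ hδ
    -- the second vector is orthogonal to everything that would produce cross terms
    let G : Finset H := F ∪ ({ζ} ∪ (s.image (fun a => π a ζ) ∪ s.image (fun a => π (star a) ζ)))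
    obtain ⟨_, ⟨ζ', ⟨h1', h2'⟩, rfl⟩, hd'⟩ :=
      Metric.mem_closure_iff.1 (Set.mem_iInter.1 hy G) δ hδ
    have hn1 : ‖((√p : ℝ) : ℂ)‖ ^ 2 = p := by
      rw [Complex.norm_real, Real.norm_of_nonneg (Real.sqrt_nonneg _), Real.sq_sqrt hp]
    have hn2 : ‖((√q : ℝ) : ℂ)‖ ^ 2 = q := by
      rw [Complex.norm_real, Real.norm_of_nonneg (Real.sqrt_nonneg _), Real.sq_sqrt hq]
    refine ⟨w (((√p : ℝ) : ℂ) • ζ + ((√q : ℝ) : ℂ) • ζ'), ⟨_, ⟨?_, ?_⟩, rfl⟩, ?_⟩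
    · have := norm_combo_sq h1 h1' (h2' ζ (by simp [G])) ((√p : ℝ) : ℂ) ((√q : ℝ) : ℂ)
      rw [hn1, hn2, hpq] at this
      exact (pow_eq_one_iff_of_nonneg (norm_nonneg _) two_ne_zero).1 this
    · intro f hf
      rw [inner_add_right, inner_smul_right, inner_smul_right, h2 f hf, h2' f (by simp [G, hf])]
      simp
    · have e : w (((√p : ℝ) : ℂ) • ζ + ((√q : ℝ) : ℂ) • ζ') = p • w ζ + q • w ζ' := by
        funext a
        have ha1 : ⟪π (a : A) ζ, ζ'⟫_ℂ = 0 := h2' _ (by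
          have : π (a : A) ζ ∈ s.image (fun a => π a ζ) :=
            Finset.mem_image_of_mem (fun a => π a ζ) a.2
          simp only [G, Finset.mem_union]; tauto)
        have ha2 : ⟪π (star (a : A)) ζ, ζ'⟫_ℂ = 0 := h2' _ (by
          have : π (star (a : A)) ζ ∈ s.image (fun a => π (star a) ζ) :=
            Finset.mem_image_of_mem (fun a => π (star a) ζ) a.2
          simp only [G, Finset.mem_union]; tauto)
        have := inner_rep_combo ha1 ha2 ((√p : ℝ) : ℂ) ((√q : ℝ) : ℂ)
        rw [hn1, hn2] at this
        refine this.trans ?_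
        simp [w]
      rw [e, dist_eq_norm]
      have e2 : p • x + q • y - (p • w ζ + q • w ζ') = p • (x - w ζ) + q • (y - w ζ') := by
        simp only [smul_sub]; abel
      rw [e2]
      rw [dist_eq_norm] at hd hd'
      calc _ ≤ ‖p • (x - w ζ)‖ + ‖q • (y - w ζ')‖ := norm_add_le _ _
        _ = p * ‖x - w ζ‖ + q * ‖y - w ζ'‖ := by
          rw [norm_smul, norm_smul, Real.norm_of_nonneg hp, Real.norm_of_nonneg hq]
        _ < δ := by
          rcases hp.eq_or_lt with h | h
          · have : q = 1 := by linarith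
            rw [← h, this]; linarith
          · nlinarith
  by_contra hnot
  obtain ⟨f, u, hf, hu⟩ := RCLike.geometric_hahn_banach_closed_point (𝕜 := ℂ) hEconv hEclosed hnot
  simp only [RCLike.re_to_complex] at hf hu
  let h : A := ∑ a : s, f (Pi.single a 1) • (a : A)
  have hfw : ∀ ζ, f (w ζ) = ⟪ζ, π h ζ⟫_ℂ := by
    intro ζ
    have e : w ζ = ∑ a : s, w ζ a • (Pi.single a (1 : ℂ) : s → ℂ) := by
      rw [← pi_eq_sum_univ' (w ζ)]
    rw [e, map_sum]
    simp only [h, map_sum, map_smul, inner_sum, inner_smul_right, smul_eq_mul, w,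
      FunLike.coe_sum, Finset.sum_apply, FunLike.coe_smul, Pi.smul_apply]
    exact Finset.sum_congr rfl fun a _ => mul_comm _ _
  have hre : ∀ ζ, (f (w ζ)).re = (⟪ζ, π ((realPart h : selfAdjoint A) : A) ζ⟫_ℂ).re := by
    intro ζ
    rw [hfw, realPart_apply_coe, ← Complex.coe_smul, map_smul, map_add]
    have : (⟪ζ, π (star h) ζ⟫_ℂ).re = (⟪ζ, π h ζ⟫_ℂ).re := by
      rw [inner_rep_star, ← inner_conj_symm, Complex.conj_re]
    simp only [FunLike.coe_smul, Pi.smul_apply, FunLike.coe_add, Pi.add_apply, inner_smul_right,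
      inner_add_right, Complex.re_ofReal_mul, Complex.add_re, this]
    ring
  rw [hre] at hu
  have hF : ∀ F : Finset H, ∃ z ∈ W F, u ≤ (f z).re := by
    intro F
    obtain ⟨ζ, h1, h2, h3⟩ := exists_unit_orthogonal_ge hdim hproj hinj
      (realPart h).2 hξ hu F
    exact ⟨w ζ, ⟨ζ, ⟨h1, h2⟩, rfl⟩, by rw [hre]; exact h3⟩
  choose z hzW hzu using hF
  let K : Set (s → ℂ) := Set.univ.pi fun a : s => Metric.closedBall (0 : ℂ) ‖(a : A)‖
  have hK : IsCompact K := isCompact_univ_pi fun a => isCompact_closedBall _ _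
  have hzK : ∀ F, z F ∈ K := by
    intro F
    obtain ⟨ζ, ⟨h1, -⟩, h2⟩ := hzW F
    intro a _
    rw [← h2, mem_closedBall_zero_iff]
    calc _ ≤ ‖ζ‖ * ‖π (a : A) ζ‖ := norm_inner_le_norm _ _
      _ ≤ ‖ζ‖ * (‖(a : A)‖ * ‖ζ‖) := by gcongr; exact norm_rep_apply_le _ _ _
      _ = ‖(a : A)‖ := by rw [h1]; ring
  obtain ⟨x, -, hx⟩ := hK (f := Filter.map z Filter.atTop)
    (Filter.le_principal_iff.2 (Filter.eventually_map.2 (Filter.Eventually.of_forall hzK)))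
  have hxE : x ∈ E := by
    refine Set.mem_iInter.2 fun F => ?_
    apply mem_closure_iff_clusterPt.2
    apply hx.mono
    rw [Filter.le_principal_iff]
    exact Filter.mem_of_superset (Filter.image_mem_map (Filter.mem_atTop F))
      (by rintro _ ⟨G, hG, rfl⟩; exact Wmono hG (hzW G))
  have hxu : x ∈ {y : s → ℂ | u ≤ (f y).re} := by
    have hcl : IsClosed {y : s → ℂ | u ≤ (f y).re} :=
      isClosed_le continuous_const (Complex.continuous_re.comp f.continuous)
    rw [← hcl.closure_eq]
    apply mem_closure_iff_clusterPt.2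
    apply hx.mono
    rw [Filter.le_principal_iff]
    exact Filter.eventually_map.2 (Filter.Eventually.of_forall hzu)
  exact absurd (hf x hxE) (not_lt.2 hxu)

open Classical in
/-- Near every vector state there are two vector states at uniform distance from each other. -/
lemma exists_two_near (hdim : ¬ FiniteDimensional ℂ A)
    (hproj : ∀ p : A, star p = p → p * p = p → p = 0 ∨ p = 1)
    {π : A →⋆ₐ[ℂ] (H →L[ℂ] H)} (hπ : IsIrreducibleRep π) (hinj : Function.Injective π)
    (s : Finset A) {ξ : H} (hξ : ‖ξ‖ = 1) {ε : ℝ} (hε : 0 < ε) :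
    ∃ χ₁ χ₂ : H, ‖χ₁‖ = 1 ∧ ‖χ₂‖ = 1 ∧ (∀ a ∈ s, ‖⟪χ₁, π a χ₁⟫_ℂ - ⟪ξ, π a ξ⟫_ℂ‖ < ε) ∧
      (∀ a ∈ s, ‖⟪χ₂, π a χ₂⟫_ℂ - ⟪ξ, π a ξ⟫_ℂ‖ < ε) ∧
      ∃ b : A, ‖b‖ ≤ 2 ∧ 1 / 2 ≤ ‖⟪χ₁, π b χ₁⟫_ℂ - ⟪χ₂, π b χ₂⟫_ℂ‖ := by
  let G : Finset H := {ξ} ∪ (s.image (fun a => π a ξ) ∪ s.image (fun a => π (star a) ξ))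
  obtain ⟨ζ, hζ, hζG, hζs⟩ := exists_unit_orthogonal_near hdim hproj hinj s hξ G hε
  obtain ⟨b, hb, hbξ⟩ := exists_bounded_approx hπ hξ hζ (ε := 1 / 2) (by norm_num)
  have h0 : ⟪ξ, ζ⟫_ℂ = 0 := hζG ξ (by simp [G])
  have ha1 : ∀ a ∈ s, ⟪π a ξ, ζ⟫_ℂ = 0 := fun a ha => hζG _ (by
    have : π (a : A) ξ ∈ s.image (fun a => π a ξ) := Finset.mem_image_of_mem (fun a => π a ξ) ha
    simp only [G, Finset.mem_union]; tauto)
  have ha2 : ∀ a ∈ s, ⟪π (star a) ξ, ζ⟫_ℂ = 0 := fun a ha => hζG _ (by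
    have : π (star a) ξ ∈ s.image (fun a => π (star a) ξ) :=
      Finset.mem_image_of_mem (fun a => π (star a) ξ) ha
    simp only [G, Finset.mem_union]; tauto)
  set u := ⟪ζ, π b ξ⟫_ℂ with hu
  set v := ⟪ξ, π b ζ⟫_ℂ with hv
  have hu2 : 1 / 2 ≤ ‖u‖ := by
    have e : (1 : ℂ) - u = -⟪ζ, π b ξ - ζ⟫_ℂ := by
      rw [inner_sub_right, inner_self_eq_norm_sq_to_K, hζ, hu]; simp
    have h1 : ‖(1 : ℂ) - u‖ ≤ 1 / 2 := by
      rw [e, norm_neg]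
      calc _ ≤ ‖ζ‖ * ‖π b ξ - ζ‖ := norm_inner_le_norm _ _
        _ ≤ 1 / 2 := by rw [hζ, one_mul]; exact hbξ.le
    have h2 : ‖(1 : ℂ)‖ ≤ ‖(1 : ℂ) - u‖ + ‖u‖ := by
      simpa using norm_add_le ((1 : ℂ) - u) u
    rw [norm_one] at h2
    linarith
  set r : ℂ := ((√(1 / 2) : ℝ) : ℂ) with hr
  have hrr : r * r = 1 / 2 := by
    rw [hr, ← Complex.ofReal_mul, Real.mul_self_sqrt (by norm_num)]; norm_num
  have hrconj : (starRingEnd ℂ) r = r := Complex.conj_ofReal _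
  have hrn : ‖r‖ ^ 2 = 1 / 2 := by
    rw [hr, Complex.norm_real, Real.norm_of_nonneg (Real.sqrt_nonneg _), Real.sq_sqrt (by norm_num)]
  let χ : ℂ → H := fun θ => r • ξ + (r * θ) • ζ
  have hχ1 : ∀ θ : ℂ, ‖θ‖ = 1 → ‖χ θ‖ = 1 := by
    intro θ hθ
    have := norm_combo_sq hξ hζ h0 r (r * θ)
    rw [norm_mul, hθ, mul_one, hrn] at this
    have h2 : ‖χ θ‖ ^ 2 = 1 := by rw [this]; norm_num
    exact (pow_eq_one_iff_of_nonneg (norm_nonneg _) two_ne_zero).1 h2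
  have hχ2 : ∀ θ : ℂ, ‖θ‖ = 1 → ∀ a ∈ s, ‖⟪χ θ, π a (χ θ)⟫_ℂ - ⟪ξ, π a ξ⟫_ℂ‖ < ε := by
    intro θ hθ a ha
    have := inner_rep_combo (ha1 a ha) (ha2 a ha) r (r * θ)
    rw [norm_mul, hθ, mul_one, hrn] at this
    have e : ⟪χ θ, π a (χ θ)⟫_ℂ - ⟪ξ, π a ξ⟫_ℂ =
        (1 / 2 : ℂ) * (⟪ζ, π a ζ⟫_ℂ - ⟪ξ, π a ξ⟫_ℂ) := by
      rw [this]; push_cast; ring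
    rw [e, norm_mul]
    have h3 := hζs a ha
    have h4 : ‖(1 / 2 : ℂ)‖ = 1 / 2 := by norm_num
    rw [h4]
    linarith [norm_nonneg (⟪ζ, π a ζ⟫_ℂ - ⟪ξ, π a ξ⟫_ℂ)]
  have hχ3 : ∀ θ : ℂ, ⟪χ θ, π b (χ θ)⟫_ℂ - ⟪χ (-θ), π b (χ (-θ))⟫_ℂ =
      θ * v + (starRingEnd ℂ) θ * u := by
    intro θ
    simp only [χ, map_add, map_smul, inner_add_left, inner_add_right, inner_smul_left,
      inner_smul_right, map_mul, map_neg, hrconj, ← hu, ← hv]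
    linear_combination (2 * θ * v + 2 * (starRingEnd ℂ) θ * u) * hrr
  have hor : 1 / 2 ≤ ‖v + u‖ ∨ 1 / 2 ≤ ‖v - u‖ := by
    by_contra! hcon
    have h2 : ‖u + u‖ ≤ ‖v + u‖ + ‖v - u‖ := by
      have : u + u = (v + u) - (v - u) := by ring
      rw [this]; exact norm_sub_le _ _
    rw [← two_mul, norm_mul, Complex.norm_ofNat] at h2
    linarith [hcon.1, hcon.2]
  rcases hor with h | h
  · refine ⟨χ 1, χ (-1), hχ1 _ (by simp), hχ1 _ (by simp), hχ2 _ (by simp), hχ2 _ (by simp), b,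
      hb, ?_⟩
    rw [hχ3]
    simpa using h
  · refine ⟨χ Complex.I, χ (-Complex.I), hχ1 _ (by simp), hχ1 _ (by simp), hχ2 _ (by simp),
      hχ2 _ (by simp), b, hb, ?_⟩
    have e : Complex.I * v + (starRingEnd ℂ) Complex.I * u = Complex.I * (v - u) := by
      rw [Complex.conj_I]; ring
    rw [hχ3, e, norm_mul, Complex.norm_I, one_mul]
    exact h

end Glimm

/-! ### Generic points of the closure of the vector states -/

section Baire

variable {A : Type*} [CStarAlgebra A]
variable {H : Type*} [NormedAddCommGroup H] [InnerProductSpace ℂ H] [CompleteSpace H]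

/-- The functional `a ↦ ⟪ξ, π a ξ⟫`, as a point of the dual with its weak-star topology. -/
noncomputable def vectorFunctional (π : A →⋆ₐ[ℂ] (H →L[ℂ] H)) (ξ : H) : WeakDual ℂ A :=
  StrongDual.toWeakDual <| LinearMap.mkContinuous
    { toFun := fun a => ⟪ξ, π a ξ⟫_ℂ
      map_add' := fun a b => by simp
      map_smul' := fun c a => by simp } (‖ξ‖ * ‖ξ‖) fun a => by
    calc _ ≤ ‖ξ‖ * ‖π a ξ‖ := norm_inner_le_norm _ _
      _ ≤ ‖ξ‖ * (‖a‖ * ‖ξ‖) := by gcongr; exact norm_rep_apply_le _ _ _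
      _ = _ := by ring

lemma vectorFunctional_apply (π : A →⋆ₐ[ℂ] (H →L[ℂ] H)) (ξ : H) (a : A) :
    vectorFunctional π ξ a = ⟪ξ, π a ξ⟫_ℂ := rfl

lemma vectorFunctional_star_mul_self (π : A →⋆ₐ[ℂ] (H →L[ℂ] H)) (ξ : H) (a : A) :
    vectorFunctional π ξ (star a * a) = ((‖π a ξ‖ ^ 2 : ℝ) : ℂ) := by
  rw [vectorFunctional_apply, rep_mul_apply, inner_rep_star, inner_self_eq_norm_sq_to_K]
  simp

lemma norm_vectorFunctional_sub_le (π : A →⋆ₐ[ℂ] (H →L[ℂ] H)) (ξ ζ : H) (a : A) :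
    ‖vectorFunctional π ξ a - vectorFunctional π ζ a‖ ≤ (‖ξ‖ + ‖ζ‖) * ‖ξ - ζ‖ * ‖a‖ := by
  have e : vectorFunctional π ξ a - vectorFunctional π ζ a =
      ⟪ξ, π a (ξ - ζ)⟫_ℂ + ⟪ξ - ζ, π a ζ⟫_ℂ := by
    rw [vectorFunctional_apply, vectorFunctional_apply, map_sub, inner_sub_right, inner_sub_left]
    ring
  rw [e]
  calc _ ≤ ‖⟪ξ, π a (ξ - ζ)⟫_ℂ‖ + ‖⟪ξ - ζ, π a ζ⟫_ℂ‖ := norm_add_le _ _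
    _ ≤ ‖ξ‖ * ‖π a (ξ - ζ)‖ + ‖ξ - ζ‖ * ‖π a ζ‖ :=
      add_le_add (norm_inner_le_norm _ _) (norm_inner_le_norm _ _)
    _ ≤ ‖ξ‖ * (‖a‖ * ‖ξ - ζ‖) + ‖ξ - ζ‖ * (‖a‖ * ‖ζ‖) := by
      gcongr <;> exact norm_rep_apply_le _ _ _
    _ = _ := by ring

/-- The weak-star closure of the set of vector states of `π`. -/
def vectorStateClosure (π : A →⋆ₐ[ℂ] (H →L[ℂ] H)) : Set (WeakDual ℂ A) :=
  closure (vectorFunctional π '' {ξ | ‖ξ‖ = 1})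

lemma isCompact_vectorStateClosure (π : A →⋆ₐ[ℂ] (H →L[ℂ] H)) :
    IsCompact (vectorStateClosure π) := by
  have h := WeakDual.isCompact_closedBall (𝕜 := ℂ) (E := A) 0 1
  refine h.of_isClosed_subset isClosed_closure (closure_minimal ?_ h.isClosed)
  rintro _ ⟨ξ, hξ, rfl⟩
  have hξ : ‖ξ‖ = 1 := hξ
  rw [Set.mem_preimage, mem_closedBall_zero_iff]
  refine ContinuousLinearMap.opNorm_le_bound _ zero_le_one fun a => ?_
  have := norm_vectorFunctional_sub_le π ξ 0 a
  simpa [vectorFunctional_apply, hξ] using this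

/-- Weak-star neighbourhoods are controlled by finitely many evaluations. -/
lemma exists_finset_nhd {V : Set (WeakDual ℂ A)} (hV : IsOpen V) {φ : WeakDual ℂ A} (hφ : φ ∈ V) :
    ∃ (s : Finset A) (ε : ℝ), 0 < ε ∧
      ∀ ψ : WeakDual ℂ A, (∀ a ∈ s, ‖ψ a - φ a‖ < ε) → ψ ∈ V := by
  obtain ⟨W, hW, rfl⟩ := isOpen_induced_iff.1 hV
  obtain ⟨I, u, hu, hIu⟩ := isOpen_pi_iff.1 hW _ hφ
  have h : ∀ᶠ ε in 𝓝[>] (0 : ℝ), 0 < ε ∧ ∀ a ∈ I, Metric.ball (φ a) ε ⊆ u a := by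
    refine Filter.Eventually.and self_mem_nhdsWithin ((Finset.eventually_all I).2 fun a ha => ?_)
    obtain ⟨δ, hδ, hsub⟩ := Metric.isOpen_iff.1 (hu a ha).1 _ (hu a ha).2
    filter_upwards [Ioo_mem_nhdsGT hδ] with ε hε
    exact (Metric.ball_subset_ball hε.2.le).trans hsub
  obtain ⟨ε, hε, h⟩ := h.exists
  refine ⟨I, ε, hε, fun ψ hψ => hIu fun a ha => h a ha ?_⟩
  rw [Metric.mem_ball, dist_eq_norm]
  exact hψ a ha

/-- A weak-star open condition satisfied by every vector state holds generically on the closure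
of the vector states. -/
lemma eventually_residual_of_isOpen {π : A →⋆ₐ[ℂ] (H →L[ℂ] H)} {U : Set (WeakDual ℂ A)}
    (hU : IsOpen U) (h : ∀ ξ, ‖ξ‖ = 1 → vectorFunctional π ξ ∈ U) :
    ∀ᶠ φ in residual (vectorStateClosure π), φ.1 ∈ U := by
  refine residual_of_dense_open (hU.preimage continuous_subtype_val) ?_
  rw [dense_iff_inter_open]
  rintro _ ⟨V, hV, rfl⟩ ⟨φ, hφ⟩
  obtain ⟨_, hψV, ξ, hξ, rfl⟩ := mem_closure_iff.1 φ.2 V hV hφ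
  exact ⟨⟨_, subset_closure ⟨ξ, hξ, rfl⟩⟩, hψV, h ξ hξ⟩

/-- A generic point of the closure of the vector states of `π` is not uniformly close to a given
functional. -/
lemma eventually_residual_far (hdim : ¬ FiniteDimensional ℂ A)
    (hproj : ∀ p : A, star p = p → p * p = p → p = 0 ∨ p = 1)
    {π : A →⋆ₐ[ℂ] (H →L[ℂ] H)} (hπ : IsIrreducibleRep π) (hinj : Function.Injective π)
    (ψ : WeakDual ℂ A) :
    ∀ᶠ φ in residual (vectorStateClosure π), ∃ a, (1 / 10) * ‖a‖ < ‖φ.1 a - ψ a‖ := by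
  have hopen : IsOpen {φ : WeakDual ℂ A | ∃ a, (1 / 10) * ‖a‖ < ‖φ a - ψ a‖} := by
    rw [Set.ofPred_exists]
    exact isOpen_iUnion fun a => isOpen_lt continuous_const
      ((WeakDual.eval_continuous a).sub continuous_const).norm
  refine residual_of_dense_open (hopen.preimage continuous_subtype_val) ?_
  rw [dense_iff_inter_open]
  rintro _ ⟨V, hV, rfl⟩ ⟨φ, hφ⟩
  obtain ⟨_, hψV, ξ, hξ, rfl⟩ := mem_closure_iff.1 φ.2 V hV hφ
  obtain ⟨s, ε, hε, hs⟩ := exists_finset_nhd hV hψV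
  obtain ⟨χ₁, χ₂, h₁, h₂, h₁s, h₂s, b, hb, hb12⟩ := exists_two_near hdim hproj hπ hinj s hξ hε
  by_contra hcon
  have hfar : ∀ χ : H, ‖χ‖ = 1 → (∀ a ∈ s, ‖⟪χ, π a χ⟫_ℂ - ⟪ξ, π a ξ⟫_ℂ‖ < ε) →
      ‖vectorFunctional π χ b - ψ b‖ ≤ (1 / 10) * ‖b‖ := by
    intro χ hχ hχs
    by_contra! hlt
    exact hcon ⟨⟨vectorFunctional π χ, subset_closure ⟨χ, hχ, rfl⟩⟩, hs _ hχs, b, hlt⟩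
  have e : ⟪χ₁, π b χ₁⟫_ℂ - ⟪χ₂, π b χ₂⟫_ℂ =
      (vectorFunctional π χ₁ b - ψ b) - (vectorFunctional π χ₂ b - ψ b) := by
    simp [vectorFunctional_apply]
  have h3 := norm_sub_le (vectorFunctional π χ₁ b - ψ b) (vectorFunctional π χ₂ b - ψ b)
  rw [← e] at h3
  linarith [hfar χ₁ h₁ h₁s, hfar χ₂ h₂ h₂s]

/-- For a vector state of an irreducible representation, `a ξ` can be moved back to `ξ` by an
element of norm at most `4`, provided `a ξ` is not too short. -/
lemma exists_return {π : A →⋆ₐ[ℂ] (H →L[ℂ] H)} (hπ : IsIrreducibleRep π) {ξ : H} (hξ : ‖ξ‖ = 1)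
    {a : A} (ha : 1 / 2 ≤ ‖π a ξ‖) {ε : ℝ} (hε : 0 < ε) :
    ∃ b : A, ‖b‖ ≤ 4 ∧ ‖π (1 - b * a) ξ‖ < ε := by
  have hpos : 0 < ‖π a ξ‖ := by linarith
  have h1 : ‖((‖π a ξ‖⁻¹ : ℝ) : ℂ) • π a ξ‖ = 1 := by
    rw [norm_smul, Complex.norm_real, norm_inv, norm_norm, inv_mul_cancel₀ hpos.ne']
  obtain ⟨b, hb, hbε⟩ := exists_bounded_approx hπ h1 hξ hε
  refine ⟨((‖π a ξ‖⁻¹ : ℝ) : ℂ) • b, ?_, ?_⟩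
  · rw [norm_smul, Complex.norm_real, norm_inv, norm_norm]
    have : ‖π a ξ‖⁻¹ ≤ 2 := by
      rw [inv_le_comm₀ hpos two_pos]; linarith
    nlinarith [norm_nonneg b, inv_nonneg.2 hpos.le]
  · rw [norm_sub_rev] at hbε
    have e : π (1 - ((‖π a ξ‖⁻¹ : ℝ) : ℂ) • b * a) ξ =
        ξ - π b (((‖π a ξ‖⁻¹ : ℝ) : ℂ) • π a ξ) := by
      rw [map_sub, map_one, smul_mul_assoc, map_smul, map_mul, map_smul (π b)]
      rfl
    rwa [e]

/-- The norm of `a` is already seen on the dense orbit of `ξ`; for fixed `b` the inequality is a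
weak-star open condition on the vector state of `ξ`. -/
lemma exists_norm_lt {π : A →⋆ₐ[ℂ] (H →L[ℂ] H)} (hπ : IsIrreducibleRep π)
    (hinj : Function.Injective π) {ξ : H} (hξ : ‖ξ‖ = 1) {a : A} {r : ℝ} (hr : 0 ≤ r)
    (hra : r < ‖a‖) : ∃ b : A, r * ‖π b ξ‖ < ‖π (a * b) ξ‖ := by
  obtain ⟨x, hx⟩ : ∃ x, r * ‖x‖ < ‖π a x‖ := by
    by_contra! hcon
    have h1 := ContinuousLinearMap.opNorm_le_bound (π a) hr hcon
    rw [NonUnitalStarAlgHom.norm_map π hinj a] at h1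
    linarith
  have hx0 : 0 < ‖x‖ := by
    rw [norm_pos_iff]
    rintro rfl
    simp at hx
  have hu : ‖((‖x‖⁻¹ : ℝ) : ℂ) • x‖ = 1 := by
    rw [norm_smul, Complex.norm_real, norm_inv, norm_norm, inv_mul_cancel₀ hx0.ne']
  have hux : r * ‖((‖x‖⁻¹ : ℝ) : ℂ) • x‖ < ‖π a (((‖x‖⁻¹ : ℝ) : ℂ) • x)‖ := by
    rw [map_smul, norm_smul, norm_smul, Complex.norm_real, norm_inv, norm_norm, mul_left_comm]
    gcongr
  have hopen : IsOpen {y : H | r * ‖y‖ < ‖π a y‖} :=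
    isOpen_lt (by fun_prop) (π a).continuous.norm
  obtain ⟨δ, hδ, hsub⟩ := Metric.isOpen_iff.1 hopen _ hux
  obtain ⟨b, -, hb⟩ := exists_bounded_approx hπ hξ hu hδ
  refine ⟨b, ?_⟩
  rw [rep_mul_apply]
  exact hsub (by rwa [Metric.mem_ball, dist_eq_norm])

/-- The Baire category argument: there is a state which is pure and has a faithful GNS
representation, both expressed by countably many open conditions, and which is not a vector state
of any representation in a given countable family. -/
lemma exists_generic_state [TopologicalSpace.SeparableSpace A] (hdim : ¬ FiniteDimensional ℂ A)
    (hproj : ∀ p : A, star p = p → p * p = p → p = 0 ∨ p = 1)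
    {π : A →⋆ₐ[ℂ] (H →L[ℂ] H)} (hπ : IsIrreducibleRep π) (hinj : Function.Injective π)
    {K : Type*} [NormedAddCommGroup K] [InnerProductSpace ℂ K] [CompleteSpace K]
    [TopologicalSpace.SeparableSpace K] {R : Set (A →⋆ₐ[ℂ] (K →L[ℂ] K))} (hR : R.Countable) :
    ∃ φ : A →L[ℂ] ℂ, φ 1 = 1 ∧ (∀ a, 0 ≤ (φ (star a * a)).re ∧ (φ (star a * a)).im = 0) ∧
      (∀ k n : ℕ, (φ (star (TopologicalSpace.denseSeq A k) * TopologicalSpace.denseSeq A k)).re <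
          1 / 4 ∨ ∃ b : A, ‖b‖ ≤ 4 ∧ (φ (star (1 - b * TopologicalSpace.denseSeq A k) *
            (1 - b * TopologicalSpace.denseSeq A k))).re < 1 / ((n : ℝ) + 1)) ∧
      (∀ (k : ℕ) (r : ℚ), 0 ≤ r → (r : ℝ) < ‖TopologicalSpace.denseSeq A k‖ → ∃ b : A,
        (r : ℝ) ^ 2 * (φ (star b * b)).re < (φ (star (TopologicalSpace.denseSeq A k * b) *
          (TopologicalSpace.denseSeq A k * b))).re) ∧
      ∀ ρ ∈ R, ∀ ζ : K, ‖ζ‖ = 1 → ∃ a, φ a ≠ ⟪ζ, ρ a ζ⟫_ℂ := by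
  have hcont : ∀ a : A, Continuous fun φ : WeakDual ℂ A => (φ a).re := fun a =>
    Complex.continuous_re.comp (WeakDual.eval_continuous a)
  have hcompact : CompactSpace (vectorStateClosure π) :=
    isCompact_iff_compactSpace.1 (isCompact_vectorStateClosure π)
  obtain ⟨ξ₀, hξ₀⟩ : ∃ ξ : H, ‖ξ‖ = 1 := by
    have : Nontrivial A := by
      by_contra hA
      rw [not_nontrivial_iff_subsingleton] at hA
      exact hdim inferInstance
    obtain ⟨x, hx⟩ : ∃ x : H, x ≠ 0 := by
      by_contra! hH
      apply one_ne_zero (α := A)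
      apply hinj
      ext x
      rw [hH (π 1 x), hH (π 0 x)]
    exact ⟨((‖x‖⁻¹ : ℝ) : ℂ) • x, by
      rw [norm_smul, Complex.norm_real, norm_inv, norm_norm,
        inv_mul_cancel₀ (norm_ne_zero_iff.2 hx)]⟩
  have hne : Nonempty (vectorStateClosure π) := ⟨⟨_, subset_closure ⟨ξ₀, hξ₀, rfl⟩⟩⟩
  have h1 : ∀ᶠ φ in residual (vectorStateClosure π), ∀ k n : ℕ,
      (φ.1 (star (TopologicalSpace.denseSeq A k) * TopologicalSpace.denseSeq A k)).re <
          1 / 4 ∨ ∃ b : A, ‖b‖ ≤ 4 ∧ (φ.1 (star (1 - b * TopologicalSpace.denseSeq A k) *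
            (1 - b * TopologicalSpace.denseSeq A k))).re < 1 / ((n : ℝ) + 1) := by
    refine eventually_countable_forall.2 fun k => eventually_countable_forall.2 fun n => ?_
    generalize TopologicalSpace.denseSeq A k = a
    refine eventually_residual_of_isOpen (π := π) (U := {φ | (φ (star a * a)).re < 1 / 4 ∨
      ∃ b : A, ‖b‖ ≤ 4 ∧ (φ (star (1 - b * a) * (1 - b * a))).re < 1 / ((n : ℝ) + 1)}) ?_ ?_
    · rw [Set.ofPred_or]
      refine (isOpen_lt (hcont _) continuous_const).union ?_
      simp only [Set.ofPred_exists, Set.ofPred_and]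
      exact isOpen_iUnion fun b => isOpen_const.inter (isOpen_lt (hcont _) continuous_const)
    · intro ξ hξ
      simp only [Set.mem_ofPred_eq, vectorFunctional_star_mul_self, Complex.ofReal_re]
      by_cases h : 1 / 2 ≤ ‖π a ξ‖
      · right
        have hn : (0 : ℝ) < 1 / ((n : ℝ) + 1) := by positivity
        obtain ⟨b, hb, hb2⟩ := exists_return hπ hξ h (Real.sqrt_pos.2 hn)
        refine ⟨b, hb, ?_⟩
        exact (Real.lt_sqrt (norm_nonneg _)).1 hb2
      · left
        nlinarith [norm_nonneg (π a ξ)]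
  have h2 : ∀ᶠ φ in residual (vectorStateClosure π), ∀ (k : ℕ) (r : ℚ), 0 ≤ r →
      (r : ℝ) < ‖TopologicalSpace.denseSeq A k‖ → ∃ b : A,
        (r : ℝ) ^ 2 * (φ.1 (star b * b)).re < (φ.1 (star (TopologicalSpace.denseSeq A k * b) *
          (TopologicalSpace.denseSeq A k * b))).re := by
    refine eventually_countable_forall.2 fun k => eventually_countable_forall.2 fun r => ?_
    generalize TopologicalSpace.denseSeq A k = a
    by_cases hr : 0 ≤ r ∧ (r : ℝ) < ‖a‖
    swap
    · exact Filter.Eventually.of_forall fun φ h3 h4 => absurd ⟨h3, h4⟩ hr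
    have key := eventually_residual_of_isOpen (π := π) (U := {φ | ∃ b : A,
        (r : ℝ) ^ 2 * (φ (star b * b)).re < (φ (star (a * b) * (a * b))).re}) ?_ ?_
    · filter_upwards [key] with φ hφ _ _ using hφ
    · rw [Set.ofPred_exists]
      exact isOpen_iUnion fun b => isOpen_lt (continuous_const.mul (hcont _)) (hcont _)
    · intro ξ hξ
      simp only [Set.mem_ofPred_eq, vectorFunctional_star_mul_self, Complex.ofReal_re]
      have hr0 : (0 : ℝ) ≤ r := by exact_mod_cast hr.1
      obtain ⟨b, hb⟩ := exists_norm_lt hπ hinj hξ hr0 hr.2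
      refine ⟨b, ?_⟩
      rw [← mul_pow]
      gcongr
  have h3 : ∀ᶠ φ in residual (vectorStateClosure π), ∀ ρ ∈ R, ∀ n : ℕ, ∃ a, (1 / 10) * ‖a‖ <
      ‖φ.1 a - vectorFunctional ρ (TopologicalSpace.denseSeq K n) a‖ :=
    (eventually_countable_ball hR).2 fun ρ _ => eventually_countable_forall.2 fun n =>
      eventually_residual_far hdim hproj hπ hinj _
  obtain ⟨φ, hφ1, hφ2, hφ3⟩ :=
    (dense_of_mem_residual (h1.and (h2.and h3))).nonempty
  have hone : φ.1 ∈ {φ : WeakDual ℂ A | φ 1 = 1} := by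
    refine closure_minimal ?_ ?_ φ.2
    · rintro _ ⟨ξ, hξ, rfl⟩
      have hξ : ‖ξ‖ = 1 := hξ
      simp [vectorFunctional_apply, inner_self_eq_norm_sq_to_K, hξ]
    · exact isClosed_eq (WeakDual.eval_continuous 1) continuous_const
  have hpos : ∀ a, φ.1 ∈ {φ : WeakDual ℂ A |
      0 ≤ (φ (star a * a)).re ∧ (φ (star a * a)).im = 0} := by
    intro a
    refine closure_minimal ?_ ?_ φ.2
    · rintro _ ⟨ξ, hξ, rfl⟩
      simp only [Set.mem_ofPred_eq, vectorFunctional_star_mul_self, Complex.ofReal_re,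
        Complex.ofReal_im, and_true]
      positivity
    · rw [Set.ofPred_and]
      exact (isClosed_le continuous_const (hcont _)).inter
        (isClosed_eq (Complex.continuous_im.comp (WeakDual.eval_continuous _)) continuous_const)
  refine ⟨WeakDual.toStrongDual φ.1, hone, hpos, hφ1, hφ2, ?_⟩
  intro ρ hρ ζ hζ
  by_contra! hcon
  obtain ⟨n, hn⟩ := (TopologicalSpace.denseRange_denseSeq K).exists_dist_lt ζ
    (show (0 : ℝ) < 1 / 30 by norm_num)
  obtain ⟨a, ha⟩ := hφ3 ρ hρ n
  set κ := TopologicalSpace.denseSeq K n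
  have e : φ.1 a = vectorFunctional ρ ζ a := hcon a
  rw [e] at ha
  have h4 := norm_vectorFunctional_sub_le ρ ζ κ a
  rw [dist_eq_norm] at hn
  have h5 : ‖κ‖ ≤ 2 := by
    have : ‖κ‖ ≤ ‖ζ‖ + ‖ζ - κ‖ := by
      have := norm_sub_le ζ (ζ - κ)
      rwa [sub_sub_cancel] at this
    linarith
  have h6 : (‖ζ‖ + ‖κ‖) * ‖ζ - κ‖ ≤ 1 / 10 := by
    rw [hζ]
    nlinarith [norm_nonneg κ, norm_nonneg (ζ - κ)]
  have h7 := mul_le_mul_of_nonneg_right h6 (norm_nonneg a)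
  linarith

end Baire

/-! ### The GNS representation of a generic state -/

section GNS

open scoped ComplexOrder in
/-- The GNS construction, with its cyclic vector. -/
lemma exists_gns.{u} {A : Type u} [CStarAlgebra A] (φ : A →L[ℂ] ℂ) (h1 : φ 1 = 1)
    (hpos : ∀ a, 0 ≤ (φ (star a * a)).re ∧ (φ (star a * a)).im = 0) :
    ∃ (K : Type u) (_ : NormedAddCommGroup K) (_ : InnerProductSpace ℂ K) (_ : CompleteSpace K)
      (σ : A →⋆ₐ[ℂ] (K →L[ℂ] K)) (Ω : K), ‖Ω‖ = 1 ∧ (∀ a, φ a = ⟪Ω, σ a Ω⟫_ℂ) ∧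
        DenseRange fun a => σ a Ω := by
  let _ : PartialOrder A := CStarAlgebra.spectralOrder A
  let _ : StarOrderedRing A := CStarAlgebra.spectralOrderedRing A
  let f : A →ₚ[ℂ] ℂ := PositiveLinearMap.mk₀ (φ : A →ₗ[ℂ] ℂ) fun x hx => by
    obtain ⟨b, rfl⟩ := CStarAlgebra.nonneg_iff_eq_star_mul_self.1 hx
    exact Complex.nonneg_iff.2 ⟨(hpos b).1, (hpos b).2.symm⟩
  have hf : ∀ a, f a = φ a := fun a => rfl
  let Ω : f.GNS := ((f.toPreGNS 1 : f.PreGNS) : f.GNS)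
  have hσ : ∀ a, f.gnsStarAlgHom a Ω = ((f.toPreGNS a : f.PreGNS) : f.GNS) := by
    intro a
    change f.gnsNonUnitalStarAlgHom a _ = _
    rw [PositiveLinearMap.gnsNonUnitalStarAlgHom_apply_coe,
      PositiveLinearMap.leftMulMapPreGNS_apply]
    simp
  have hin : ∀ a, φ a = ⟪Ω, f.gnsStarAlgHom a Ω⟫_ℂ := by
    intro a
    rw [hσ, UniformSpace.Completion.inner_coe, PositiveLinearMap.preGNS_inner_def]
    simp [hf]
  refine ⟨f.GNS, inferInstance, inferInstance, inferInstance, f.gnsStarAlgHom, Ω, ?_, hin, ?_⟩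
  · have := hin 1
    rw [h1, map_one, one_apply_eq_self, inner_self_eq_norm_sq_to_K] at this
    have h2 : ‖Ω‖ ^ 2 = 1 := by
      rw [RCLike.ofReal_eq_complex_ofReal, ← Complex.ofReal_pow] at this
      exact_mod_cast this.symm
    exact (pow_eq_one_iff_of_nonneg (norm_nonneg _) two_ne_zero).1 h2
  · have e : (fun a => f.gnsStarAlgHom a Ω) =
        (fun x : f.PreGNS => (x : f.GNS)) ∘ f.toPreGNS := funext hσ
    rw [e]
    exact UniformSpace.Completion.denseRange_coe.comp f.toPreGNS.surjective.denseRange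
      (UniformSpace.Completion.continuous_coe _)

variable {A : Type*} [CStarAlgebra A]
variable {K : Type*} [NormedAddCommGroup K] [InnerProductSpace ℂ K] [CompleteSpace K]

lemma continuous_rep (σ : A →⋆ₐ[ℂ] (K →L[ℂ] K)) : Continuous σ :=
  AddMonoidHomClass.continuous_of_bound σ 1 fun a => by
    rw [one_mul]; exact NonUnitalStarAlgHom.norm_apply_le σ a

/-- A cyclic vector to which every vector can be returned by uniformly bounded elements forces
irreducibility. -/
lemma isIrreducibleRep_of_return [TopologicalSpace.SeparableSpace A]
    {σ : A →⋆ₐ[ℂ] (K →L[ℂ] K)} {Ω : K} (hcyc : DenseRange fun a => σ a Ω)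
    (h : ∀ k n : ℕ, ‖σ (TopologicalSpace.denseSeq A k) Ω‖ ^ 2 < 1 / 4 ∨ ∃ b : A, ‖b‖ ≤ 4 ∧
      ‖σ (1 - b * TopologicalSpace.denseSeq A k) Ω‖ ^ 2 < 1 / ((n : ℝ) + 1)) :
    IsIrreducibleRep σ := by
  intro M hM hinv
  by_cases hbot : M = ⊥
  · exact Or.inl hbot
  right
  obtain ⟨x, hxM, hx0⟩ := Submodule.exists_mem_ne_zero_of_ne_bot hbot
  set η := ((‖x‖⁻¹ : ℝ) : ℂ) • x with hη
  have hηM : η ∈ M := M.smul_mem _ hxM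
  have hη1 : ‖η‖ = 1 := by
    rw [hη, norm_smul, Complex.norm_real, norm_inv, norm_norm,
      inv_mul_cancel₀ (norm_ne_zero_iff.2 hx0)]
  have hcont : Continuous fun a => σ a Ω :=
    ((ContinuousLinearMap.apply ℂ K Ω).continuous).comp (continuous_rep σ)
  have hdense : DenseRange fun k => σ (TopologicalSpace.denseSeq A k) Ω :=
    hcyc.comp (TopologicalSpace.denseRange_denseSeq A) hcont
  have hΩ : Ω ∈ M := by
    have : Ω ∈ closure (M : Set K) := by
      rw [Metric.mem_closure_iff]
      intro ε hε
      obtain ⟨n, hn⟩ := exists_nat_one_div_lt (show 0 < (ε / 2) ^ 2 by positivity)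
      obtain ⟨k, hk⟩ := hdense.exists_dist_lt η (show 0 < min (1 / 4) (ε / 8) by positivity)
      rw [dist_comm, dist_eq_norm, lt_min_iff] at hk
      set d := TopologicalSpace.denseSeq A k
      have hd : 1 / 2 ≤ ‖σ d Ω‖ := by
        have h1 : ‖η‖ ≤ ‖σ d Ω‖ + ‖σ d Ω - η‖ := by
          have := norm_sub_le (σ d Ω) (σ d Ω - η)
          rwa [sub_sub_cancel] at this
        linarith [hk.1]
      rcases h k n with h1 | ⟨b, hb, hb2⟩
      · nlinarith
      · refine ⟨σ b η, hinv b η hηM, ?_⟩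
        have h3 : ‖σ (1 - b * d) Ω‖ < ε / 2 :=
          lt_of_pow_lt_pow_left₀ 2 (by positivity) (hb2.trans hn)
        have e : Ω - σ b η = σ (1 - b * d) Ω + σ b (σ d Ω - η) := by
          rw [map_sub, map_one, map_sub, map_mul]
          simp
        rw [dist_eq_norm, e]
        calc _ ≤ ‖σ (1 - b * d) Ω‖ + ‖σ b (σ d Ω - η)‖ := norm_add_le _ _
          _ ≤ ‖σ (1 - b * d) Ω‖ + 4 * ‖σ d Ω - η‖ := by
            gcongr
            exact (norm_rep_apply_le _ _ _).trans (by gcongr)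
          _ < ε := by linarith [hk.2]
    rwa [hM.closure_eq] at this
  rw [eq_top_iff]
  intro y _
  have : y ∈ closure (Set.range fun a => σ a Ω) := hcyc y
  refine closure_minimal ?_ hM this
  rintro _ ⟨a, rfl⟩
  exact hinv a Ω hΩ

/-- The estimates make `σ` norm non-decreasing on a dense sequence, hence isometric. -/
lemma injective_of_norm_lt [TopologicalSpace.SeparableSpace A]
    {σ : A →⋆ₐ[ℂ] (K →L[ℂ] K)} {Ω : K}
    (h : ∀ (k : ℕ) (r : ℚ), 0 ≤ r → (r : ℝ) < ‖TopologicalSpace.denseSeq A k‖ → ∃ b : A,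
      (r : ℝ) ^ 2 * ‖σ b Ω‖ ^ 2 < ‖σ (TopologicalSpace.denseSeq A k * b) Ω‖ ^ 2) :
    Function.Injective σ := by
  have key : ∀ a : A, ‖a‖ ≤ ‖σ a‖ := by
    intro a
    have hcl : IsClosed {a : A | ‖a‖ ≤ ‖σ a‖} :=
      isClosed_le continuous_norm (continuous_rep σ).norm
    refine closure_minimal ?_ hcl (TopologicalSpace.denseRange_denseSeq A a)
    rintro _ ⟨k, rfl⟩
    by_contra hcon
    rw [Set.mem_ofPred_eq, not_le] at hcon
    obtain ⟨r, hr1, hr2⟩ := exists_rat_btwn hcon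
    have hr0 : (0 : ℝ) ≤ r := (norm_nonneg _).trans hr1.le
    obtain ⟨b, hb⟩ := h k r (by exact_mod_cast hr0) hr2
    rw [rep_mul_apply, ← mul_pow] at hb
    have h1 := lt_of_pow_lt_pow_left₀ 2 (norm_nonneg _) hb
    have h2 := (σ (TopologicalSpace.denseSeq A k)).le_opNorm (σ b Ω)
    have h3 := mul_le_mul_of_nonneg_right hr1.le (norm_nonneg (σ b Ω))
    linarith
  intro a b hab
  have := key (a - b)
  rw [map_sub, hab, sub_self, norm_zero] at this
  exact sub_eq_zero.1 (norm_le_zero_iff.1 this)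

/-- Separable Hilbert spaces of infinite dimension are isometrically isomorphic to `ℓ²`. -/
lemma exists_isometry_l2NC {K : Type*} [NormedAddCommGroup K] [InnerProductSpace ℂ K]
    [CompleteSpace K] [TopologicalSpace.SeparableSpace K] (hK : ¬ FiniteDimensional ℂ K) :
    Nonempty (K ≃ₗᵢ[ℂ] l2NC) := by
  obtain ⟨w, b, hb⟩ := exists_hilbertBasis ℂ K
  have hcount : Countable w := by
    refine Pairwise.countable_of_isOpen_disjoint (s := fun i : w => Metric.ball (b i) (1 / 2))
      ?_ (fun _ => Metric.isOpen_ball) fun i => ⟨b i, Metric.mem_ball_self (by norm_num)⟩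
    intro i j hij
    refine Metric.ball_disjoint_ball ?_
    have h1 : ‖b i - b j‖ ^ 2 = 2 := by
      rw [@norm_sub_sq ℂ, b.orthonormal.norm_eq_one, b.orthonormal.norm_eq_one,
        b.orthonormal.inner_eq_zero hij]
      norm_num
    rw [dist_eq_norm]
    nlinarith [norm_nonneg (b i - b j)]
  have hinf : Infinite w := by
    by_contra hfin
    rw [not_infinite_iff_finite] at hfin
    apply hK
    have h1 := b.dense_span
    have h2 : FiniteDimensional ℂ (Submodule.span ℂ (Set.range b)) :=
      FiniteDimensional.span_of_finite ℂ (Set.finite_range b)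
    rw [(Submodule.closed_of_finiteDimensional _).submodule_topologicalClosure_eq] at h1
    rw [h1] at h2
    exact Module.finite_def.2 (Module.Finite.iff_fg.1 h2)
  obtain ⟨e⟩ : Nonempty (ℕ ≃ w) := by
    obtain ⟨_⟩ := nonempty_denumerable w
    exact ⟨(Denumerable.eqv w).symm⟩
  have hon : Orthonormal ℂ (b ∘ e) := b.orthonormal.comp e e.injective
  refine ⟨(HilbertBasis.mk hon ?_).repr⟩
  rw [EquivLike.range_comp, b.dense_span]

lemma not_finiteDimensional_of_injective (hdim : ¬ FiniteDimensional ℂ A)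
    {σ : A →⋆ₐ[ℂ] (K →L[ℂ] K)} (hinj : Function.Injective σ) : ¬ FiniteDimensional ℂ K := by
  intro hK
  apply hdim
  let T : A →ₗ[ℂ] (K →ₗ[ℂ] K) :=
    { toFun := fun a => (σ a : K →ₗ[ℂ] K)
      map_add' := fun a b => by rw [map_add]; rfl
      map_smul' := fun c a => by rw [map_smul]; rfl }
  refine FiniteDimensional.of_injective T fun a b hab => hinj ?_
  exact ContinuousLinearMap.coe_injective hab

lemma separableSpace_l2NC : TopologicalSpace.SeparableSpace l2NC := by
  let b : HilbertBasis ℕ ℂ l2NC := HilbertBasis.ofRepr (LinearIsometryEquiv.refl ℂ l2NC)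
  rw [← TopologicalSpace.isSeparable_univ_iff]
  have h := ((Set.countable_range b).isSeparable.span (R := ℂ)).closure
  have h2 := congrArg (fun S : Submodule ℂ l2NC => (S : Set l2NC)) b.dense_span
  rw [Submodule.topologicalClosure_coe] at h2
  rwa [h2] at h

/-- A unitary conjugate of a representation. -/
noncomputable def conjRep {L : Type*} [NormedAddCommGroup L] [InnerProductSpace ℂ L]
    [CompleteSpace L] (U : K ≃ₗᵢ[ℂ] L) (σ : A →⋆ₐ[ℂ] (K →L[ℂ] K)) : A →⋆ₐ[ℂ] (L →L[ℂ] L) :=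
  (StarAlgHomClass.toStarAlgHom U.conjStarAlgEquiv).comp σ

lemma conjRep_apply {L : Type*} [NormedAddCommGroup L] [InnerProductSpace ℂ L]
    [CompleteSpace L] (U : K ≃ₗᵢ[ℂ] L) (σ : A →⋆ₐ[ℂ] (K →L[ℂ] K)) (a : A) (x : L) :
    conjRep U σ a x = U (σ a (U.symm x)) := rfl

lemma isIrreducibleRep_conjRep {L : Type*} [NormedAddCommGroup L] [InnerProductSpace ℂ L]
    [CompleteSpace L] (U : K ≃ₗᵢ[ℂ] L) {σ : A →⋆ₐ[ℂ] (K →L[ℂ] K)} (hσ : IsIrreducibleRep σ) :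
    IsIrreducibleRep (conjRep U σ) := by
  intro S hS hinv
  have hmem : ∀ x : L, x ∈ S ↔ U.symm x ∈ S.comap (U.toLinearEquiv : K →ₗ[ℂ] L) := by
    intro x
    simp
  rcases hσ (S.comap (U.toLinearEquiv : K →ₗ[ℂ] L)) (hS.preimage U.continuous) (by
    intro a x hx
    have := hinv a (U x) hx
    rw [conjRep_apply, U.symm_apply_apply] at this
    exact this) with h | h
  · left
    rw [Submodule.eq_bot_iff]
    intro x hx
    rw [hmem, h, Submodule.mem_bot] at hx
    simpa using hx
  · right
    rw [eq_top_iff]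
    intro x _
    rw [hmem, h]
    trivial

/-- The key step: a countable family of representations on `ℓ²` never exhausts the faithful
irreducible ones up to unitary equivalence. -/
lemma exists_new_rep {H : Type*} [NormedAddCommGroup H] [InnerProductSpace ℂ H] [CompleteSpace H]
    [TopologicalSpace.SeparableSpace A] (hdim : ¬ FiniteDimensional ℂ A)
    (hproj : ∀ p : A, star p = p → p * p = p → p = 0 ∨ p = 1)
    {π : A →⋆ₐ[ℂ] (H →L[ℂ] H)} (hπ : IsIrreducibleRep π) (hinj : Function.Injective π)
    {R : Set (A →⋆ₐ[ℂ] (l2NC →L[ℂ] l2NC))} (hR : R.Countable) :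
    ∃ σ : A →⋆ₐ[ℂ] (l2NC →L[ℂ] l2NC), Function.Injective σ ∧ IsIrreducibleRep σ ∧
      ∀ ρ ∈ R, ¬ ∃ U : l2NC ≃ₗᵢ[ℂ] l2NC, ∀ (a : A) (x : l2NC), U (ρ a x) = σ a (U x) := by
  have hsep := separableSpace_l2NC
  obtain ⟨φ, h1, hpos, hirr, hfaith, hfar⟩ := exists_generic_state hdim hproj hπ hinj hR
  obtain ⟨K, _, _, _, σ, Ω, hΩ, hφ, hcyc⟩ := exists_gns φ h1 hpos
  have hsq : ∀ a, (φ (star a * a)).re = ‖σ a Ω‖ ^ 2 := by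
    intro a
    rw [hφ, ← vectorFunctional_apply, vectorFunctional_star_mul_self, Complex.ofReal_re]
  simp only [hsq] at hirr hfaith
  have hσirr : IsIrreducibleRep σ := isIrreducibleRep_of_return hcyc hirr
  have hσinj : Function.Injective σ := injective_of_norm_lt hfaith
  have hKsep : TopologicalSpace.SeparableSpace K := hcyc.separableSpace
    (((ContinuousLinearMap.apply ℂ K Ω).continuous).comp (continuous_rep σ))
  obtain ⟨V⟩ := exists_isometry_l2NC (not_finiteDimensional_of_injective hdim hσinj)
  refine ⟨conjRep V σ, ?_, isIrreducibleRep_conjRep V hσirr, ?_⟩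
  · exact V.conjStarAlgEquiv.injective.comp hσinj
  · rintro ρ hρ ⟨U, hU⟩
    have hζ : ‖U.symm (V Ω)‖ = 1 := by simp [hΩ]
    obtain ⟨a, ha⟩ := hfar ρ hρ _ hζ
    apply ha
    rw [hφ, ← U.inner_map_map, hU, conjRep_apply]
    simp

end GNS

end UncountablyManyReps

/-! ### Choosing one representation in each class -/

/-- Let `A` be a unital separable infinite-dimensional C*-algebra whose only projections
are `0` and `1`, admitting at least one faithful irreducible representation. Then `A` has
an uncountable family of pairwise inequivalent, faithful irreducible representations
on `ℓ²(ℕ, ℂ)`. -/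
theorem uncountably_many_reps_of_no_projections
    {A : Type*} [NormedRing A] [StarRing A] [CStarRing A] [NormedAlgebra ℂ A]
    [StarModule ℂ A] [CompleteSpace A] [TopologicalSpace.SeparableSpace A]
    (hdim : ¬ FiniteDimensional ℂ A)
    (hproj : ∀ p : A, star p = p → p * p = p → p = 0 ∨ p = 1)
    (hex : ∃ (H : Type) (_ : NormedAddCommGroup H) (_ : InnerProductSpace ℂ H)
        (_ : CompleteSpace H) (π : A →⋆ₐ[ℂ] (H →L[ℂ] H)),
      Function.Injective π ∧
      (∀ S : Submodule ℂ H, IsClosed (S : Set H) →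
        (∀ a : A, ∀ x ∈ S, π a x ∈ S) → S = ⊥ ∨ S = ⊤)) :
    ∃ S : Set (A →⋆ₐ[ℂ] (l2NC →L[ℂ] l2NC)),
      ¬ S.Countable ∧
      (∀ π ∈ S, Function.Injective π ∧
        (∀ T : Submodule ℂ l2NC, IsClosed (T : Set l2NC) →
          (∀ a : A, ∀ x ∈ T, π a x ∈ T) → T = ⊥ ∨ T = ⊤)) ∧
      (∀ π ∈ S, ∀ ρ ∈ S, π ≠ ρ →
        ¬ ∃ U : l2NC ≃ₗᵢ[ℂ] l2NC, ∀ (a : A) (x : l2NC), U (π a x) = ρ a (U x)) := by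
  let _ : CStarAlgebra A := { ‹NormedRing A›, ‹StarRing A›, ‹CStarRing A›, ‹NormedAlgebra ℂ A›,
    ‹StarModule ℂ A›, ‹CompleteSpace A› with }
  obtain ⟨H, _, _, _, π, hinj, hirr⟩ := hex
  let F : Type _ := {σ : A →⋆ₐ[ℂ] (l2NC →L[ℂ] l2NC) //
    Function.Injective σ ∧ UncountablyManyReps.IsIrreducibleRep σ}
  let E : Setoid F :=
    { r := fun σ τ => ∃ U : l2NC ≃ₗᵢ[ℂ] l2NC, ∀ (a : A) (x : l2NC), U (σ.1 a x) = τ.1 a (U x)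
      iseqv :=
        { refl := fun σ => ⟨LinearIsometryEquiv.refl ℂ _, fun a x => rfl⟩
          symm := by
            rintro σ τ ⟨U, hU⟩
            refine ⟨U.symm, fun a x => ?_⟩
            rw [U.symm_apply_eq, hU, U.apply_symm_apply]
          trans := by
            rintro σ τ υ ⟨U, hU⟩ ⟨V, hV⟩
            refine ⟨U.trans V, fun a x => ?_⟩
            simp only [LinearIsometryEquiv.trans_apply, hU, hV] } }
  -- one representative in each unitary equivalence class
  refine ⟨Set.range fun q : Quotient E => (Quotient.out q).1, ?_, ?_, ?_⟩
  · intro hcount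
    obtain ⟨σ, h1, h2, h3⟩ := UncountablyManyReps.exists_new_rep hdim hproj hirr hinj hcount
    exact h3 _ ⟨Quotient.mk E ⟨σ, h1, h2⟩, rfl⟩ (Quotient.mk_out (s := E) ⟨σ, h1, h2⟩)
  · rintro _ ⟨q, rfl⟩
    exact (Quotient.out q).2
  · rintro _ ⟨q, rfl⟩ _ ⟨q', rfl⟩ hne hU
    apply hne
    have : q = q' := by
      rw [← Quotient.out_eq q, ← Quotient.out_eq q']
      exact Quotient.sound hU
    rw [this]
end
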